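/- arXiv:1110.4085 — 4 statements merged into one kernel-verified Lean document; each statement's English description precedes it below -/
import Mathlib

section
/- Let n ≥ 1 be an integer, Ω ⊂ ℝⁿ a bounded open set, and let φ̃ : ℝⁿ → ℝ be of class C² on a neighborhood of the closure of Ω and satisfy |∇φ̃(x)| ≥ δ for all x ∈ Ω, for some constant δ > 0. Then there exist s₀ > 0 and M > 0 such that for every s ≥ s₀ and every C¹ function z : ℝⁿ → ℝ whose support is a compact subset of Ω, one has s² ∫_Ω e^{2sφ̃(x)} |z(x)|² dx ≤ M ∫_Ω e^{2sφ̃(x)} |∇z(x)|² dx. -/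
open MeasureTheory Real Set

/-! For `v` of class `C²` and `z` of class `C¹` with compact support, Green's first identity applied
to `v` and `v z²` gives `∫ v Δv z² = -∫ ∇v · ∇(v z²) = ∫ (v² |∇z|² - |v ∇z + z ∇v|²)`, hence
`∫ v Δv z² ≤ ∫ v² |∇z|²`. For `v = e^{sφ}` one has `v Δv = e^{2sφ} (s² |∇φ|² + s Δφ)`. Since `Δφ` is
bounded below, the negative part of `s Δφ` is at most `s² δ² / 2 ≤ s² |∇φ|² / 2` for large `s`. -/

open Function
open scoped Gradient InnerProductSpace Laplacian

theorem contDiffAt_fderiv_apply {𝕜 E F : Type*} [NontriviallyNormedField 𝕜]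
    [NormedAddCommGroup E] [NormedSpace 𝕜 E] [NormedAddCommGroup F] [NormedSpace 𝕜 F] {f : E → F}
    {x : E} (hf : ContDiffAt 𝕜 2 f x) (w : E) :
    ContDiffAt 𝕜 1 (fun y ↦ fderiv 𝕜 f y w) x :=
  (hf.fderiv_right one_add_one_eq_two.le).clm_apply contDiffAt_const

theorem contDiff_of_forall_mem_tsupport {𝕜 E F : Type*} [NontriviallyNormedField 𝕜]
    [NormedAddCommGroup E] [NormedSpace 𝕜 E] [NormedAddCommGroup F] [NormedSpace 𝕜 F] {f : E → F}
    {n : WithTop ℕ∞} (hf : ∀ x ∈ tsupport f, ContDiffAt 𝕜 n f x) : ContDiff 𝕜 n f :=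
  contDiff_iff_contDiffAt.2 fun x ↦ by
    by_cases hx : x ∈ tsupport f
    · exact hf x hx
    · exact contDiffAt_const.congr_of_eventuallyEq (notMem_tsupport_iff_eventuallyEq.1 hx)

section Gradient

variable {E : Type*} [NormedAddCommGroup E] [InnerProductSpace ℝ E] [CompleteSpace E]
  {𝕜 F : Type*} [RCLike 𝕜] [NormedAddCommGroup F] [InnerProductSpace 𝕜 F] [CompleteSpace F]
  {f g v z : E → ℝ} {x : E}

theorem gradient_of_notMem_tsupport {f : F → 𝕜} {x : F} (hx : x ∉ tsupport f) : ∇ f x = 0 := by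
  rw [gradient, fderiv_of_notMem_tsupport 𝕜 hx, map_zero]

theorem continuousAt_gradient {f : F → 𝕜} {x : F} (hf : ContDiffAt 𝕜 1 f x) :
    ContinuousAt (∇ f) x :=
  (InnerProductSpace.toDual 𝕜 F).symm.continuous.continuousAt.comp
    (hf.continuousAt_fderiv one_ne_zero)

theorem gradient_fun_mul (hf : DifferentiableAt ℝ f x) (hg : DifferentiableAt ℝ g x) :
    ∇ (fun y ↦ f y * g y) x = f x • ∇ g x + g x • ∇ f x := by
  simp only [gradient, fderiv_fun_mul hf hg, map_add, map_smul]

theorem gradient_fun_const_mul (hf : DifferentiableAt ℝ f x) (c : ℝ) :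
    ∇ (fun y ↦ c * f y) x = c • ∇ f x := by
  simp [gradient_fun_mul (differentiableAt_const c) hf, gradient_fun_const]

theorem inner_gradient_gradient_eq_sum {ι : Type*} [Fintype ι] (b : OrthonormalBasis ι ℝ E)
    (f g : E → ℝ) (x : E) :
    ⟪∇ f x, ∇ g x⟫_ℝ = ∑ i, fderiv ℝ f x (b i) * fderiv ℝ g x (b i) := by
  rw [← b.sum_inner_mul_inner]
  simp only [inner_gradient_left, inner_gradient_right, conj_trivial]

theorem neg_inner_gradient_gradient_mul_sq_le (hv : DifferentiableAt ℝ v x)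
    (hz : DifferentiableAt ℝ z x) :
    -⟪∇ v x, ∇ (fun y ↦ v y * z y ^ 2) x⟫_ℝ ≤ v x ^ 2 * ‖∇ z x‖ ^ 2 := by
  have hgrad : ∇ (fun y ↦ v y * z y ^ 2) x = (2 * v x * z x) • ∇ z x + z x ^ 2 • ∇ v x := by
    simp only [pow_two, gradient_fun_mul hv (hz.fun_mul hz), gradient_fun_mul hz hz]
    module
  have hsq : 0 ≤ ‖v x • ∇ z x + z x • ∇ v x‖ ^ 2 := sq_nonneg _
  rw [norm_add_sq_real, norm_smul, norm_smul, inner_smul_left, inner_smul_right, mul_pow, mul_pow,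
    norm_eq_abs, norm_eq_abs, sq_abs, sq_abs, conj_trivial] at hsq
  rw [hgrad, inner_add_right, inner_smul_right, inner_smul_right, real_inner_self_eq_norm_sq,
    real_inner_comm]
  linarith

end Gradient

section Laplacian

variable {E : Type*} [NormedAddCommGroup E] [InnerProductSpace ℝ E] [FiniteDimensional ℝ E]
  {F : Type*} [NormedAddCommGroup F] [NormedSpace ℝ F] {f : E → ℝ} {x : E}

theorem laplacian_apply_eq_sum_fderiv_fderiv {ι : Type*} [Fintype ι] (b : OrthonormalBasis ι ℝ E)
    {f : E → F} (hf : ContDiffAt ℝ 2 f x) :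
    Δ f x = ∑ i, fderiv ℝ (fun y ↦ fderiv ℝ f y (b i)) x (b i) := by
  have hf' : DifferentiableAt ℝ (fderiv ℝ f) x :=
    (hf.fderiv_right (m := 1) one_add_one_eq_two.le).differentiableAt one_ne_zero
  simp [InnerProductSpace.laplacian_eq_iteratedFDeriv_orthonormalBasis f b,
    iteratedFDeriv_two_apply, fderiv_clm_apply hf' (differentiableAt_const _)]

theorem continuousAt_laplacian {f : E → F} (hf : ContDiffAt ℝ 2 f x) :
    ContinuousAt (Δ f) x := by
  have hf' : ContinuousAt (fderiv ℝ (fderiv ℝ f)) x :=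
    (hf.fderiv_right (m := 1) one_add_one_eq_two.le).continuousAt_fderiv one_ne_zero
  simp only [InnerProductSpace.laplacian_eq_iteratedFDeriv_stdOrthonormalBasis,
    iteratedFDeriv_two_apply]
  fun_prop

theorem laplacian_exp (hf : ContDiffAt ℝ 2 f x) :
    Δ (fun y ↦ exp (f y)) x = exp (f x) * (‖∇ f x‖ ^ 2 + Δ f x) := by
  let b := stdOrthonormalBasis ℝ E
  have hd : DifferentiableAt ℝ f x := hf.differentiableAt two_ne_zero
  have hsecond (w : E) : fderiv ℝ (fun y ↦ fderiv ℝ (fun t ↦ exp (f t)) y w) x w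
      = exp (f x) * (⟪∇ f x, w⟫_ℝ ^ 2 + fderiv ℝ (fun y ↦ fderiv ℝ f y w) x w) := by
    have hfirst : (fun y ↦ fderiv ℝ (fun t ↦ exp (f t)) y w)
        =ᶠ[nhds x] fun y ↦ exp (f y) * fderiv ℝ f y w := by
      filter_upwards [hf.eventually (by simp)] with y hy
      simp [fderiv_exp (hy.differentiableAt two_ne_zero)]
    have hf' : DifferentiableAt ℝ (fun y ↦ fderiv ℝ f y w) x :=
      (contDiffAt_fderiv_apply hf w).differentiableAt one_ne_zero
    rw [hfirst.fderiv_eq, fderiv_fun_mul hd.exp hf', fderiv_exp hd]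
    simp only [add_apply, smul_apply, smul_eq_mul, inner_gradient_left]
    ring
  rw [laplacian_apply_eq_sum_fderiv_fderiv b hf.exp, laplacian_apply_eq_sum_fderiv_fderiv b hf,
    ← b.sum_sq_inner_left, ← Finset.sum_add_distrib, Finset.mul_sum]
  exact Finset.sum_congr rfl fun i _ ↦ hsecond (b i)

theorem sq_mul_sq_div_two_le_sq_norm_gradient_add_laplacian {δ C s : ℝ} (hf : ContDiffAt ℝ 2 f x)
    (hδ : 0 < δ) (hgrad : δ ≤ ‖∇ f x‖) (hΔ : -C ≤ Δ f x) (hs₀ : 0 ≤ s) (hs : 2 * C / δ ^ 2 ≤ s) :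
    s ^ 2 * δ ^ 2 / 2 ≤ ‖∇ (fun y ↦ s * f y) x‖ ^ 2 + Δ (fun y ↦ s * f y) x := by
  have hgrad_sq : s ^ 2 * δ ^ 2 ≤ ‖∇ (fun y ↦ s * f y) x‖ ^ 2 := by
    rw [gradient_fun_const_mul (hf.differentiableAt two_ne_zero), norm_smul, mul_pow, norm_eq_abs,
      sq_abs]
    gcongr
  have hlap : -(s * C) ≤ Δ (fun y ↦ s * f y) x := by
    rw [← mul_neg]
    exact (mul_le_mul_of_nonneg_left hΔ hs₀).trans_eq
      (InnerProductSpace.laplacian_smul s hf).symm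
  have habsorb : s * C ≤ s ^ 2 * δ ^ 2 / 2 := by
    rw [div_le_iff₀ (by positivity)] at hs
    nlinarith
  linarith

end Laplacian

section Integral

variable {X : Type*} [TopologicalSpace X] [T2Space X] [MeasurableSpace X] [OpensMeasurableSpace X]
  {μ : Measure X} [IsFiniteMeasureOnCompacts μ]

theorem integrable_of_continuousOn_of_eq_zero {F : Type*} [NormedAddCommGroup F] {f : X → F}
    {K : Set X} (hK : IsCompact K) (hf : ContinuousOn f K) (hf₀ : ∀ x ∉ K, f x = 0) :
    Integrable f μ :=
  (integrableOn_iff_integrable_of_support_subset (support_subset_iff'.2 hf₀)).1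
    (hf.integrableOn_compact' hK hK.measurableSet)

theorem integrable_mul_of_hasCompactSupport_right {R : Type*} [NormedRing R] {f g : X → R}
    (hf : ∀ x ∈ tsupport g, ContinuousAt f x) (hg : Continuous g) (hgc : HasCompactSupport g) :
    Integrable (fun x ↦ f x * g x) μ :=
  integrable_of_continuousOn_of_eq_zero hgc.isCompact
    (fun x hx ↦ ((hf x hx).mul hg.continuousAt).continuousWithinAt)
    fun x hx ↦ by rw [image_eq_zero_of_notMem_tsupport hx, mul_zero]

theorem integrable_mul_sq_of_hasCompactSupport {R : Type*} [NormedRing R] {f g : X → R}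
    (hf : ∀ x ∈ tsupport g, ContinuousAt f x) (hg : Continuous g) (hgc : HasCompactSupport g) :
    Integrable (fun x ↦ f x * g x ^ 2) μ :=
  integrable_of_continuousOn_of_eq_zero hgc.isCompact
    (fun x hx ↦ ((hf x hx).mul (hg.continuousAt.pow 2)).continuousWithinAt)
    fun x hx ↦ by simp [image_eq_zero_of_notMem_tsupport hx]

end Integral

section IntegrationByParts

variable {E : Type*} [NormedAddCommGroup E] [NormedSpace ℝ E] [MeasurableSpace E] [BorelSpace E]
  {μ : Measure E} {f g : E → ℝ}

section

variable [IsFiniteMeasureOnCompacts μ]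

theorem integrable_fderiv_mul (hf : ∀ x ∈ tsupport g, ContDiffAt ℝ 1 f x) (hg : Continuous g)
    (hgc : HasCompactSupport g) (w : E) : Integrable (fun x ↦ fderiv ℝ f x w * g x) μ :=
  integrable_mul_of_hasCompactSupport_right
    (fun x hx ↦ ((hf x hx).continuousAt_fderiv one_ne_zero).clm_apply continuousAt_const) hg hgc

theorem integrable_mul_fderiv (hf : ∀ x ∈ tsupport g, ContinuousAt f x) (hg : ContDiff ℝ 1 g)
    (hgc : HasCompactSupport g) (w : E) : Integrable (fun x ↦ f x * fderiv ℝ g x w) μ :=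
  integrable_mul_of_hasCompactSupport_right
    (fun x hx ↦ hf x (tsupport_fderiv_apply_subset ℝ w hx))
    ((hg.continuous_fderiv one_ne_zero).clm_apply continuous_const) (hgc.fderiv_apply ℝ w)

end

theorem integral_fderiv_mul_eq_neg [FiniteDimensional ℝ E] [μ.IsAddHaarMeasure]
    (hf : ∀ x ∈ tsupport g, ContDiffAt ℝ 1 f x) (hg : ContDiff ℝ 1 g) (hgc : HasCompactSupport g)
    (w : E) : ∫ x, fderiv ℝ f x w * g x ∂μ = -∫ x, f x * fderiv ℝ g x w ∂μ := by
  rw [integral_mul_fderiv_eq_neg_fderiv_mul_of_integrable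
    (integrable_fderiv_mul hf hg.continuous hgc w)
    (integrable_mul_fderiv (fun x hx ↦ (hf x hx).continuousAt) hg hgc w)
    (integrable_mul_of_hasCompactSupport_right (fun x hx ↦ (hf x hx).continuousAt)
      hg.continuous hgc)
    (fun x hx ↦ (hf x hx).differentiableAt one_ne_zero)
    fun x _ ↦ hg.differentiable one_ne_zero x, neg_neg]

end IntegrationByParts

section GradientIntegrable

variable {E : Type*} [NormedAddCommGroup E] [InnerProductSpace ℝ E] [CompleteSpace E]
  [MeasurableSpace E] [BorelSpace E] {μ : Measure E} [IsFiniteMeasureOnCompacts μ] {f g : E → ℝ}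

theorem integrable_inner_gradient_gradient (hf : ∀ x ∈ tsupport g, ContDiffAt ℝ 1 f x)
    (hg : ContDiff ℝ 1 g) (hgc : HasCompactSupport g) :
    Integrable (fun x ↦ ⟪∇ f x, ∇ g x⟫_ℝ) μ :=
  integrable_of_continuousOn_of_eq_zero hgc.isCompact
    (fun x hx ↦ ((continuousAt_gradient (hf x hx)).inner
      (continuousAt_gradient hg.contDiffAt)).continuousWithinAt)
    fun x hx ↦ by rw [gradient_of_notMem_tsupport hx, inner_zero_right]

theorem integrable_mul_sq_norm_gradient (hf : ∀ x ∈ tsupport g, ContinuousAt f x)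
    (hg : ContDiff ℝ 1 g) (hgc : HasCompactSupport g) :
    Integrable (fun x ↦ f x * ‖∇ g x‖ ^ 2) μ :=
  integrable_of_continuousOn_of_eq_zero hgc.isCompact
    (fun x hx ↦ ((hf x hx).mul
      ((continuousAt_gradient hg.contDiffAt).norm.pow 2)).continuousWithinAt)
    fun x hx ↦ by simp [gradient_of_notMem_tsupport hx]

end GradientIntegrable

section Energy

variable {E : Type*} [NormedAddCommGroup E] [InnerProductSpace ℝ E] [FiniteDimensional ℝ E]
  [MeasurableSpace E] [BorelSpace E] {μ : Measure E} [μ.IsAddHaarMeasure] {f g v z φ ψ : E → ℝ}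

/-- **Green's first identity** without boundary term. -/
theorem integral_laplacian_mul (hf : ∀ x ∈ tsupport g, ContDiffAt ℝ 2 f x)
    (hg : ContDiff ℝ 1 g) (hgc : HasCompactSupport g) :
    ∫ x, Δ f x * g x ∂μ = -∫ x, ⟪∇ f x, ∇ g x⟫_ℝ ∂μ := by
  let b := stdOrthonormalBasis ℝ E
  have hf' (i) (x) (hx : x ∈ tsupport g) : ContDiffAt ℝ 1 (fun y ↦ fderiv ℝ f y (b i)) x :=
    contDiffAt_fderiv_apply (hf x hx) (b i)
  have hΔ (x : E) :
      Δ f x * g x = ∑ i, fderiv ℝ (fun y ↦ fderiv ℝ f y (b i)) x (b i) * g x := by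
    by_cases hx : x ∈ tsupport g
    · rw [laplacian_apply_eq_sum_fderiv_fderiv b (hf x hx), Finset.sum_mul]
    · simp [image_eq_zero_of_notMem_tsupport hx]
  simp only [hΔ, inner_gradient_gradient_eq_sum b]
  rw [integral_finsetSum _ fun i _ ↦ integrable_fderiv_mul (hf' i) hg.continuous hgc (b i),
    integral_finsetSum _ fun i _ ↦
      integrable_mul_fderiv (fun x hx ↦ (hf' i x hx).continuousAt) hg hgc (b i),
    ← Finset.sum_neg_distrib]
  exact Finset.sum_congr rfl fun i _ ↦ integral_fderiv_mul_eq_neg (hf' i) hg hgc (b i)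

theorem integral_mul_laplacian_mul_sq_le (hv : ∀ x ∈ tsupport z, ContDiffAt ℝ 2 v x)
    (hz : ContDiff ℝ 1 z) (hzc : HasCompactSupport z) :
    ∫ x, v x * Δ v x * z x ^ 2 ∂μ ≤ ∫ x, v x ^ 2 * ‖∇ z x‖ ^ 2 ∂μ := by
  have hsupp : tsupport (fun x ↦ v x * z x ^ 2) ⊆ tsupport z :=
    closure_mono fun x hx hzx ↦ hx (by simp [hzx])
  have hvz : ContDiff ℝ 1 fun x ↦ v x * z x ^ 2 :=
    contDiff_of_forall_mem_tsupport fun x hx ↦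
      ((hv x (hsupp hx)).of_le one_le_two).mul (hz.contDiffAt.pow 2)
  have hvzc : HasCompactSupport fun x ↦ v x * z x ^ 2 :=
    hzc.of_isClosed_subset (isClosed_tsupport _) hsupp
  calc ∫ x, v x * Δ v x * z x ^ 2 ∂μ
      = ∫ x, Δ v x * (v x * z x ^ 2) ∂μ := by simp only [mul_left_comm, mul_assoc]
    _ = ∫ x, -⟪∇ v x, ∇ (fun y ↦ v y * z y ^ 2) x⟫_ℝ ∂μ := by
      rw [integral_laplacian_mul (fun x hx ↦ hv x (hsupp hx)) hvz hvzc, integral_neg]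
    _ ≤ ∫ x, v x ^ 2 * ‖∇ z x‖ ^ 2 ∂μ := by
      refine integral_mono (integrable_inner_gradient_gradient
        (fun x hx ↦ (hv x (hsupp hx)).of_le one_le_two) hvz hvzc).neg
        (integrable_mul_sq_norm_gradient (fun x hx ↦ (hv x hx).continuousAt.pow 2) hz hzc)
        fun x ↦ ?_
      by_cases hx : x ∈ tsupport z
      · exact neg_inner_gradient_gradient_mul_sq_le ((hv x hx).differentiableAt two_ne_zero)
          (hz.differentiable one_ne_zero x)
      · simp [gradient_of_notMem_tsupport hx,
          gradient_of_notMem_tsupport fun h ↦ hx (hsupp h), -inner_gradient_left]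

theorem integral_exp_mul_sq_le (hψ : ∀ x ∈ tsupport z, ContDiffAt ℝ 2 ψ x)
    (hz : ContDiff ℝ 1 z) (hzc : HasCompactSupport z) :
    ∫ x, exp (2 * ψ x) * (‖∇ ψ x‖ ^ 2 + Δ ψ x) * z x ^ 2 ∂μ
      ≤ ∫ x, exp (2 * ψ x) * ‖∇ z x‖ ^ 2 ∂μ := by
  have hexp (x : E) : exp (2 * ψ x) = exp (ψ x) ^ 2 := by rw [← exp_nat_mul, Nat.cast_ofNat]
  have hΔ (x : E) : exp (2 * ψ x) * (‖∇ ψ x‖ ^ 2 + Δ ψ x) * z x ^ 2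
      = exp (ψ x) * Δ (fun y ↦ exp (ψ y)) x * z x ^ 2 := by
    by_cases hx : x ∈ tsupport z
    · rw [laplacian_exp (hψ x hx), hexp]; ring
    · simp [image_eq_zero_of_notMem_tsupport hx]
  simp_rw [hΔ, hexp]
  exact integral_mul_laplacian_mul_sq_le (fun x hx ↦ (hψ x hx).exp) hz hzc

theorem mul_integral_exp_mul_sq_le {m : ℝ} (hψ : ∀ x ∈ tsupport z, ContDiffAt ℝ 2 ψ x)
    (hm : ∀ x ∈ tsupport z, m ≤ ‖∇ ψ x‖ ^ 2 + Δ ψ x) (hz : ContDiff ℝ 1 z)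
    (hzc : HasCompactSupport z) :
    m * ∫ x, exp (2 * ψ x) * z x ^ 2 ∂μ ≤ ∫ x, exp (2 * ψ x) * ‖∇ z x‖ ^ 2 ∂μ := by
  have hexp (x) (hx : x ∈ tsupport z) : ContinuousAt (fun y ↦ exp (2 * ψ y)) x :=
    (continuousAt_const.mul (hψ x hx).continuousAt).rexp
  have hcoef (x) (hx : x ∈ tsupport z) :
      ContinuousAt (fun y ↦ exp (2 * ψ y) * (‖∇ ψ y‖ ^ 2 + Δ ψ y)) x :=
    (hexp x hx).mul (((continuousAt_gradient ((hψ x hx).of_le one_le_two)).norm.pow 2).add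
      (continuousAt_laplacian (hψ x hx)))
  rw [← integral_const_mul]
  refine (integral_mono ?_ ?_ fun x ↦ ?_).trans (integral_exp_mul_sq_le hψ hz hzc)
  · exact (integrable_mul_sq_of_hasCompactSupport hexp hz.continuous hzc).const_mul m
  · exact integrable_mul_sq_of_hasCompactSupport hcoef hz.continuous hzc
  · by_cases hx : x ∈ tsupport z
    · calc m * (exp (2 * ψ x) * z x ^ 2) = exp (2 * ψ x) * m * z x ^ 2 := by ring
        _ ≤ exp (2 * ψ x) * (‖∇ ψ x‖ ^ 2 + Δ ψ x) * z x ^ 2 := by gcongr; exact hm x hx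
    · simp [image_eq_zero_of_notMem_tsupport hx]

theorem sq_mul_setIntegral_exp_mul_sq_le {Ω : Set E} (hΩ : IsOpen Ω) (hφ : ContDiffOn ℝ 2 φ Ω)
    {δ C s : ℝ} (hδ : 0 < δ) (hgrad : ∀ x ∈ Ω, δ ≤ ‖∇ φ x‖) (hΔ : ∀ x ∈ Ω, -C ≤ Δ φ x)
    (hs₀ : 0 ≤ s) (hs : 2 * C / δ ^ 2 ≤ s) (hz : ContDiff ℝ 1 z) (hzc : HasCompactSupport z)
    (hzΩ : tsupport z ⊆ Ω) :
    s ^ 2 * ∫ x in Ω, exp (2 * s * φ x) * z x ^ 2 ∂μ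
      ≤ 2 / δ ^ 2 * ∫ x in Ω, exp (2 * s * φ x) * ‖∇ z x‖ ^ 2 ∂μ := by
  have hφz (x) (hx : x ∈ tsupport z) : ContDiffAt ℝ 2 φ x :=
    hφ.contDiffAt (hΩ.mem_nhds (hzΩ hx))
  have hmain := mul_integral_exp_mul_sq_le (μ := μ) (ψ := fun x ↦ s * φ x)
    (fun x hx ↦ contDiffAt_const.mul (hφz x hx))
    (fun x hx ↦ sq_mul_sq_div_two_le_sq_norm_gradient_add_laplacian (hφz x hx) hδ
      (hgrad x (hzΩ hx)) (hΔ x (hzΩ hx)) hs₀ hs) hz hzc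
  rw [setIntegral_eq_integral_of_forall_compl_eq_zero fun x hx ↦ by
      simp [image_eq_zero_of_notMem_tsupport fun h ↦ hx (hzΩ h)],
    setIntegral_eq_integral_of_forall_compl_eq_zero fun x hx ↦ by
      simp [gradient_of_notMem_tsupport fun h ↦ hx (hzΩ h)],
    div_mul_eq_mul_div, le_div_iff₀ (by positivity)]
  simp only [← mul_assoc] at hmain
  linarith

theorem weighted_poincare_general (μ : Measure E) [μ.IsAddHaarMeasure] {Ω : Set E}
    (hΩ : IsOpen Ω) (hφ : ContDiffOn ℝ 2 φ Ω) (hΔ : BddBelow (Δ φ '' Ω)) {δ : ℝ} (hδ : 0 < δ)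
    (hgrad : ∀ x ∈ Ω, δ ≤ ‖∇ φ x‖) :
    ∃ s₀ > (0 : ℝ), ∃ M > (0 : ℝ), ∀ s ≥ s₀, ∀ z : E → ℝ, ContDiff ℝ 1 z →
      (∃ K : Set E, IsCompact K ∧ K ⊆ Ω ∧ ∀ x ∉ K, z x = 0) →
      s ^ 2 * ∫ x in Ω, exp (2 * s * φ x) * z x ^ 2 ∂μ
        ≤ M * ∫ x in Ω, exp (2 * s * φ x) * ‖∇ z x‖ ^ 2 ∂μ := by
  obtain ⟨c, hc⟩ := hΔ
  have hΔ (x) (hx : x ∈ Ω) : -|c| ≤ Δ φ x := (neg_abs_le c).trans (hc (mem_image_of_mem _ hx))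
  have hs₀ : 0 < 2 * |c| / δ ^ 2 + 1 := by positivity
  refine ⟨_, hs₀, 2 / δ ^ 2, by positivity, ?_⟩
  rintro s hs z hz ⟨K, hK, hKΩ, hzK⟩
  exact sq_mul_setIntegral_exp_mul_sq_le hΩ hφ hδ hgrad hΔ (hs₀.le.trans hs)
    ((lt_add_one _).le.trans hs) hz (.intro hK hzK)
    ((closure_minimal (support_subset_iff'.2 hzK) hK.isClosed).trans hKΩ)

end Energy

/-- **Weighted Poincaré inequality** (Lemma 2.4): if `φ` is `C²` on a neighborhood of `closure Ω`
and `|∇φ| ≥ δ > 0` on `Ω`, then there are `s₀ > 0` and `M > 0` such that for all `s ≥ s₀` and all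
`C¹` functions `z` compactly supported in `Ω`,
`s² ∫_Ω e^{2sφ} z² ≤ M ∫_Ω e^{2sφ} |∇z|²`. -/
theorem weighted_poincare
    (n : ℕ) (hn : 1 ≤ n)
    (Ω : Set (EuclideanSpace ℝ (Fin n))) (hΩo : IsOpen Ω) (hΩb : Bornology.IsBounded Ω)
    (φ : EuclideanSpace ℝ (Fin n) → ℝ)
    (U : Set (EuclideanSpace ℝ (Fin n))) (hUo : IsOpen U) (hUΩ : closure Ω ⊆ U)
    (hφ : ContDiffOn ℝ 2 φ U)
    (δ : ℝ) (hδ : 0 < δ) (hgrad : ∀ x ∈ Ω, δ ≤ ‖gradient φ x‖) :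
    ∃ s₀ > (0:ℝ), ∃ M > (0:ℝ), ∀ s ≥ s₀, ∀ z : EuclideanSpace ℝ (Fin n) → ℝ,
      ContDiff ℝ 1 z →
      (∃ K : Set (EuclideanSpace ℝ (Fin n)), IsCompact K ∧ K ⊆ Ω ∧ ∀ x ∉ K, z x = 0) →
      s ^ 2 * ∫ x in Ω, Real.exp (2 * s * φ x) * z x ^ 2 ≤
        M * ∫ x in Ω, Real.exp (2 * s * φ x) * ‖gradient z x‖ ^ 2 := by
  have hΔ : ContinuousOn (Δ φ) (closure Ω) := fun x hx ↦
    (continuousAt_laplacian (hφ.contDiffAt (hUo.mem_nhds (hUΩ hx)))).continuousWithinAt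
  exact weighted_poincare_general volume hΩo (hφ.mono (subset_closure.trans hUΩ))
    ((hΩb.isCompact_closure.bddBelow_image hΔ).mono (image_mono subset_closure)) hδ hgrad
end

section
/- Let n ≥ 1 be an integer, Ω ⊂ ℝⁿ a bounded open set, T > 0, x₀ ∈ ℝⁿ \ cl(Ω), β ∈ (0,1), C₀ > 0, ψ(x,t) = |x−x₀|² − βt² + C₀, and let α ∈ (2β/(β+n), 2/(β+n)). Then there exist λ₀ > 0 and c > 0 such that for all λ ≥ λ₀ and all (x,t) ∈ Ω × (−T,T), setting X = |∂ₜψ(x,t)|² − |∇ψ(x,t)|² = 4β²t² − 4|x−x₀|², one has 2λX² + (2∂ₜ²ψ + α(∂ₜ²ψ − Δψ))X + 16(1−β)|x−x₀|² ≥ c, where 2∂ₜ²ψ + α(∂ₜ²ψ − Δψ) = −4β − 2α(β+n). -/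
open MeasureTheory Real Set
open scoped RealInnerProductSpace

/-- The Laplacian of a real-valued function on Euclidean space. -/
noncomputable def lap {n : ℕ} (f : EuclideanSpace ℝ (Fin n) → ℝ) (x : EuclideanSpace ℝ (Fin n)) : ℝ :=
  ∑ i : Fin n, fderiv ℝ (fun y => fderiv ℝ f y (EuclideanSpace.single i 1)) x (EuclideanSpace.single i 1)

/-- The weight `ψ(x,t) = |x - x₀|² - β t² + C₀`. -/
noncomputable def psi {n : ℕ} (x₀ : EuclideanSpace ℝ (Fin n)) (β C₀ : ℝ)
    (x : EuclideanSpace ℝ (Fin n)) (t : ℝ) : ℝ :=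
  ‖x - x₀‖ ^ 2 - β * t ^ 2 + C₀

/-- The Carleman weight `φ = e^{λψ}`. -/
noncomputable def phi {n : ℕ} (x₀ : EuclideanSpace ℝ (Fin n)) (β C₀ l : ℝ)
    (x : EuclideanSpace ℝ (Fin n)) (t : ℝ) : ℝ :=
  Real.exp (l * psi x₀ β C₀ x t)

/-!
Since `x₀ ∉ closure Ω`, the term `16 (1 - β) |x - x₀|²` is bounded below on `Ω` by some `m > 0`.
What remains is a quadratic polynomial in `X` with constant term at least `m` and a linear
coefficient that does not depend on `λ`, so a large leading coefficient `2λ` makes the discriminant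
of the polynomial minus `m / 2` negative; then it exceeds `m / 2` at every real `X`.
-/

lemma quadratic_nonneg_of_discrim_nonpos {R : Type*} [CommRing R] [LinearOrder R]
    [IsStrictOrderedRing R] {a b c : R} (ha : 0 < a) (h : discrim a b c ≤ 0) (x : R) :
    0 ≤ a * x ^ 2 + b * x + c := by
  have complete_square :
      4 * a * (a * x ^ 2 + b * x + c) = (2 * a * x + b) ^ 2 - discrim a b c := by
    rw [discrim]; ring
  refine nonneg_of_mul_nonneg_right ?_ (by positivity : 0 < 4 * a)
  rw [complete_square]
  exact sub_nonneg.2 (h.trans (sq_nonneg _))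

lemma exists_forall_ge_le_quadratic {K : Type*} [Field K] [LinearOrder K]
    [IsStrictOrderedRing K] {c m : K} (hcm : c < m) (b : K) :
    ∃ a₀ > 0, ∀ a ≥ a₀, ∀ x, c ≤ a * x ^ 2 + b * x + m := by
  have hgap : 0 < 4 * (m - c) := mul_pos four_pos (sub_pos.2 hcm)
  refine ⟨(b ^ 2 + 1) / (4 * (m - c)), by positivity, fun a ha x ↦ ?_⟩
  have ha_pos : 0 < a := lt_of_lt_of_le (by positivity) ha
  have hdiscrim : discrim a b (m - c) ≤ 0 := by
    have := (div_le_iff₀ hgap).1 ha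
    rw [discrim]
    linarith
  linarith [quadratic_nonneg_of_discrim_nonpos ha_pos hdiscrim x]

lemma exists_pos_forall_le_dist_of_notMem_closure {M : Type*} [PseudoMetricSpace M]
    {s : Set M} {p : M} (hp : p ∉ closure s) : ∃ δ > 0, ∀ x ∈ s, δ ≤ dist x p := by
  simpa [Metric.mem_closure_iff, dist_comm p] using hp

theorem pseudoconvexity_positivity_general {M : Type*} [PseudoMetricSpace M] {Ω : Set M} {x₀ : M}
    (hx₀ : x₀ ∉ closure Ω) {κ : ℝ} (hκ : 0 < κ) (b : ℝ) :
    ∃ l₀ > (0 : ℝ), ∃ c > (0 : ℝ), ∀ l ≥ l₀, ∀ x ∈ Ω, ∀ X : ℝ,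
      c ≤ 2 * l * X ^ 2 + b * X + κ * dist x x₀ ^ 2 := by
  obtain ⟨δ, hδ, hdist⟩ := exists_pos_forall_le_dist_of_notMem_closure hx₀
  have hm : 0 < κ * δ ^ 2 := by positivity
  obtain ⟨a₀, ha₀, hquad⟩ := exists_forall_ge_le_quadratic (half_lt_self hm) b
  refine ⟨a₀ / 2, half_pos ha₀, κ * δ ^ 2 / 2, half_pos hm, fun l hl x hx X ↦ ?_⟩
  calc κ * δ ^ 2 / 2 ≤ 2 * l * X ^ 2 + b * X + κ * δ ^ 2 := hquad (2 * l) (by linarith) X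
    _ ≤ 2 * l * X ^ 2 + b * X + κ * dist x x₀ ^ 2 := by gcongr; exact hdist x hx

/-- **Positivity of the zeroth-order coefficient `F_λ(ψ)`** (inequality (2.12)):
for `α ∈ (2β/(β+n), 2/(β+n))`, there are `λ₀ > 0` and `c > 0` such that for all `λ ≥ λ₀` and all
`(x,t) ∈ Ω × (-T,T)`, with `X = 4β²t² - 4|x-x₀|²`,
`2λX² + (-4β - 2α(β+n))X + 16(1-β)|x-x₀|² ≥ c`. -/
theorem pseudoconvexity_positivity
    (n : ℕ) (hn : 1 ≤ n)
    (Ω : Set (EuclideanSpace ℝ (Fin n))) (hΩo : IsOpen Ω) (hΩb : Bornology.IsBounded Ω)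
    (T : ℝ) (hT : 0 < T)
    (x₀ : EuclideanSpace ℝ (Fin n)) (hx₀ : x₀ ∉ closure Ω)
    (β : ℝ) (hβ : β ∈ Set.Ioo (0:ℝ) 1) (C₀ : ℝ) (hC₀ : 0 < C₀)
    (α : ℝ) (hα₁ : 2 * β / (β + n) < α) (hα₂ : α < 2 / (β + n)) :
    ∃ l₀ > (0:ℝ), ∃ c > (0:ℝ), ∀ l ≥ l₀, ∀ x ∈ Ω, ∀ t ∈ Set.Ioo (-T) T,
      c ≤ 2 * l * (4 * β ^ 2 * t ^ 2 - 4 * ‖x - x₀‖ ^ 2) ^ 2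
          + (-4 * β - 2 * α * (β + n)) * (4 * β ^ 2 * t ^ 2 - 4 * ‖x - x₀‖ ^ 2)
          + 16 * (1 - β) * ‖x - x₀‖ ^ 2 := by
  obtain ⟨l₀, hl₀, c, hc, h⟩ := pseudoconvexity_positivity_general hx₀
    (mul_pos (by norm_num) (sub_pos.2 hβ.2) : 0 < 16 * (1 - β)) (-4 * β - 2 * α * (β + n))
  exact ⟨l₀, hl₀, c, hc, fun l hl x hx t _ ↦ dist_eq_norm x x₀ ▸ h l hl x hx _⟩
end

section
/- Let n ≥ 1 be an integer, Ω ⊂ ℝⁿ a bounded open set, T > 0, x₀ ∈ ℝⁿ \ cl(Ω), β ∈ (0,1), and C₀ > 0 such that ψ ≥ 1 on Ω × (−T,T), where ψ(x,t) = |x−x₀|² − βt² + C₀; for λ > 0 set φ = e^{λψ}. Let α ∈ (2β/(β+n), 2/(β+n)) and define, for s, λ > 0, P₁w = ∂ₜ²w − Δw + s²λ²φ²(|∂ₜψ|² − |∇ψ|²)w and P₂w = (α−1)sλφ(∂ₜ²ψ − Δψ)w − sλ²φ(|∂ₜψ|² − |∇ψ|²)w − 2sλφ(∂ₜw ∂ₜψ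 − ∇w·∇ψ). Then there exist λ₀ > 0, κ > 0 and M > 0 such that for all λ ≥ λ₀, all s > 0, and every smooth function w with compact support contained in Ω × (−T,T): ∫∫_{Ω×(−T,T)} P₁w · P₂w dx dt ≥ κ ( sλ ∫∫ φ (|∂ₜw|² + |∇w|²) dx dt + s³λ³ ∫∫ φ³ |w|² dx dt ) − M sλ⁴ ∫∫ φ |w|² dx dt. -/
open MeasureTheory Real Set
open scoped RealInnerProductSpace

/-- The operator `P₁w = ∂ₜ²w - Δw + s²λ²φ²(|∂ₜψ|² - |∇ψ|²)w` (formula (2.2)). -/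
noncomputable def P1 {n : ℕ} (x₀ : EuclideanSpace ℝ (Fin n)) (β C₀ s l : ℝ)
    (w : EuclideanSpace ℝ (Fin n) → ℝ → ℝ) (x : EuclideanSpace ℝ (Fin n)) (t : ℝ) : ℝ :=
  deriv (deriv (w x)) t - lap (fun y => w y t) x
    + s ^ 2 * l ^ 2 * (phi x₀ β C₀ l x t) ^ 2 *
      ((deriv (psi x₀ β C₀ x) t) ^ 2 - ‖gradient (fun y => psi x₀ β C₀ y t) x‖ ^ 2) * w x t

/-- The operator
`P₂w = (α-1)sλφ(∂ₜ²ψ - Δψ)w - sλ²φ(|∂ₜψ|² - |∇ψ|²)w - 2sλφ(∂ₜw ∂ₜψ - ∇w·∇ψ)` (formula (2.4)). -/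
noncomputable def P2 {n : ℕ} (x₀ : EuclideanSpace ℝ (Fin n)) (β C₀ s l α : ℝ)
    (w : EuclideanSpace ℝ (Fin n) → ℝ → ℝ) (x : EuclideanSpace ℝ (Fin n)) (t : ℝ) : ℝ :=
  (α - 1) * s * l * phi x₀ β C₀ l x t *
      (deriv (deriv (psi x₀ β C₀ x)) t - lap (fun y => psi x₀ β C₀ y t) x) * w x t
    - s * l ^ 2 * phi x₀ β C₀ l x t *
      ((deriv (psi x₀ β C₀ x) t) ^ 2 - ‖gradient (fun y => psi x₀ β C₀ y t) x‖ ^ 2) * w x t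
    - 2 * s * l * phi x₀ β C₀ l x t *
      (deriv (w x) t * deriv (psi x₀ β C₀ x) t
        - ⟪gradient (fun y => w y t) x, gradient (fun y => psi x₀ β C₀ y t) x⟫)

/-!
Integrating by parts, `∫ P₁w P₂w` becomes the integral of a density that involves only `w²` and a
quadratic form in the first derivatives of `w`. Everything is expressed through the constant
metric `⟨·, ·⟩` of signature `(1, -1, …, -1)`: the one identity behind the computation is
`⟨⟨w, ψ⟩, w⟩ = ∇²ψ(∇w, ∇w) + ½⟨⟨w, w⟩, ψ⟩`.

For `ψ = |x - x₀|² - βt² + C₀` the Hessian and `□ψ` are constant, and the window for `α` is exactly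
the one in which `2∇²ψ - α□ψ⟨·, ·⟩` is positive definite. The coefficient of `s³λ³φ³w²` is positive
for large `λ` because it contains `2λ⟨ψ, ψ⟩²`, while on the light cone `⟨ψ, ψ⟩ = 0` it reduces to
`16(1 - β)|x - x₀|²`, which is bounded below as `x₀ ∉ closure Ω`. What is left is `½w²` times a
combination of `□(sλφ□ψ)` and `□(sλ²φ⟨ψ, ψ⟩)`, hence of size `sλ⁴φw²`.
-/

/-- The Carleman weight `e^{lψ}` with exponent `ψ` and large parameter `l`. -/
noncomputable def expWeight {V : Type*} (l : ℝ) (ψ : V → ℝ) (q : V) : ℝ :=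
  exp (l * ψ q)

lemma expWeight_pos {V : Type*} {l : ℝ} {ψ : V → ℝ} {q : V} : 0 < expWeight l ψ q :=
  exp_pos _

section FrameCalculus

variable {ι V : Type*} [NormedAddCommGroup V] [NormedSpace ℝ V]

/-- The derivative `∂ᵢf` along the `i`-th vector of a family `e`, which plays the role of a
constant frame; the family need be neither independent nor spanning. -/
noncomputable def frameDeriv (e : ι → V) (i : ι) (f : V → ℝ) (q : V) : ℝ :=
  fderiv ℝ f q (e i)

lemma contDiff_expWeight {l : ℝ} {ψ : V → ℝ} {k : WithTop ℕ∞} (hψ : ContDiff ℝ k ψ) :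
    ContDiff ℝ k (expWeight l ψ) :=
  (contDiff_const.mul hψ).exp

section FrameDeriv

variable {e : ι → V} {i j : ι} {f g ψ : V → ℝ} {q : V} {l : ℝ}

lemma contDiff_frameDeriv {m k : WithTop ℕ∞} (hf : ContDiff ℝ k f) (hmk : m + 1 ≤ k) :
    ContDiff ℝ m (frameDeriv e i f) :=
  (hf.fderiv_right hmk).clm_apply contDiff_const

lemma support_frameDeriv_subset : Function.support (frameDeriv e i f) ⊆ tsupport f :=
  (subset_tsupport _).trans (tsupport_fderiv_apply_subset ℝ (e i))

lemma frameDeriv_eq_zero (hq : q ∉ tsupport f) : frameDeriv e i f q = 0 :=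
  Function.notMem_support.1 fun h => hq (support_frameDeriv_subset h)

lemma frameDeriv_add (hf : DifferentiableAt ℝ f q) (hg : DifferentiableAt ℝ g q) :
    frameDeriv e i (f + g) q = frameDeriv e i f q + frameDeriv e i g q := by
  simp [frameDeriv, fderiv_add hf hg]

lemma frameDeriv_const_smul (hf : DifferentiableAt ℝ f q) (c : ℝ) :
    frameDeriv e i (c • f) q = c * frameDeriv e i f q := by
  simp [frameDeriv, fderiv_const_smul hf c]

lemma frameDeriv_mul (hf : DifferentiableAt ℝ f q) (hg : DifferentiableAt ℝ g q) :
    frameDeriv e i (f * g) q = f q * frameDeriv e i g q + g q * frameDeriv e i f q := by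
  simp [frameDeriv, fderiv_mul hf hg]

lemma frameDeriv_pow (hf : DifferentiableAt ℝ f q) (k : ℕ) :
    frameDeriv e i (f ^ k) q = k * f q ^ (k - 1) * frameDeriv e i f q := by
  simp [frameDeriv, fderiv_pow k hf]

lemma frameDeriv_expWeight (hψ : DifferentiableAt ℝ ψ q) :
    frameDeriv e i (expWeight l ψ) q = l * (expWeight l ψ q * frameDeriv e i ψ q) := by
  have h_deriv := ((hψ.hasFDerivAt.const_mul l).exp).fderiv
  change fderiv ℝ (expWeight l ψ) q = _ at h_deriv
  simp only [frameDeriv, h_deriv, expWeight, smul_apply, smul_eq_mul]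
  ring

lemma frameDeriv_comm (hf : ContDiff ℝ 2 f) :
    frameDeriv e i (frameDeriv e j f) q = frameDeriv e j (frameDeriv e i f) q := by
  have second_deriv (i j : ι) :
      frameDeriv e i (frameDeriv e j f) q = fderiv ℝ (fderiv ℝ f) q (e i) (e j) := by
    have hd : DifferentiableAt ℝ (fderiv ℝ f) q :=
      (hf.fderiv_right (m := 1) (by norm_num)).differentiable one_ne_zero q
    change fderiv ℝ (fun p => fderiv ℝ f p (e j)) q (e i) = _
    simp [fderiv_clm_apply hd (differentiableAt_const _)]
  rw [second_deriv, second_deriv]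
  exact (hf.contDiffAt.isSymmSndFDerivAt (by simp)).eq _ _

end FrameDeriv

variable [Fintype ι]

/-- The squared length `∑ᵢ (∂ᵢf)²` of the frame gradient. -/
noncomputable def gradSq (e : ι → V) (f : V → ℝ) (q : V) : ℝ :=
  ∑ i, frameDeriv e i f q ^ 2

/-- The bilinear gradient form `⟨f, g⟩ = ∑ᵢ εᵢ ∂ᵢf ∂ᵢg` (carré du champ) of the operator
`∑ᵢ εᵢ ∂ᵢ²`. -/
noncomputable def gradForm (e : ι → V) (ε : ι → ℝ) (f g : V → ℝ) (q : V) : ℝ :=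
  ∑ i, ε i * (frameDeriv e i f q * frameDeriv e i g q)

/-- The constant-coefficient operator `□f = ∑ᵢ εᵢ ∂ᵢ²f`; for the signature `(1, -1, …, -1)` it is
the wave operator. -/
noncomputable def waveOp (e : ι → V) (ε : ι → ℝ) (f : V → ℝ) (q : V) : ℝ :=
  ∑ i, ε i * frameDeriv e i (frameDeriv e i f) q

/-- The Hessian of `f` evaluated on the vector that the metric `ε` assigns to the covector `ξ`. -/
noncomputable def hessForm (e : ι → V) (ε : ι → ℝ) (f : V → ℝ) (q : V) (ξ : ι → ℝ) : ℝ :=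
  ∑ i, ∑ j, ε i * ε j * (ξ i * ξ j * frameDeriv e i (frameDeriv e j f) q)

variable {e : ι → V} {ε : ι → ℝ} {f g h w ψ : V → ℝ} {q : V} {l : ℝ} {m k : WithTop ℕ∞}

lemma contDiff_gradForm (hf : ContDiff ℝ k f) (hg : ContDiff ℝ k g) (hmk : m + 1 ≤ k) :
    ContDiff ℝ m (gradForm e ε f g) :=
  ContDiff.sum fun _ _ =>
    contDiff_const.mul ((contDiff_frameDeriv hf hmk).mul (contDiff_frameDeriv hg hmk))

lemma contDiff_waveOp (hf : ContDiff ℝ k f) (hmk : m + 1 + 1 ≤ k) :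
    ContDiff ℝ m (waveOp e ε f) :=
  ContDiff.sum fun _ _ =>
    contDiff_const.mul (contDiff_frameDeriv (contDiff_frameDeriv hf hmk) le_rfl)

lemma continuous_gradSq (hf : ContDiff ℝ 1 f) : Continuous (gradSq e f) :=
  continuous_finsetSum _ fun _ _ => (contDiff_frameDeriv (m := 0) hf (by simp)).continuous.pow 2

lemma gradSq_eq_zero (hq : q ∉ tsupport f) : gradSq e f q = 0 := by
  simp [gradSq, frameDeriv_eq_zero hq]

lemma gradForm_eq_zero (hq : q ∉ tsupport f) : gradForm e ε f g q = 0 := by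
  simp [gradForm, frameDeriv_eq_zero hq]

lemma waveOp_eq_zero (hq : q ∉ tsupport f) : waveOp e ε f q = 0 := by
  have h_sub (i : ι) : tsupport (frameDeriv e i f) ⊆ tsupport f :=
    closure_minimal support_frameDeriv_subset isClosed_closure
  simp [waveOp, frameDeriv_eq_zero fun h => hq (h_sub _ h)]

lemma hasCompactSupport_gradForm (hf : HasCompactSupport f) :
    HasCompactSupport (gradForm e ε f g) :=
  .intro hf fun _ => gradForm_eq_zero

lemma gradForm_comm : gradForm e ε f g q = gradForm e ε g f q := by
  simp only [gradForm, mul_comm (frameDeriv e _ f q)]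

lemma gradForm_mul_left (hf : DifferentiableAt ℝ f q) (hg : DifferentiableAt ℝ g q) :
    gradForm e ε (f * g) h q = f q * gradForm e ε g h q + g q * gradForm e ε f h q := by
  simp only [gradForm, frameDeriv_mul hf hg, Finset.mul_sum, ← Finset.sum_add_distrib]
  exact Finset.sum_congr rfl fun i _ => by ring

lemma gradForm_pow_left (hf : DifferentiableAt ℝ f q) (k : ℕ) :
    gradForm e ε (f ^ k) h q = k * f q ^ (k - 1) * gradForm e ε f h q := by
  simp only [gradForm, frameDeriv_pow hf, Finset.mul_sum]
  exact Finset.sum_congr rfl fun i _ => by ring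

lemma gradForm_expWeight_left (hψ : DifferentiableAt ℝ ψ q) :
    gradForm e ε (expWeight l ψ) h q = l * expWeight l ψ q * gradForm e ε ψ h q := by
  simp only [gradForm, frameDeriv_expWeight hψ, Finset.mul_sum]
  exact Finset.sum_congr rfl fun i _ => by ring

lemma frameDeriv_gradForm (hf : ContDiff ℝ 2 f) (hg : ContDiff ℝ 2 g) (i : ι) :
    frameDeriv e i (gradForm e ε f g) q =
      ∑ j, ε j * (frameDeriv e j f q * frameDeriv e i (frameDeriv e j g) q
        + frameDeriv e j g q * frameDeriv e i (frameDeriv e j f) q) := by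
  have hd {u : V → ℝ} (hu : ContDiff ℝ 2 u) (j : ι) : DifferentiableAt ℝ (frameDeriv e j u) q :=
    (contDiff_frameDeriv (m := 1) hu (by norm_num)).differentiable one_ne_zero q
  have h_fderiv : fderiv ℝ (gradForm e ε f g) q
      = ∑ j, ε j • fderiv ℝ (frameDeriv e j f * frameDeriv e j g) q :=
    (HasFDerivAt.fun_sum fun j _ => (((hd hf j).mul (hd hg j)).hasFDerivAt.const_mul (ε j))).fderiv
  rw [frameDeriv, h_fderiv, sum_apply]
  exact Finset.sum_congr rfl fun j _ =>
    congrArg (ε j * ·) (frameDeriv_mul (e := e) (i := i) (hd hf j) (hd hg j))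

lemma gradForm_gradForm_left (hw : ContDiff ℝ 2 w) (hψ : ContDiff ℝ 2 ψ) :
    gradForm e ε (gradForm e ε w ψ) w q =
      hessForm e ε ψ q (frameDeriv e · w q) + 1 / 2 * gradForm e ε (gradForm e ε w w) ψ q := by
  have h_swap : ∑ i, ∑ j, ε i * ε j *
        (frameDeriv e i w q * frameDeriv e j ψ q * frameDeriv e i (frameDeriv e j w) q)
      = ∑ i, ∑ j, ε i * ε j *
        (frameDeriv e j w q * frameDeriv e i ψ q * frameDeriv e i (frameDeriv e j w) q) := by
    rw [Finset.sum_comm]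
    refine Finset.sum_congr rfl fun j _ => Finset.sum_congr rfl fun i _ => ?_
    rw [frameDeriv_comm hw]
    ring
  have h_left : gradForm e ε (gradForm e ε w ψ) w q = hessForm e ε ψ q (frameDeriv e · w q) +
      ∑ i, ∑ j, ε i * ε j *
        (frameDeriv e i w q * frameDeriv e j ψ q * frameDeriv e i (frameDeriv e j w) q) := by
    simp only [gradForm, hessForm, ← Finset.sum_add_distrib]
    refine Finset.sum_congr rfl fun i _ => ?_
    rw [frameDeriv_gradForm hw hψ, Finset.sum_mul, Finset.mul_sum]
    exact Finset.sum_congr rfl fun j _ => by ring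
  have h_right : gradForm e ε (gradForm e ε w w) ψ q = 2 * ∑ i, ∑ j, ε i * ε j *
        (frameDeriv e j w q * frameDeriv e i ψ q * frameDeriv e i (frameDeriv e j w) q) := by
    rw [gradForm, Finset.mul_sum]
    refine Finset.sum_congr rfl fun i _ => ?_
    rw [frameDeriv_gradForm hw hw, Finset.sum_mul, Finset.mul_sum, Finset.mul_sum]
    exact Finset.sum_congr rfl fun j _ => by ring
  rw [h_left, h_right, h_swap]
  ring

lemma gradForm_gradForm_self_left (hψ : ContDiff ℝ 2 ψ) :
    gradForm e ε (gradForm e ε ψ ψ) ψ q = 2 * hessForm e ε ψ q (frameDeriv e · ψ q) := by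
  linarith [gradForm_gradForm_left (e := e) (ε := ε) (q := q) hψ hψ]

lemma waveOp_mul (hf : ContDiff ℝ 2 f) (hg : ContDiff ℝ 2 g) :
    waveOp e ε (f * g) q =
      f q * waveOp e ε g q + g q * waveOp e ε f q + 2 * gradForm e ε f g q := by
  have hd {u : V → ℝ} (hu : ContDiff ℝ 2 u) : Differentiable ℝ u := hu.differentiable two_ne_zero
  have hd' {u : V → ℝ} (hu : ContDiff ℝ 2 u) (i : ι) : Differentiable ℝ (frameDeriv e i u) :=
    (contDiff_frameDeriv (m := 1) hu (by norm_num)).differentiable one_ne_zero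
  have h_first (i : ι) : frameDeriv e i (f * g) = f * frameDeriv e i g + g * frameDeriv e i f :=
    funext fun p => frameDeriv_mul (hd hf p) (hd hg p)
  simp only [waveOp, gradForm, Finset.mul_sum, ← Finset.sum_add_distrib]
  refine Finset.sum_congr rfl fun i _ => ?_
  rw [h_first, frameDeriv_add ((hd hf q).mul (hd' hg i q)) ((hd hg q).mul (hd' hf i q)),
    frameDeriv_mul (hd hf q) (hd' hg i q), frameDeriv_mul (hd hg q) (hd' hf i q)]
  ring

lemma waveOp_expWeight (hψ : ContDiff ℝ 2 ψ) :
    waveOp e ε (expWeight l ψ) q =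
      expWeight l ψ q * (l ^ 2 * gradForm e ε ψ ψ q + l * waveOp e ε ψ q) := by
  have hd {u : V → ℝ} (hu : ContDiff ℝ 2 u) : Differentiable ℝ u := hu.differentiable two_ne_zero
  have hφ : DifferentiableAt ℝ (expWeight l ψ) q := hd (contDiff_expWeight hψ) q
  have h_first (i : ι) :
      frameDeriv e i (expWeight l ψ) = l • (expWeight l ψ * frameDeriv e i ψ) :=
    funext fun p => frameDeriv_expWeight (hd hψ p)
  simp only [waveOp, gradForm, Finset.mul_sum, ← Finset.sum_add_distrib]
  refine Finset.sum_congr rfl fun i _ => ?_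
  have hψ' : DifferentiableAt ℝ (frameDeriv e i ψ) q :=
    (contDiff_frameDeriv (m := 1) hψ (by norm_num)).differentiable one_ne_zero q
  rw [h_first, frameDeriv_const_smul (hφ.mul hψ'), frameDeriv_mul hφ hψ',
    frameDeriv_expWeight (hd hψ q)]
  ring

lemma waveOp_expWeight_mul (hψ : ContDiff ℝ 2 ψ) (hf : ContDiff ℝ 2 f) :
    waveOp e ε (expWeight l ψ * f) q = expWeight l ψ q * (waveOp e ε f q
      + 2 * l * gradForm e ε ψ f q + (l ^ 2 * gradForm e ε ψ ψ q + l * waveOp e ε ψ q) * f q) := by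
  rw [waveOp_mul (contDiff_expWeight hψ) hf, waveOp_expWeight hψ,
    gradForm_expWeight_left (hψ.differentiable two_ne_zero q)]
  ring

end FrameCalculus

/-- `F` is integrable with integral zero; integration by parts exhibits the difference of two
integrands as such a function. -/
def IntegratesToZero {V : Type*} [MeasurableSpace V] (μ : Measure V) (F : V → ℝ) : Prop :=
  Integrable F μ ∧ ∫ q, F q ∂μ = 0

section IntegratesToZero

variable {V : Type*} [MeasurableSpace V] {μ : Measure V} {F G : V → ℝ}

lemma IntegratesToZero.add (hF : IntegratesToZero μ F) (hG : IntegratesToZero μ G) :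
    IntegratesToZero μ (F + G) :=
  ⟨hF.1.add hG.1, by rw [integral_add' hF.1 hG.1, hF.2, hG.2, add_zero]⟩

lemma IntegratesToZero.smul (hF : IntegratesToZero μ F) (c : ℝ) : IntegratesToZero μ (c • F) :=
  ⟨hF.1.smul c, by simp [integral_const_mul, hF.2]⟩

lemma IntegratesToZero.integral_le_of_le_sub (hF : IntegratesToZero μ F) {H : V → ℝ}
    (hG : Integrable G μ) (hH : Integrable H μ) (hle : ∀ q, H q ≤ G q - F q) :
    ∫ q, H q ∂μ ≤ ∫ q, G q ∂μ :=
  calc ∫ q, H q ∂μ ≤ ∫ q, (G q - F q) ∂μ := integral_mono hH (hG.sub hF.1) hle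
    _ = ∫ q, G q ∂μ := by rw [integral_sub hG hF.1, hF.2, sub_zero]

end IntegratesToZero

lemma integratesToZero_frameDeriv_mul {ι V : Type*} [NormedAddCommGroup V] [NormedSpace ℝ V]
    [FiniteDimensional ℝ V] [MeasurableSpace V] [BorelSpace V] {μ : Measure V} [μ.IsAddHaarMeasure]
    {e : ι → V} {f g : V → ℝ} (hf : ContDiff ℝ 1 f)
    (hfc : HasCompactSupport f) (hg : ContDiff ℝ 1 g) (i : ι) :
    IntegratesToZero μ (fun q => f q * frameDeriv e i g q + frameDeriv e i f q * g q) := by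
  have h_cont {u : V → ℝ} (hu : ContDiff ℝ 1 u) : Continuous (frameDeriv e i u) :=
    (contDiff_frameDeriv (m := 0) hu (by simp)).continuous
  have h_int : Integrable (fun q => f q * frameDeriv e i g q) μ :=
    (hf.continuous.mul (h_cont hg)).integrable_of_hasCompactSupport hfc.mul_right
  have h_int' : Integrable (fun q => frameDeriv e i f q * g q) μ :=
    ((h_cont hf).mul hg.continuous).integrable_of_hasCompactSupport
      (hfc.fderiv_apply ℝ (e i)).mul_right
  have h_int'' : Integrable (fun q => f q * g q) μ :=
    (hf.continuous.mul hg.continuous).integrable_of_hasCompactSupport hfc.mul_right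
  refine ⟨h_int.add h_int', ?_⟩
  rw [integral_add h_int h_int', ← eq_neg_iff_add_eq_zero]
  exact integral_mul_fderiv_eq_neg_fderiv_mul_of_integrable h_int' h_int h_int''
    (fun q _ => hf.differentiable one_ne_zero q) (fun q _ => hg.differentiable one_ne_zero q)

section CarlemanIdentity

variable {ι V : Type*} [Fintype ι] [NormedAddCommGroup V] [NormedSpace ℝ V]

/-- The conjugated operator `P₁w = □w + s²l²φ²⟨ψ, ψ⟩w` with `φ = e^{lψ}`. -/
noncomputable def carlemanP₁ (e : ι → V) (ε : ι → ℝ) (ψ : V → ℝ) (s l : ℝ) (w : V → ℝ) (q : V) :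
    ℝ :=
  waveOp e ε w q + s ^ 2 * l ^ 2 * expWeight l ψ q ^ 2 * gradForm e ε ψ ψ q * w q

/-- The conjugated operator `P₂w = (α-1)slφ□ψ w - sl²φ⟨ψ, ψ⟩w - 2slφ⟨w, ψ⟩` with `φ = e^{lψ}`. -/
noncomputable def carlemanP₂ (e : ι → V) (ε : ι → ℝ) (ψ : V → ℝ) (s l α : ℝ) (w : V → ℝ) (q : V) :
    ℝ :=
  (α - 1) * s * l * expWeight l ψ q * waveOp e ε ψ q * w q
    - s * l ^ 2 * expWeight l ψ q * gradForm e ε ψ ψ q * w q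
    - 2 * s * l * expWeight l ψ q * gradForm e ε w ψ q

/-- What remains of `P₁w · P₂w` after integration by parts: a quadratic form in the first
derivatives of `w` plus a multiple of `w²`. -/
noncomputable def carlemanDensity (e : ι → V) (ε : ι → ℝ) (ψ : V → ℝ) (s l α : ℝ) (w : V → ℝ)
    (q : V) : ℝ :=
  2 * s * l ^ 2 * expWeight l ψ q * gradForm e ε w ψ q ^ 2
    + s * l * expWeight l ψ q * (2 * hessForm e ε ψ q (frameDeriv e · w q)
        - α * waveOp e ε ψ q * gradForm e ε w w q)
    + s ^ 3 * l ^ 3 * expWeight l ψ q ^ 3 * w q ^ 2 * (2 * l * gradForm e ε ψ ψ q ^ 2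
        + 2 * hessForm e ε ψ q (frameDeriv e · ψ q) + α * waveOp e ε ψ q * gradForm e ε ψ ψ q)
    + 1 / 2 * w q ^ 2 * ((α - 1) * s * l * waveOp e ε (expWeight l ψ * waveOp e ε ψ) q
        - s * l ^ 2 * waveOp e ε (expWeight l ψ * gradForm e ε ψ ψ) q)

variable {e : ι → V} {ε : ι → ℝ} {b f g w ψ : V → ℝ} {q : V} {s l α : ℝ}

lemma continuous_carlemanP₁ (hψ : ContDiff ℝ 1 ψ) (hw : ContDiff ℝ 2 w) :
    Continuous (carlemanP₁ e ε ψ s l w) := by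
  have hφ := (contDiff_expWeight (l := l) hψ).continuous
  have hD := (contDiff_gradForm (e := e) (ε := ε) (m := 0) hψ hψ (by simp)).continuous
  have hbox := (contDiff_waveOp (e := e) (ε := ε) (m := 0) hw (by norm_num)).continuous
  have hw₀ := hw.continuous
  unfold carlemanP₁
  fun_prop

lemma continuous_carlemanP₂ (hψ : ContDiff ℝ 2 ψ) (hw : ContDiff ℝ 1 w) :
    Continuous (carlemanP₂ e ε ψ s l α w) := by
  have hψ₁ : ContDiff ℝ 1 ψ := hψ.of_le one_le_two
  have hφ := (contDiff_expWeight (l := l) hψ).continuous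
  have hD := (contDiff_gradForm (e := e) (ε := ε) (m := 0) hψ₁ hψ₁ (by simp)).continuous
  have hR := (contDiff_gradForm (e := e) (ε := ε) (m := 0) hw hψ₁ (by simp)).continuous
  have hbox := (contDiff_waveOp (e := e) (ε := ε) (m := 0) hψ (by norm_num)).continuous
  have hw₀ := hw.continuous
  unfold carlemanP₂
  fun_prop

lemma carlemanP₁_eq_zero (hq : q ∉ tsupport w) : carlemanP₁ e ε ψ s l w q = 0 := by
  simp [carlemanP₁, waveOp_eq_zero hq, image_eq_zero_of_notMem_tsupport hq]

variable [MeasurableSpace V] [BorelSpace V] {μ : Measure V}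

lemma integrable_carlemanP₁_mul_carlemanP₂ [IsFiniteMeasureOnCompacts μ] (hψ : ContDiff ℝ 2 ψ)
    (hw : ContDiff ℝ 2 w) (hwc : HasCompactSupport w) :
    Integrable (fun q => carlemanP₁ e ε ψ s l w q * carlemanP₂ e ε ψ s l α w q) μ :=
  ((continuous_carlemanP₁ (hψ.of_le one_le_two) hw).mul
    (continuous_carlemanP₂ hψ (hw.of_le one_le_two))).integrable_of_hasCompactSupport
    (.intro hwc fun q hq => by simp [carlemanP₁_eq_zero hq])

lemma integrable_expWeight_mul_gradSq [IsFiniteMeasureOnCompacts μ] (hψ : Continuous ψ)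
    (hw : ContDiff ℝ 1 w) (hwc : HasCompactSupport w) :
    Integrable (fun q => expWeight l ψ q * gradSq e w q) μ :=
  ((contDiff_zero.1 (contDiff_expWeight (contDiff_zero.2 hψ))).mul
    (continuous_gradSq hw)).integrable_of_hasCompactSupport
    (.intro hwc fun q hq => by simp [gradSq_eq_zero hq])

lemma integrable_expWeight_pow_mul_sq [IsFiniteMeasureOnCompacts μ] (hψ : Continuous ψ)
    (hw : Continuous w) (hwc : HasCompactSupport w) (k : ℕ) :
    Integrable (fun q => expWeight l ψ q ^ k * w q ^ 2) μ :=
  (((contDiff_zero.1 (contDiff_expWeight (contDiff_zero.2 hψ))).pow k).mul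
    (hw.pow 2)).integrable_of_hasCompactSupport
    (.intro hwc fun q hq => by simp [image_eq_zero_of_notMem_tsupport hq])

variable [FiniteDimensional ℝ V] [μ.IsAddHaarMeasure]

lemma integratesToZero_mul_waveOp_add_gradForm (hf : ContDiff ℝ 1 f) (hfc : HasCompactSupport f)
    (hg : ContDiff ℝ 2 g) :
    IntegratesToZero μ (fun q => f q * waveOp e ε g q + gradForm e ε f g q) := by
  have h_term (i : ι) := integratesToZero_frameDeriv_mul (μ := μ) (e := e) hf hfc
    (contDiff_frameDeriv (e := e) (i := i) (m := 1) hg (by norm_num)) i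
  have h_sum : (fun q => f q * waveOp e ε g q + gradForm e ε f g q) = fun q => ∑ i, ε i *
      (f q * frameDeriv e i (frameDeriv e i g) q + frameDeriv e i f q * frameDeriv e i g q) := by
    funext q
    simp only [waveOp, gradForm, Finset.mul_sum, ← Finset.sum_add_distrib]
    exact Finset.sum_congr rfl fun i _ => by ring
  rw [h_sum]
  refine ⟨integrable_finsetSum _ fun i _ => (h_term i).1.const_mul _, ?_⟩
  rw [integral_finsetSum _ fun i _ => (h_term i).1.const_mul _]
  exact Finset.sum_eq_zero fun i _ => by rw [integral_const_mul, (h_term i).2, mul_zero]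

lemma integratesToZero_mul_self_mul_waveOp (hb : ContDiff ℝ 2 b) (hw : ContDiff ℝ 2 w)
    (hwc : HasCompactSupport w) :
    IntegratesToZero μ (fun q => b q * w q * waveOp e ε w q
      - (1 / 2 * w q ^ 2 * waveOp e ε b q - b q * gradForm e ε w w q)) := by
  have hb₁ : ContDiff ℝ 1 b := hb.of_le one_le_two
  have hw₁ : ContDiff ℝ 1 w := hw.of_le one_le_two
  have h_bw := integratesToZero_mul_waveOp_add_gradForm (μ := μ) (e := e) (ε := ε)
    (hb₁.mul hw₁) hwc.mul_left hw
  have h_ww := integratesToZero_mul_waveOp_add_gradForm (μ := μ) (e := e) (ε := ε)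
    (hw₁.mul hw₁) hwc.mul_left hb
  convert h_bw.add (h_ww.smul (-(1 / 2))) using 1
  funext q
  have hbd : DifferentiableAt ℝ b q := hb.differentiable two_ne_zero q
  have hwd : DifferentiableAt ℝ w q := hw.differentiable two_ne_zero q
  change _ = (b * w) q * _ + gradForm e ε (b * w) w q
    + -(1 / 2) * ((w * w) q * _ + gradForm e ε (w * w) b q)
  simp only [gradForm_mul_left hbd hwd, gradForm_mul_left hwd hwd, gradForm_comm (f := b) (g := w),
    Pi.mul_apply]
  ring

lemma integratesToZero_gradForm_mul_waveOp (hψ : ContDiff ℝ 2 ψ) (hw : ContDiff ℝ 2 w)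
    (hwc : HasCompactSupport w) :
    IntegratesToZero μ (fun q => expWeight l ψ q * gradForm e ε w ψ q * waveOp e ε w q
      - (1 / 2 * expWeight l ψ q * (waveOp e ε ψ q + l * gradForm e ε ψ ψ q) * gradForm e ε w w q
        - l * expWeight l ψ q * gradForm e ε w ψ q ^ 2
        - expWeight l ψ q * hessForm e ε ψ q (frameDeriv e · w q))) := by
  have hφ : ContDiff ℝ 1 (expWeight l ψ) := contDiff_expWeight (hψ.of_le one_le_two)
  have h_form {u : V → ℝ} (hu : ContDiff ℝ 2 u) : ContDiff ℝ 1 (gradForm e ε w u) :=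
    contDiff_gradForm hw hu (by norm_num)
  have h_cross := integratesToZero_mul_waveOp_add_gradForm (μ := μ) (e := e) (ε := ε)
    (hφ.mul (h_form hψ)) (hasCompactSupport_gradForm hwc).mul_left hw
  have h_self := integratesToZero_mul_waveOp_add_gradForm (μ := μ) (e := e) (ε := ε)
    (hφ.mul (h_form hw)) (hasCompactSupport_gradForm hwc).mul_left hψ
  convert h_cross.add (h_self.smul (-(1 / 2))) using 1
  funext q
  have hφd := hφ.differentiable one_ne_zero q
  have hψd : DifferentiableAt ℝ ψ q := hψ.differentiable two_ne_zero q
  have h_formd {u : V → ℝ} (hu : ContDiff ℝ 2 u) : DifferentiableAt ℝ (gradForm e ε w u) q :=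
    (h_form hu).differentiable one_ne_zero q
  change _ = (expWeight l ψ * gradForm e ε w ψ) q * _
      + gradForm e ε (expWeight l ψ * gradForm e ε w ψ) w q
    + -(1 / 2) * ((expWeight l ψ * gradForm e ε w w) q * _
      + gradForm e ε (expWeight l ψ * gradForm e ε w w) ψ q)
  rw [gradForm_mul_left hφd (h_formd hψ), gradForm_mul_left hφd (h_formd hw),
    gradForm_expWeight_left hψd, gradForm_expWeight_left hψd, gradForm_gradForm_left hw hψ,
    gradForm_comm (f := ψ) (g := w)]
  simp only [Pi.mul_apply]
  ring

lemma integratesToZero_gradForm_mul_self (hψ : ContDiff ℝ 2 ψ) (hw : ContDiff ℝ 1 w)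
    (hwc : HasCompactSupport w) :
    IntegratesToZero μ (fun q => expWeight l ψ q ^ 3 * gradForm e ε ψ ψ q * w q * gradForm e ε w ψ q
      + 1 / 2 * w q ^ 2 * expWeight l ψ q ^ 3 * (gradForm e ε ψ ψ q * waveOp e ε ψ q
        + 3 * l * gradForm e ε ψ ψ q ^ 2 + 2 * hessForm e ε ψ q (frameDeriv e · ψ q))) := by
  have hφ : ContDiff ℝ 1 (expWeight l ψ) := contDiff_expWeight (hψ.of_le one_le_two)
  have hD : ContDiff ℝ 1 (gradForm e ε ψ ψ) := contDiff_gradForm hψ hψ (by norm_num)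
  have hwc₂ : HasCompactSupport (w ^ 2) := by simpa only [sq] using hwc.mul_left
  have h_div := integratesToZero_mul_waveOp_add_gradForm (μ := μ) (e := e) (ε := ε)
    (((hφ.pow 3).mul hD).mul (hw.pow 2)) hwc₂.mul_left hψ
  convert h_div.smul (1 / 2) using 1
  funext q
  have hφd := hφ.differentiable one_ne_zero q
  have hDd := hD.differentiable one_ne_zero q
  have hwd := hw.differentiable one_ne_zero q
  change _ = 1 / 2 * ((expWeight l ψ ^ 3 * gradForm e ε ψ ψ * w ^ 2) q * _
    + gradForm e ε (expWeight l ψ ^ 3 * gradForm e ε ψ ψ * w ^ 2) ψ q)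
  rw [gradForm_mul_left ((hφd.pow 3).mul hDd) (hwd.pow 2), gradForm_mul_left (hφd.pow 3) hDd,
    gradForm_pow_left hφd, gradForm_pow_left hwd, gradForm_gradForm_self_left hψ,
    gradForm_expWeight_left (hψ.differentiable two_ne_zero q)]
  simp only [Pi.mul_apply, Pi.pow_apply]
  push_cast
  ring

theorem integratesToZero_carlemanP₁_mul_carlemanP₂_sub_density (hψ : ContDiff ℝ 4 ψ)
    (hw : ContDiff ℝ 2 w) (hwc : HasCompactSupport w) :
    IntegratesToZero μ (fun q => carlemanP₁ e ε ψ s l w q * carlemanP₂ e ε ψ s l α w q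
      - carlemanDensity e ε ψ s l α w q) := by
  have hψ₂ : ContDiff ℝ 2 ψ := hψ.of_le (by norm_num)
  have hφ : ContDiff ℝ 2 (expWeight l ψ) := contDiff_expWeight hψ₂
  have hbox : ContDiff ℝ 2 (waveOp e ε ψ) := contDiff_waveOp hψ (by norm_num)
  have hD : ContDiff ℝ 2 (gradForm e ε ψ ψ) := contDiff_gradForm hψ hψ (by norm_num)
  have h_box := integratesToZero_mul_self_mul_waveOp (μ := μ) (e := e) (ε := ε)
    (b := expWeight l ψ * waveOp e ε ψ) (hφ.mul hbox) hw hwc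
  have h_D := integratesToZero_mul_self_mul_waveOp (μ := μ) (e := e) (ε := ε)
    (b := expWeight l ψ * gradForm e ε ψ ψ) (hφ.mul hD) hw hwc
  have h_cross := integratesToZero_gradForm_mul_waveOp (μ := μ) (e := e) (ε := ε) (l := l)
    hψ₂ hw hwc
  have h_self := integratesToZero_gradForm_mul_self (μ := μ) (e := e) (ε := ε) (l := l)
    hψ₂ (hw.of_le one_le_two) hwc
  convert (((h_box.smul ((α - 1) * s * l)).add (h_D.smul (-(s * l ^ 2)))).add
    (h_cross.smul (-(2 * s * l)))).add (h_self.smul (-(2 * s ^ 3 * l ^ 3))) using 1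
  funext q
  simp only [carlemanP₁, carlemanP₂, carlemanDensity, Pi.add_apply, Pi.smul_apply, Pi.mul_apply,
    smul_eq_mul]
  ring

end CarlemanIdentity

section Pseudoconvexity

variable {ι V : Type*} [Fintype ι] [NormedAddCommGroup V] [NormedSpace ℝ V]

/-- Uniform pseudoconvexity of the weight `ψ` on `S`, with constant `κ`: the two quadratic forms
that multiply the first derivatives of `w` and `w²` itself in `carlemanDensity` are at least `κ`,
the second one as soon as the large parameter reaches `l₀`. -/
structure IsPseudoconvexOn (e : ι → V) (ε : ι → ℝ) (ψ : V → ℝ) (α κ l₀ : ℝ) (S : Set V) :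
    Prop where
  firstOrder : ∀ q ∈ S, ∀ ξ : ι → ℝ, κ * ∑ i, ξ i ^ 2 ≤
    2 * hessForm e ε ψ q ξ - α * waveOp e ε ψ q * ∑ i, ε i * (ξ i * ξ i)
  zeroOrder : ∀ q ∈ S, κ ≤ 2 * l₀ * gradForm e ε ψ ψ q ^ 2
    + 2 * hessForm e ε ψ q (frameDeriv e · ψ q) + α * waveOp e ε ψ q * gradForm e ε ψ ψ q

variable {e : ι → V} {ε : ι → ℝ} {f ψ w : V → ℝ} {q : V} {s l l₀ α κ M : ℝ} {S : Set V}

lemma IsPseudoconvexOn.le_carlemanDensity (h : IsPseudoconvexOn e ε ψ α κ l₀ S) (hq : q ∈ S)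
    (hl₀ : l₀ ≤ l) (hl : 0 ≤ l) (hs : 0 ≤ s)
    (hM : |(α - 1) * s * l * waveOp e ε (expWeight l ψ * waveOp e ε ψ) q
      - s * l ^ 2 * waveOp e ε (expWeight l ψ * gradForm e ε ψ ψ) q|
        ≤ 2 * (M * s * l ^ 4 * expWeight l ψ q)) :
    κ * (s * l * (expWeight l ψ q * gradSq e w q)
        + s ^ 3 * l ^ 3 * (expWeight l ψ q ^ 3 * w q ^ 2))
      - M * s * l ^ 4 * (expWeight l ψ q * w q ^ 2) ≤ carlemanDensity e ε ψ s l α w q := by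
  have hφ : 0 < expWeight l ψ q := expWeight_pos
  have h_cross : 0 ≤ 2 * s * l ^ 2 * expWeight l ψ q * gradForm e ε w ψ q ^ 2 := by positivity
  have h_first : s * l * expWeight l ψ q * (κ * gradSq e w q) ≤
      s * l * expWeight l ψ q * (2 * hessForm e ε ψ q (frameDeriv e · w q)
        - α * waveOp e ε ψ q * gradForm e ε w w q) :=
    mul_le_mul_of_nonneg_left (h.firstOrder q hq (frameDeriv e · w q)) (by positivity)
  have h_mono : l₀ * gradForm e ε ψ ψ q ^ 2 ≤ l * gradForm e ε ψ ψ q ^ 2 := by gcongr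
  have h_zero : s ^ 3 * l ^ 3 * expWeight l ψ q ^ 3 * w q ^ 2 * κ ≤
      s ^ 3 * l ^ 3 * expWeight l ψ q ^ 3 * w q ^ 2 * (2 * l * gradForm e ε ψ ψ q ^ 2
        + 2 * hessForm e ε ψ q (frameDeriv e · ψ q) + α * waveOp e ε ψ q * gradForm e ε ψ ψ q) :=
    mul_le_mul_of_nonneg_left (by linarith [h.zeroOrder q hq]) (by positivity)
  have h_rem := mul_le_mul_of_nonneg_left (neg_le_of_abs_le hM)
    (by positivity : 0 ≤ 1 / 2 * w q ^ 2)
  unfold carlemanDensity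
  linarith

variable [FiniteDimensional ℝ V]

lemma exists_abs_waveOp_expWeight_mul_le (hψ : ContDiff ℝ 2 ψ) (hf : ContDiff ℝ 2 f)
    (hS : Bornology.IsBounded S) :
    ∃ C ≥ 0, ∀ l ≥ 1, ∀ q ∈ S,
      |waveOp e ε (expWeight l ψ * f) q| ≤ C * l ^ 2 * expWeight l ψ q := by
  have h_form {u : V → ℝ} (hu : ContDiff ℝ 2 u) : Continuous (gradForm e ε ψ u) :=
    (contDiff_gradForm (m := 0) hψ hu (by norm_num)).continuous
  have h_box {u : V → ℝ} (hu : ContDiff ℝ 2 u) : Continuous (waveOp e ε u) :=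
    (contDiff_waveOp (m := 0) hu (by norm_num)).continuous
  obtain ⟨C, hC⟩ := hS.isCompact_closure.exists_bound_of_continuousOn
    (f := fun q => |waveOp e ε f q| + 2 * |gradForm e ε ψ f q|
      + (|gradForm e ε ψ ψ q| + |waveOp e ε ψ q|) * |f q|)
    (by have := h_form hψ; have := h_form hf; have := h_box hψ; have := h_box hf
        have := hf.continuous; fun_prop)
  refine ⟨max C 0, le_max_right _ _, fun l hl q hq => ?_⟩
  have hl₂ : l ≤ l ^ 2 := by nlinarith
  have hl₁ : 1 ≤ l ^ 2 := hl.trans hl₂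
  have hφ : 0 < expWeight l ψ q := expWeight_pos
  have h_factor : |waveOp e ε f q + 2 * l * gradForm e ε ψ f q
      + (l ^ 2 * gradForm e ε ψ ψ q + l * waveOp e ε ψ q) * f q| ≤ max C 0 * l ^ 2 :=
    calc _ ≤ |waveOp e ε f q| + 2 * l * |gradForm e ε ψ f q|
          + (l ^ 2 * |gradForm e ε ψ ψ q| + l * |waveOp e ε ψ q|) * |f q| := by
          refine (abs_add_three _ _ _).trans ?_
          rw [abs_mul, abs_mul (_ + _), abs_of_nonneg (by positivity : 0 ≤ 2 * l)]
          gcongr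
          refine (abs_add_le _ _).trans ?_
          rw [abs_mul, abs_mul, abs_of_nonneg (by positivity : 0 ≤ l ^ 2),
            abs_of_nonneg (by positivity : 0 ≤ l)]
      _ ≤ l ^ 2 * |waveOp e ε f q| + 2 * l ^ 2 * |gradForm e ε ψ f q|
          + (l ^ 2 * |gradForm e ε ψ ψ q| + l ^ 2 * |waveOp e ε ψ q|) * |f q| := by
          gcongr
          exact le_mul_of_one_le_left (abs_nonneg _) hl₁
      _ = (|waveOp e ε f q| + 2 * |gradForm e ε ψ f q|
          + (|gradForm e ε ψ ψ q| + |waveOp e ε ψ q|) * |f q|) * l ^ 2 := by ring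
      _ ≤ max C 0 * l ^ 2 := by
          gcongr
          exact (le_abs_self _).trans ((hC q (subset_closure hq)).trans (le_max_left _ _))
  rw [waveOp_expWeight_mul hψ hf, abs_mul, abs_of_pos hφ, mul_comm]
  gcongr

lemma exists_carleman_remainder_le (hψ : ContDiff ℝ 4 ψ) (hS : Bornology.IsBounded S) :
    ∃ M > 0, ∀ l ≥ 1, ∀ s ≥ 0, ∀ q ∈ S,
      |(α - 1) * s * l * waveOp e ε (expWeight l ψ * waveOp e ε ψ) q
        - s * l ^ 2 * waveOp e ε (expWeight l ψ * gradForm e ε ψ ψ) q|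
          ≤ 2 * (M * s * l ^ 4 * expWeight l ψ q) := by
  have hψ₂ : ContDiff ℝ 2 ψ := hψ.of_le (by norm_num)
  obtain ⟨C₁, hC₁, h_box⟩ := exists_abs_waveOp_expWeight_mul_le (e := e) (ε := ε) hψ₂
    (contDiff_waveOp (e := e) (ε := ε) hψ (by norm_num)) hS
  obtain ⟨C₂, hC₂, h_form⟩ := exists_abs_waveOp_expWeight_mul_le (e := e) (ε := ε) hψ₂
    (contDiff_gradForm (e := e) (ε := ε) hψ hψ (by norm_num)) hS
  refine ⟨|α - 1| * C₁ + C₂ + 1, by positivity, fun l hl s hs q hq => ?_⟩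
  have hφ : 0 < expWeight l ψ q := expWeight_pos
  have hl₃ : l ^ 3 ≤ l ^ 4 := pow_le_pow_right₀ hl (by norm_num)
  calc _ ≤ |α - 1| * s * l * (C₁ * l ^ 2 * expWeight l ψ q)
        + s * l ^ 2 * (C₂ * l ^ 2 * expWeight l ψ q) := by
        refine (abs_sub _ _).trans ?_
        simp only [abs_mul, abs_of_nonneg hs, abs_of_nonneg (zero_le_one.trans hl), abs_pow]
        gcongr
        exacts [h_box l hl q hq, h_form l hl q hq]
    _ = |α - 1| * C₁ * s * expWeight l ψ q * l ^ 3 + C₂ * s * expWeight l ψ q * l ^ 4 := by ring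
    _ ≤ |α - 1| * C₁ * s * expWeight l ψ q * l ^ 4 + C₂ * s * expWeight l ψ q * l ^ 4 := by gcongr
    _ ≤ _ := by
        have : 0 ≤ (|α - 1| * C₁ + C₂ + 2) * (s * expWeight l ψ q * l ^ 4) := by positivity
        linarith

theorem IsPseudoconvexOn.exists_le_integral_carlemanP₁_mul_carlemanP₂ [MeasurableSpace V]
    [BorelSpace V] {μ : Measure V} [μ.IsAddHaarMeasure] (h : IsPseudoconvexOn e ε ψ α κ l₀ S)
    (hψ : ContDiff ℝ 4 ψ) (hS : Bornology.IsBounded S) :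
    ∃ M > 0, ∀ l ≥ max l₀ 1, ∀ s > 0, ∀ w : V → ℝ,
      ContDiff ℝ 2 w → HasCompactSupport w → tsupport w ⊆ S →
      κ * (s * l * (∫ q, expWeight l ψ q * gradSq e w q ∂μ)
          + s ^ 3 * l ^ 3 * ∫ q, expWeight l ψ q ^ 3 * w q ^ 2 ∂μ)
        - M * s * l ^ 4 * (∫ q, expWeight l ψ q * w q ^ 2 ∂μ)
        ≤ ∫ q, carlemanP₁ e ε ψ s l w q * carlemanP₂ e ε ψ s l α w q ∂μ := by
  obtain ⟨M, hM, h_rem⟩ := exists_carleman_remainder_le (e := e) (ε := ε) (α := α) hψ hS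
  refine ⟨M, hM, fun l hl s hs w hw hwc hwS => ?_⟩
  obtain ⟨hl₀, hl₁⟩ := max_le_iff.1 hl
  have hψ₂ : ContDiff ℝ 2 ψ := hψ.of_le (by norm_num)
  have h_grad := integrable_expWeight_mul_gradSq (μ := μ) (e := e) (l := l) hψ.continuous
    (hw.of_le one_le_two) hwc
  have h_pow := integrable_expWeight_pow_mul_sq (μ := μ) (l := l) hψ.continuous hw.continuous hwc
  have h_one := h_pow 1
  simp only [pow_one] at h_one
  have h_pair : Integrable (fun q => s * l * (expWeight l ψ q * gradSq e w q)
      + s ^ 3 * l ^ 3 * (expWeight l ψ q ^ 3 * w q ^ 2)) μ :=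
    (h_grad.const_mul _).add ((h_pow 3).const_mul _)
  have h_pointwise (q : V) : κ * (s * l * (expWeight l ψ q * gradSq e w q)
        + s ^ 3 * l ^ 3 * (expWeight l ψ q ^ 3 * w q ^ 2))
      - M * s * l ^ 4 * (expWeight l ψ q * w q ^ 2)
      ≤ carlemanDensity e ε ψ s l α w q := by
    by_cases hq : q ∈ tsupport w
    · exact h.le_carlemanDensity (hwS hq) hl₀ (zero_le_one.trans hl₁) hs.le
        (h_rem l hl₁ s hs.le q (hwS hq))
    · simp [carlemanDensity, hessForm, gradSq_eq_zero hq, gradForm_eq_zero hq,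
        frameDeriv_eq_zero hq, image_eq_zero_of_notMem_tsupport hq]
  refine le_of_eq_of_le ?_
    ((integratesToZero_carlemanP₁_mul_carlemanP₂_sub_density hψ hw hwc).integral_le_of_le_sub
      (integrable_carlemanP₁_mul_carlemanP₂ hψ₂ hw hwc)
      ((h_pair.const_mul κ).sub (h_one.const_mul (M * s * l ^ 4)))
      fun q => (h_pointwise q).trans_eq (sub_sub_cancel _ _).symm)
  rw [integral_sub' (h_pair.const_mul κ) (h_one.const_mul _), integral_const_mul,
    integral_add (h_grad.const_mul _) ((h_pow 3).const_mul _), integral_const_mul,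
    integral_const_mul, integral_const_mul]

end Pseudoconvexity

lemma setIntegral_setIntegral_eq_integral_prod {X Y E : Type*} [MeasurableSpace X]
    [MeasurableSpace Y] [NormedAddCommGroup E] [NormedSpace ℝ E] {μ : Measure X} {ν : Measure Y}
    [SFinite μ] [SFinite ν] {A : Set X} {B : Set Y} {F : X × Y → E} (hF : Integrable F (μ.prod ν))
    (h_supp : ∀ q, q ∉ A ×ˢ B → F q = 0) :
    ∫ y in B, ∫ x in A, F (x, y) ∂μ ∂ν = ∫ q, F q ∂μ.prod ν := by
  rw [← setIntegral_eq_integral_of_forall_compl_eq_zero h_supp, ← Measure.prod_restrict,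
    integral_prod_symm F (by rw [Measure.prod_restrict]; exact hF.integrableOn)]

section SpaceTime

/-- The standard basis of space-time `ℝⁿ × ℝ`: `none` is the time direction and `some i` the `i`-th
space direction. -/
noncomputable def spaceTimeFrame (n : ℕ) : Option (Fin n) → EuclideanSpace ℝ (Fin n) × ℝ
  | none => (0, 1)
  | some i => (EuclideanSpace.single i 1, 0)

/-- The signature for which `waveOp` is `∂ₜ² - Δ`. -/
def lorentzSign (n : ℕ) : Option (Fin n) → ℝ
  | none => 1
  | some _ => -1

open Function (uncurry)

variable {n : ℕ} {u v : EuclideanSpace ℝ (Fin n) → ℝ → ℝ} {x : EuclideanSpace ℝ (Fin n)} {t : ℝ}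

lemma deriv_eq_frameDeriv (hu : Differentiable ℝ (uncurry u)) :
    deriv (u x) t = frameDeriv (spaceTimeFrame n) none (uncurry u) (x, t) :=
  ((hu (x, t)).hasFDerivAt.comp_hasDerivAt t
    ((hasDerivAt_const t x).prodMk (hasDerivAt_id t))).deriv

lemma fderiv_single_eq_frameDeriv (hu : Differentiable ℝ (uncurry u)) (i : Fin n) :
    fderiv ℝ (fun y => u y t) x (EuclideanSpace.single i 1) =
      frameDeriv (spaceTimeFrame n) (some i) (uncurry u) (x, t) := by
  have h_slice : HasFDerivAt (fun y => (y, t)) _ x := hasFDerivAt_prodMk_left (𝕜 := ℝ) x t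
  have h_chain := ((hu (x, t)).hasFDerivAt.comp x h_slice).fderiv
  exact DFunLike.congr_fun h_chain (EuclideanSpace.single i 1)

lemma deriv_deriv_eq_frameDeriv (hu : ContDiff ℝ 2 (uncurry u)) :
    deriv (deriv (u x)) t = frameDeriv (spaceTimeFrame n) none
      (frameDeriv (spaceTimeFrame n) none (uncurry u)) (x, t) := by
  have h_first : deriv (u x) =
      Function.curry (frameDeriv (spaceTimeFrame n) none (uncurry u)) x :=
    funext fun _ => deriv_eq_frameDeriv (hu.differentiable two_ne_zero)
  rw [h_first, deriv_eq_frameDeriv, Function.uncurry_curry]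
  exact (contDiff_frameDeriv (m := 1) hu (by norm_num)).differentiable one_ne_zero

lemma lap_eq_sum_frameDeriv (hu : ContDiff ℝ 2 (uncurry u)) :
    lap (fun y => u y t) x = ∑ i : Fin n, frameDeriv (spaceTimeFrame n) (some i)
      (frameDeriv (spaceTimeFrame n) (some i) (uncurry u)) (x, t) := by
  refine Finset.sum_congr rfl fun i _ => ?_
  have h_first : (fun y => fderiv ℝ (fun y => u y t) y (EuclideanSpace.single i 1)) =
      fun y => Function.curry (frameDeriv (spaceTimeFrame n) (some i) (uncurry u)) y t :=
    funext fun _ => fderiv_single_eq_frameDeriv (hu.differentiable two_ne_zero) i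
  rw [h_first, fderiv_single_eq_frameDeriv, Function.uncurry_curry]
  exact (contDiff_frameDeriv (m := 1) hu (by norm_num)).differentiable one_ne_zero

lemma inner_gradient_eq_sum_frameDeriv (hu : Differentiable ℝ (uncurry u))
    (hv : Differentiable ℝ (uncurry v)) :
    ⟪gradient (fun y => u y t) x, gradient (fun y => v y t) x⟫ =
      ∑ i : Fin n, frameDeriv (spaceTimeFrame n) (some i) (uncurry u) (x, t)
        * frameDeriv (spaceTimeFrame n) (some i) (uncurry v) (x, t) := by
  have h_coord {u : EuclideanSpace ℝ (Fin n) → ℝ → ℝ} (hu : Differentiable ℝ (uncurry u))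
      (i : Fin n) : gradient (fun y => u y t) x i =
        frameDeriv (spaceTimeFrame n) (some i) (uncurry u) (x, t) := by
    rw [← fderiv_single_eq_frameDeriv hu, ← inner_gradient_left,
      EuclideanSpace.inner_single_right]
    simp
  rw [PiLp.inner_apply]
  refine Finset.sum_congr rfl fun i _ => ?_
  rw [h_coord hu, h_coord hv, inner_apply, mul_comm]

lemma gradSq_spaceTime (hu : Differentiable ℝ (uncurry u)) :
    gradSq (spaceTimeFrame n) (uncurry u) (x, t) =
      deriv (u x) t ^ 2 + ‖gradient (fun y => u y t) x‖ ^ 2 := by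
  rw [← real_inner_self_eq_norm_sq, inner_gradient_eq_sum_frameDeriv hu hu, deriv_eq_frameDeriv hu,
    gradSq, Fintype.sum_option]
  simp only [sq]

lemma gradForm_spaceTime (hu : Differentiable ℝ (uncurry u)) (hv : Differentiable ℝ (uncurry v)) :
    gradForm (spaceTimeFrame n) (lorentzSign n) (uncurry u) (uncurry v) (x, t) =
      deriv (u x) t * deriv (v x) t
        - ⟪gradient (fun y => u y t) x, gradient (fun y => v y t) x⟫ := by
  rw [inner_gradient_eq_sum_frameDeriv hu hv, deriv_eq_frameDeriv hu, deriv_eq_frameDeriv hv,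
    gradForm, Fintype.sum_option]
  simp [lorentzSign, sub_eq_add_neg]

lemma waveOp_spaceTime (hu : ContDiff ℝ 2 (uncurry u)) :
    waveOp (spaceTimeFrame n) (lorentzSign n) (uncurry u) (x, t) =
      deriv (deriv (u x)) t - lap (fun y => u y t) x := by
  rw [deriv_deriv_eq_frameDeriv hu, lap_eq_sum_frameDeriv hu, waveOp, Fintype.sum_option]
  simp [lorentzSign, sub_eq_add_neg]

end SpaceTime

section QuadraticWeight

open Function (uncurry)

variable {n : ℕ} {x₀ : EuclideanSpace ℝ (Fin n)} {β C₀ : ℝ}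

lemma contDiff_uncurry_psi {k : WithTop ℕ∞} : ContDiff ℝ k (uncurry (psi x₀ β C₀)) :=
  ((ContDiff.norm_sq ℝ (contDiff_fst.sub contDiff_const)).sub
    (contDiff_const.mul (contDiff_snd.pow 2))).add contDiff_const

lemma P1_eq_carlemanP₁ {s l : ℝ} {w : EuclideanSpace ℝ (Fin n) → ℝ → ℝ}
    (hw : ContDiff ℝ 2 (uncurry w)) (q : EuclideanSpace ℝ (Fin n) × ℝ) :
    P1 x₀ β C₀ s l w q.1 q.2 = carlemanP₁ (spaceTimeFrame n) (lorentzSign n)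
      (uncurry (psi x₀ β C₀)) s l (uncurry w) q := by
  have hψ : Differentiable ℝ (uncurry (psi x₀ β C₀)) :=
    contDiff_uncurry_psi.differentiable one_ne_zero
  rw [carlemanP₁, waveOp_spaceTime hw, gradForm_spaceTime hψ hψ, real_inner_self_eq_norm_sq, ← sq]
  rfl

lemma P2_eq_carlemanP₂ {s l α : ℝ} {w : EuclideanSpace ℝ (Fin n) → ℝ → ℝ}
    (hw : Differentiable ℝ (uncurry w)) (q : EuclideanSpace ℝ (Fin n) × ℝ) :
    P2 x₀ β C₀ s l α w q.1 q.2 = carlemanP₂ (spaceTimeFrame n) (lorentzSign n)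
      (uncurry (psi x₀ β C₀)) s l α (uncurry w) q := by
  have hψ : Differentiable ℝ (uncurry (psi x₀ β C₀)) :=
    contDiff_uncurry_psi.differentiable one_ne_zero
  rw [carlemanP₂, waveOp_spaceTime contDiff_uncurry_psi, gradForm_spaceTime hψ hψ,
    gradForm_spaceTime hw hψ, real_inner_self_eq_norm_sq, ← sq]
  rfl

lemma fderiv_uncurry_psi (q v : EuclideanSpace ℝ (Fin n) × ℝ) :
    fderiv ℝ (uncurry (psi x₀ β C₀)) q v = 2 * ⟪q.1 - x₀, v.1⟫ - 2 * β * q.2 * v.2 := by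
  have h_deriv := (((hasFDerivAt_fst (𝕜 := ℝ) (p := q)).sub_const x₀).norm_sq.sub
    ((hasFDerivAt_snd.pow 2).const_mul β)).add_const C₀
  have h_fderiv : fderiv ℝ (uncurry (psi x₀ β C₀)) q = _ := h_deriv.fderiv
  rw [h_fderiv]
  simp only [map_sub, ContinuousLinearMap.sub_comp, Nat.add_one_sub_one, pow_one, nsmul_eq_mul,
    Nat.cast_ofNat, sub_apply, smul_apply, ContinuousLinearMap.comp_apply,
    ContinuousLinearMap.coe_fst', coe_innerSL_apply, ContinuousLinearMap.coe_snd', smul_eq_mul,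
    inner_sub_left]
  ring

lemma frameDeriv_psi (i : Option (Fin n)) :
    frameDeriv (spaceTimeFrame n) i (uncurry (psi x₀ β C₀)) = fun q =>
      i.elim (-2 * β * q.2) (fun i => 2 * (q.1 - x₀) i) := by
  funext q
  rw [frameDeriv, fderiv_uncurry_psi]
  cases i <;> simp [spaceTimeFrame, EuclideanSpace.inner_single_right]

lemma frameDeriv_frameDeriv_psi (i j : Option (Fin n)) (q : EuclideanSpace ℝ (Fin n) × ℝ) :
    frameDeriv (spaceTimeFrame n) i (frameDeriv (spaceTimeFrame n) j (uncurry (psi x₀ β C₀))) q =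
      if i = j then i.elim (-2 * β) (fun _ => 2) else 0 := by
  have h_affine : frameDeriv (spaceTimeFrame n) j (uncurry (psi x₀ β C₀)) = fun q =>
      2 * ⟪q.1 - x₀, (spaceTimeFrame n j).1⟫ - 2 * β * q.2 * (spaceTimeFrame n j).2 :=
    funext fun q => fderiv_uncurry_psi q _
  have h_deriv := ((((hasFDerivAt_fst (𝕜 := ℝ) (p := q)).sub_const x₀).inner ℝ
    (hasFDerivAt_const (spaceTimeFrame n j).1 q)).const_mul 2).sub
    ((hasFDerivAt_snd.const_mul (2 * β)).mul_const (spaceTimeFrame n j).2)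
  rw [h_affine]
  refine (DFunLike.congr_fun h_deriv.fderiv (spaceTimeFrame n i)).trans ?_
  rcases i with _ | i <;> rcases j with _ | j <;>
    simp [spaceTimeFrame, EuclideanSpace.inner_single_left, eq_comm]

lemma waveOp_psi (q : EuclideanSpace ℝ (Fin n) × ℝ) :
    waveOp (spaceTimeFrame n) (lorentzSign n) (uncurry (psi x₀ β C₀)) q = -2 * (β + n) := by
  simp only [waveOp, Fintype.sum_option, frameDeriv_frameDeriv_psi, lorentzSign]
  simp only [if_true, Option.elim_none, Option.elim_some, Finset.sum_const, Finset.card_univ,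
    Fintype.card_fin, nsmul_eq_mul]
  ring

lemma hessForm_psi (q : EuclideanSpace ℝ (Fin n) × ℝ) (ξ : Option (Fin n) → ℝ) :
    hessForm (spaceTimeFrame n) (lorentzSign n) (uncurry (psi x₀ β C₀)) q ξ =
      -2 * β * ξ none ^ 2 + 2 * ∑ i, ξ (some i) ^ 2 := by
  simp only [hessForm, frameDeriv_frameDeriv_psi, mul_ite, mul_zero, Finset.sum_ite_eq,
    Finset.mem_univ, if_true, Fintype.sum_option, lorentzSign, Finset.mul_sum]
  congr 1
  · simp only [Option.elim_none]
    ring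
  · exact Finset.sum_congr rfl fun i _ => by simp only [Option.elim_some]; ring

lemma sum_frameDeriv_some_psi_sq (q : EuclideanSpace ℝ (Fin n) × ℝ) :
    ∑ i, frameDeriv (spaceTimeFrame n) (some i) (uncurry (psi x₀ β C₀)) q ^ 2 =
      4 * ‖q.1 - x₀‖ ^ 2 := by
  simp only [frameDeriv_psi, Option.elim, EuclideanSpace.real_norm_sq_eq, Finset.mul_sum]
  exact Finset.sum_congr rfl fun i _ => by ring

lemma gradForm_psi (q : EuclideanSpace ℝ (Fin n) × ℝ) :
    gradForm (spaceTimeFrame n) (lorentzSign n) (uncurry (psi x₀ β C₀)) (uncurry (psi x₀ β C₀)) q =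
      4 * β ^ 2 * q.2 ^ 2 - 4 * ‖q.1 - x₀‖ ^ 2 := by
  rw [← sum_frameDeriv_some_psi_sq (β := β) (C₀ := C₀), gradForm, Fintype.sum_option]
  simp only [lorentzSign, frameDeriv_psi, Option.elim_none, Option.elim_some, neg_mul, one_mul,
    Finset.sum_neg_distrib, sq]
  ring

lemma zeroOrder_psi {α : ℝ} (q : EuclideanSpace ℝ (Fin n) × ℝ) :
    2 * hessForm (spaceTimeFrame n) (lorentzSign n) (uncurry (psi x₀ β C₀)) q
          (frameDeriv (spaceTimeFrame n) · (uncurry (psi x₀ β C₀)) q)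
        + α * waveOp (spaceTimeFrame n) (lorentzSign n) (uncurry (psi x₀ β C₀)) q
          * gradForm (spaceTimeFrame n) (lorentzSign n) (uncurry (psi x₀ β C₀))
            (uncurry (psi x₀ β C₀)) q
      = 16 * (1 - β) * ‖q.1 - x₀‖ ^ 2 - (2 * α * (β + n) + 4 * β)
          * gradForm (spaceTimeFrame n) (lorentzSign n) (uncurry (psi x₀ β C₀))
            (uncurry (psi x₀ β C₀)) q := by
  rw [gradForm_psi, waveOp_psi, hessForm_psi, sum_frameDeriv_some_psi_sq, frameDeriv_psi]
  simp only [Option.elim]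
  ring

lemma exists_isPseudoconvexOn_psi {α d : ℝ} {S : Set (EuclideanSpace ℝ (Fin n) × ℝ)}
    (hα₁ : 2 * β < α * (β + n)) (hα₂ : α * (β + n) < 2) (hd : 0 < d)
    (hS : ∀ q ∈ S, d ≤ ‖q.1 - x₀‖) :
    ∃ κ > 0, ∃ l₀, IsPseudoconvexOn (spaceTimeFrame n) (lorentzSign n) (uncurry (psi x₀ β C₀))
      α κ l₀ S := by
  set δ := 8 * (1 - β) * d ^ 2
  have hδ : 0 < δ := mul_pos (by linarith) (by positivity)
  set c := 2 * α * (β + n) + 4 * β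
  set κ := min (min (2 * α * (β + n) - 4 * β) (4 - 2 * α * (β + n))) δ
  have hκ_time : κ ≤ 2 * α * (β + n) - 4 * β := (min_le_left _ _).trans (min_le_left _ _)
  have hκ_space : κ ≤ 4 - 2 * α * (β + n) := (min_le_left _ _).trans (min_le_right _ _)
  have hκ_δ : κ ≤ δ := min_le_right _ _
  refine ⟨κ, lt_min (lt_min (by linarith) (by linarith)) hδ, c ^ 2 / (8 * δ), ⟨?_, ?_⟩⟩
  · intro q _ ξ
    have h_time := mul_le_mul_of_nonneg_right hκ_time (sq_nonneg (ξ none))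
    have h_space := mul_le_mul_of_nonneg_right hκ_space
      (Finset.sum_nonneg fun i (_ : i ∈ Finset.univ) => sq_nonneg (ξ (some i)))
    rw [hessForm_psi, waveOp_psi, Fintype.sum_option, Fintype.sum_option]
    simp only [lorentzSign, neg_mul, one_mul, Finset.sum_neg_distrib, ← sq]
    linarith
  · intro q hq
    have h_dist : 2 * δ ≤ 16 * (1 - β) * ‖q.1 - x₀‖ ^ 2 := by
      have : d ^ 2 ≤ ‖q.1 - x₀‖ ^ 2 := pow_le_pow_left₀ hd.le (hS q hq) 2
      nlinarith
    set D := gradForm (spaceTimeFrame n) (lorentzSign n) (uncurry (psi x₀ β C₀))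
      (uncurry (psi x₀ β C₀)) q
    -- `c ^ 2 / (8 * δ)` is the `l₀` at which `2 * l₀ * D ^ 2 - c * D + δ` becomes a perfect square.
    have h_square : 0 ≤ 2 * (c ^ 2 / (8 * δ)) * D ^ 2 - c * D + δ := by
      have : 2 * (c ^ 2 / (8 * δ)) * D ^ 2 - c * D + δ = (c * D - 2 * δ) ^ 2 / (4 * δ) := by
        field_simp
        ring
      rw [this]
      positivity
    have h_eq := zeroOrder_psi (x₀ := x₀) (β := β) (C₀ := C₀) (α := α) q
    linarith

end QuadraticWeight

section SpaceTimeIntegral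

open Function (uncurry)

variable {n : ℕ} {x₀ : EuclideanSpace ℝ (Fin n)} {β C₀ s l α : ℝ}
  {w : EuclideanSpace ℝ (Fin n) → ℝ → ℝ} {A : Set (EuclideanSpace ℝ (Fin n))} {B : Set ℝ}

lemma setIntegral_setIntegral_phi_pow_mul_sq (hw : Continuous (uncurry w))
    (hwc : HasCompactSupport (uncurry w)) (hwS : tsupport (uncurry w) ⊆ A ×ˢ B) (k : ℕ) :
    ∫ t in B, ∫ x in A, phi x₀ β C₀ l x t ^ k * w x t ^ 2 =
      ∫ q, expWeight l (uncurry (psi x₀ β C₀)) q ^ k * uncurry w q ^ 2 :=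
  setIntegral_setIntegral_eq_integral_prod
    (integrable_expWeight_pow_mul_sq (contDiff_uncurry_psi (k := 0)).continuous hw hwc k)
    fun q hq => by simp [image_eq_zero_of_notMem_tsupport fun h => hq (hwS h)]

lemma setIntegral_setIntegral_phi_mul_gradient_sq (hw : ContDiff ℝ 1 (uncurry w))
    (hwc : HasCompactSupport (uncurry w)) (hwS : tsupport (uncurry w) ⊆ A ×ˢ B) :
    ∫ t in B, ∫ x in A, phi x₀ β C₀ l x t *
        (deriv (w x) t ^ 2 + ‖gradient (fun y => w y t) x‖ ^ 2) =
      ∫ q, expWeight l (uncurry (psi x₀ β C₀)) q * gradSq (spaceTimeFrame n) (uncurry w) q := by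
  simp only [← gradSq_spaceTime (hw.differentiable one_ne_zero)]
  exact setIntegral_setIntegral_eq_integral_prod
    (integrable_expWeight_mul_gradSq (contDiff_uncurry_psi (k := 0)).continuous hw hwc)
    fun q hq => by simp [gradSq_eq_zero fun h => hq (hwS h)]

lemma setIntegral_setIntegral_P1_mul_P2 (hw : ContDiff ℝ 2 (uncurry w))
    (hwc : HasCompactSupport (uncurry w)) (hwS : tsupport (uncurry w) ⊆ A ×ˢ B) :
    ∫ t in B, ∫ x in A, P1 x₀ β C₀ s l w x t * P2 x₀ β C₀ s l α w x t =
      ∫ q, carlemanP₁ (spaceTimeFrame n) (lorentzSign n) (uncurry (psi x₀ β C₀)) s l (uncurry w) q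
        * carlemanP₂ (spaceTimeFrame n) (lorentzSign n) (uncurry (psi x₀ β C₀)) s l α
          (uncurry w) q := by
  simp only [P1_eq_carlemanP₁ hw (_, _), P2_eq_carlemanP₂ (hw.differentiable two_ne_zero) (_, _)]
  exact setIntegral_setIntegral_eq_integral_prod
    (integrable_carlemanP₁_mul_carlemanP₂ contDiff_uncurry_psi hw hwc)
    fun q hq => by simp [carlemanP₁_eq_zero fun h => hq (hwS h)]

end SpaceTimeIntegral

theorem cross_term_lower_bound_general
    (n : ℕ) (Ω : Set (EuclideanSpace ℝ (Fin n))) (hΩ : Bornology.IsBounded Ω) (T : ℝ)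
    (x₀ : EuclideanSpace ℝ (Fin n)) (hx₀ : x₀ ∉ closure Ω) (β C₀ α : ℝ)
    (hα₁ : 2 * β < α * (β + n)) (hα₂ : α * (β + n) < 2) :
    ∃ l₀ > (0 : ℝ), ∃ κ > (0 : ℝ), ∃ M > (0 : ℝ), ∀ l ≥ l₀, ∀ s > (0 : ℝ),
      ∀ w : EuclideanSpace ℝ (Fin n) → ℝ → ℝ,
        ContDiff ℝ 2 (fun q : EuclideanSpace ℝ (Fin n) × ℝ => w q.1 q.2) →
        (∃ K : Set (EuclideanSpace ℝ (Fin n) × ℝ), IsCompact K ∧ K ⊆ Ω ×ˢ Set.Ioo (-T) T ∧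
          ∀ x t, (x, t) ∉ K → w x t = 0) →
        κ * (s * l * (∫ t in Set.Ioo (-T) T, ∫ x in Ω,
                phi x₀ β C₀ l x t *
                  ((deriv (w x) t) ^ 2 + ‖gradient (fun y => w y t) x‖ ^ 2))
              + s ^ 3 * l ^ 3 * (∫ t in Set.Ioo (-T) T, ∫ x in Ω,
                (phi x₀ β C₀ l x t) ^ 3 * (w x t) ^ 2))
            - M * s * l ^ 4 * (∫ t in Set.Ioo (-T) T, ∫ x in Ω,
                phi x₀ β C₀ l x t * (w x t) ^ 2)
          ≤ ∫ t in Set.Ioo (-T) T, ∫ x in Ω,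
              P1 x₀ β C₀ s l w x t * P2 x₀ β C₀ s l α w x t := by
  obtain ⟨d, hd, h_dist⟩ : ∃ d > 0, ∀ x ∈ Ω, d ≤ ‖x - x₀‖ := by
    simpa [Metric.mem_closure_iff, dist_eq_norm'] using hx₀
  obtain ⟨κ, hκ, l₀, h_psi⟩ := exists_isPseudoconvexOn_psi (C₀ := C₀)
    (S := Ω ×ˢ Set.Ioo (-T) T) hα₁ hα₂ hd fun q hq => h_dist q.1 hq.1
  obtain ⟨M, hM, h_bound⟩ := h_psi.exists_le_integral_carlemanP₁_mul_carlemanP₂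
    (μ := (volume : Measure (EuclideanSpace ℝ (Fin n))).prod volume)
    contDiff_uncurry_psi (hΩ.prod (Metric.isBounded_Ioo _ _))
  refine ⟨max l₀ 1, lt_max_of_lt_right one_pos, κ, hκ, M, hM, ?_⟩
  rintro l hl s hs w hw ⟨K, hK, hKΩ, hwK⟩
  have hwK' : ∀ q ∉ K, Function.uncurry w q = 0 := fun q => hwK q.1 q.2
  have hwc : HasCompactSupport (Function.uncurry w) := .intro hK hwK'
  have hwΩ : tsupport (Function.uncurry w) ⊆ Ω ×ˢ Set.Ioo (-T) T :=
    (closure_minimal (Function.support_subset_iff'.2 hwK') hK.isClosed).trans hKΩ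
  have h_one := setIntegral_setIntegral_phi_pow_mul_sq (x₀ := x₀) (β := β) (C₀ := C₀) (l := l)
    hw.continuous hwc hwΩ 1
  simp only [pow_one] at h_one
  rw [setIntegral_setIntegral_phi_mul_gradient_sq (hw.of_le one_le_two) hwc hwΩ,
    setIntegral_setIntegral_phi_pow_mul_sq hw.continuous hwc hwΩ, h_one,
    setIntegral_setIntegral_P1_mul_P2 hw hwc hwΩ]
  exact h_bound l hl s hs (Function.uncurry w) hw hwc hwΩ

/-- **Lower bound for the cross term** `∫∫ P₁w P₂w` (Steps 1–2 of the proof of Theorem 2.1),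
for smooth `w` compactly supported in `Ω × (-T,T)`. -/
theorem cross_term_lower_bound
    (n : ℕ) (hn : 1 ≤ n)
    (Ω : Set (EuclideanSpace ℝ (Fin n))) (hΩo : IsOpen Ω) (hΩb : Bornology.IsBounded Ω)
    (T : ℝ) (hT : 0 < T)
    (x₀ : EuclideanSpace ℝ (Fin n)) (hx₀ : x₀ ∉ closure Ω)
    (β : ℝ) (hβ : β ∈ Set.Ioo (0:ℝ) 1) (C₀ : ℝ) (hC₀ : 0 < C₀)
    (hψ : ∀ x ∈ Ω, ∀ t ∈ Set.Ioo (-T) T, 1 ≤ psi x₀ β C₀ x t)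
    (α : ℝ) (hα₁ : 2 * β / (β + n) < α) (hα₂ : α < 2 / (β + n)) :
    ∃ l₀ > (0:ℝ), ∃ κ > (0:ℝ), ∃ M > (0:ℝ), ∀ l ≥ l₀, ∀ s > (0:ℝ),
      ∀ w : EuclideanSpace ℝ (Fin n) → ℝ → ℝ,
        ContDiff ℝ (⊤ : ℕ∞) (fun q : EuclideanSpace ℝ (Fin n) × ℝ => w q.1 q.2) →
        (∃ K : Set (EuclideanSpace ℝ (Fin n) × ℝ), IsCompact K ∧ K ⊆ Ω ×ˢ Set.Ioo (-T) T ∧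
          ∀ x t, (x, t) ∉ K → w x t = 0) →
        κ * (s * l * (∫ t in Set.Ioo (-T) T, ∫ x in Ω,
                phi x₀ β C₀ l x t *
                  ((deriv (w x) t) ^ 2 + ‖gradient (fun y => w y t) x‖ ^ 2))
              + s ^ 3 * l ^ 3 * (∫ t in Set.Ioo (-T) T, ∫ x in Ω,
                (phi x₀ β C₀ l x t) ^ 3 * (w x t) ^ 2))
            - M * s * l ^ 4 * (∫ t in Set.Ioo (-T) T, ∫ x in Ω,
                phi x₀ β C₀ l x t * (w x t) ^ 2)
          ≤ ∫ t in Set.Ioo (-T) T, ∫ x in Ω,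
              P1 x₀ β C₀ s l w x t * P2 x₀ β C₀ s l α w x t := by
  have hβn : 0 < β + n := add_pos_of_pos_of_nonneg hβ.1 n.cast_nonneg
  obtain ⟨l₀, hl₀, κ, hκ, M, hM, h⟩ := cross_term_lower_bound_general n Ω hΩb T x₀ hx₀ β C₀ α
    ((div_lt_iff₀ hβn).1 hα₁) ((lt_div_iff₀ hβn).1 hα₂)
  exact ⟨l₀, hl₀, κ, hκ, M, hM, fun l hl s hs w hw => h l hl s hs w (hw.of_le (by norm_cast))⟩
end

section
/- Let n ≥ 1 be an integer, Ω ⊂ ℝⁿ a bounded open set, T > 0, x₀ ∈ ℝⁿ \ cl(Ω), β ∈ (0,1), and C₀ > 0 such that ψ ≥ 1 on Ω × (−T,T), where ψ(x,t) = |x−x₀|² − βt² + C₀; for λ > 0 set φ = e^{λψ} and □v = ∂ₜ²v − Δv. Define P₁w = ∂ₜ²w − Δw + s²λ²φ²(|∂ₜψ|² − |∇ψ|²)w. Then there exist λ₀ > 0, s₀ > 0 and M > 0 such that for all s ≥ s₀, all λ ≥ λ₀, and every smooth function v : ℝⁿ × ℝ → ℝ with compact support contained in Ω × (−T,T): sλ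 ∫∫_{Ω×(−T,T)} φ e^{2sφ} (|∂ₜv|² + |∇v|²) dx dt + s³λ³ ∫∫ φ³ e^{2sφ} |v|² dx dt + ∫∫ |P₁(e^{sφ}v)|² dx dt ≤ M ∫∫ e^{2sφ} |□v|² dx dt. -/
open MeasureTheory Real Set
open scoped RealInnerProductSpace

/-!
With signs `ε`, the operator `□ = ∑ᵢ εᵢ ∂ᵢ²` has the carré du champ `Γ(f, g) = ∑ᵢ εᵢ ∂ᵢf ∂ᵢg`.
For `φ = e^{lψ}` and `w = e^{sφ}v`, conjugation gives
`e^{sφ} □v = Pw - slφ (2Γ(ψ, w) + Aw) + 2μslφw` with `A = lΓ(ψ, ψ) + □ψ + 2μ`.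
Expanding the square, `|Pw|²` is controlled by `e^{2sφ}|□v|²` and the cross term
`2slφ Pw (2Γ(ψ, w) + Aw)`. Up to a divergence, the cross term is `-2sl` times
`2φ (Hess ψ + μΓ)(∇w, ∇w) + s²l²φ³w² (2lΓ(ψ, ψ)² - 2μΓ(ψ, ψ) + 2 Hess ψ(∇ψ, ∇ψ))`, the
nonnegative term `2lφ Γ(ψ, w)²` and a term of lower order. If `Hess ψ + μΓ ≥ κ > 0` and `∇ψ`
does not vanish, both displayed terms are positive once `l` is large (if `Γ(ψ, ψ)` is small, the
Hessian gives positivity, otherwise the factor `l` does), and large `s` absorbs the rest.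
For the wave operator and `ψ = |x - x₀|² - βt² + C₀` the convexity condition holds with
`μ = 1 + β` and `κ = 1 - β`.
-/

namespace Carleman

/-- The exponential `e^{cψ}`: the weight `φ` is `expWeight l ψ`, and `e^{sφ}` is
`expWeight s φ`. -/
noncomputable def expWeight {α : Type*} (c : ℝ) (ψ : α → ℝ) (p : α) : ℝ :=
  Real.exp (c * ψ p)

lemma expWeight_pos {α : Type*} (c : ℝ) (ψ : α → ℝ) (p : α) : 0 < expWeight c ψ p :=
  Real.exp_pos _

lemma expWeight_two_mul {α : Type*} (c : ℝ) (ψ : α → ℝ) (p : α) :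
    expWeight (2 * c) ψ p = expWeight c ψ p ^ 2 := by
  rw [expWeight, expWeight, ← Real.exp_nat_mul, Nat.cast_ofNat, mul_assoc]

lemma le_expWeight {α : Type*} {c : ℝ} {ψ : α → ℝ} {p : α} (hc : 0 ≤ c) (hψp : 1 ≤ ψ p) :
    c ≤ expWeight c ψ p := by
  have hcψ : c ≤ c * ψ p := le_mul_of_one_le_right hc hψp
  have hexp : c * ψ p + 1 ≤ expWeight c ψ p := Real.add_one_le_exp (c * ψ p)
  linarith

lemma integrable_expWeight_mul_sq {X : Type*} [TopologicalSpace X] [MeasurableSpace X]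
    [OpensMeasurableSpace X] {ν : Measure X} [IsFiniteMeasureOnCompacts ν] {ψ v : X → ℝ}
    {s l : ℝ} (hψ : Continuous ψ) (hv : Continuous v) (hvc : HasCompactSupport v) :
    Integrable
      (fun p => expWeight l ψ p ^ 3 * expWeight (2 * s) (expWeight l ψ) p * v p ^ 2) ν := by
  have hφ : Continuous (expWeight l ψ) := (hψ.const_mul l).rexp
  refine Continuous.integrable_of_hasCompactSupport
    (((hφ.pow 3).mul (hφ.const_mul (2 * s)).rexp).mul (hv.pow 2)) ?_
  exact HasCompactSupport.mul_left (hvc.comp_left (zero_pow two_ne_zero))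

lemma hasDerivAt_exp_const_mul (c x : ℝ) :
    HasDerivAt (fun y => Real.exp (c * y)) (c * Real.exp (c * x)) x := by
  simpa [mul_comm] using ((hasDerivAt_id x).const_mul c).exp

variable {E : Type*} [NormedAddCommGroup E] [NormedSpace ℝ E] {ι : Type*}
  {ε : ι → ℝ} {e : ι → E} {f g h : E → ℝ} {p : E} {k m : WithTop ℕ∞}

/-- The derivative of `f` at `p` along the `i`-th vector of the family `e`. -/
noncomputable def pderiv (e : ι → E) (i : ι) (f : E → ℝ) (p : E) : ℝ :=
  fderiv ℝ f p (e i)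

lemma pderiv_add (hf : DifferentiableAt ℝ f p) (hg : DifferentiableAt ℝ g p) (i : ι) :
    pderiv e i (fun q => f q + g q) p = pderiv e i f p + pderiv e i g p := by
  simp only [pderiv, fderiv_fun_add hf hg, add_apply]

lemma pderiv_mul (hf : DifferentiableAt ℝ f p) (hg : DifferentiableAt ℝ g p) (i : ι) :
    pderiv e i (fun q => f q * g q) p = f p * pderiv e i g p + g p * pderiv e i f p := by
  simp only [pderiv, fderiv_fun_mul hf hg, add_apply, smul_apply, smul_eq_mul]

lemma pderiv_const_mul (hf : DifferentiableAt ℝ f p) (c : ℝ) (i : ι) :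
    pderiv e i (fun q => c * f q) p = c * pderiv e i f p := by
  simp only [pderiv, fderiv_const_mul hf, smul_apply, smul_eq_mul]

lemma pderiv_sum {κ : Type*} [Fintype κ] {F : κ → E → ℝ}
    (hF : ∀ j, DifferentiableAt ℝ (F j) p) (i : ι) :
    pderiv e i (fun q => ∑ j, F j q) p = ∑ j, pderiv e i (F j) p := by
  simp only [pderiv, fderiv_fun_sum fun j _ => hF j, sum_apply]

lemma pderiv_comp {χ : ℝ → ℝ} {c : ℝ} (hχ : HasDerivAt χ c (f p))
    (hf : DifferentiableAt ℝ f p) (i : ι) :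
    pderiv e i (fun q => χ (f q)) p = c * pderiv e i f p := by
  have hcomp : HasFDerivAt (fun q => χ (f q)) (c • fderiv ℝ f p) p :=
    hχ.comp_hasFDerivAt p hf.hasFDerivAt
  simp only [pderiv, hcomp.fderiv, smul_apply, smul_eq_mul]

lemma pderiv_expWeight (hf : DifferentiableAt ℝ f p) (c : ℝ) (i : ι) :
    pderiv e i (expWeight c f) p = c * expWeight c f p * pderiv e i f p :=
  pderiv_comp (hasDerivAt_exp_const_mul c (f p)) hf i

lemma pderiv_comm (hf : ContDiff ℝ 2 f) (i j : ι) (p : E) :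
    pderiv e i (pderiv e j f) p = pderiv e j (pderiv e i f) p := by
  have hdiff : DifferentiableAt ℝ (fderiv ℝ f) p :=
    (hf.fderiv_right one_add_one_eq_two.le).differentiable one_ne_zero p
  have hsecond (i j : ι) :
      pderiv e i (pderiv e j f) p = fderiv ℝ (fderiv ℝ f) p (e i) (e j) := by
    change fderiv ℝ (fun q => fderiv ℝ f q (e j)) p (e i) = _
    simp [fderiv_clm_apply hdiff (differentiableAt_const (e j))]
  rw [hsecond, hsecond]
  exact hf.contDiffAt.isSymmSndFDerivAt minSmoothness_of_isRCLikeNormedField.le (e i) (e j)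

lemma contDiff_expWeight (hf : ContDiff ℝ k f) (c : ℝ) : ContDiff ℝ k (expWeight c f) :=
  (contDiff_const.mul hf).exp

lemma contDiff_pderiv (hf : ContDiff ℝ k f) (hmk : m + 1 ≤ k) (i : ι) :
    ContDiff ℝ m (pderiv e i f) :=
  (hf.fderiv_right hmk).clm_apply contDiff_const

lemma differentiable_pderiv (hf : ContDiff ℝ 2 f) (i : ι) :
    Differentiable ℝ (pderiv e i f) :=
  (contDiff_pderiv hf one_add_one_eq_two.le i).differentiable one_ne_zero

lemma hasCompactSupport_pderiv (hf : HasCompactSupport f) (i : ι) :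
    HasCompactSupport (pderiv e i f) :=
  hf.fderiv_apply ℝ (e i)

lemma pderiv_of_notMem_tsupport (hp : p ∉ tsupport f) {i : ι} : pderiv e i f p = 0 := by
  rw [pderiv, fderiv_of_notMem_tsupport ℝ hp, zero_apply]

lemma integral_mul_pderiv_add [FiniteDimensional ℝ E] [MeasurableSpace E] [BorelSpace E]
    {ν : Measure E} [ν.IsAddHaarMeasure] (hf : ContDiff ℝ 1 f) (hfc : HasCompactSupport f)
    (hg : ContDiff ℝ 1 g) (i : ι) :
    Integrable (fun p => f p * pderiv e i g p + pderiv e i f p * g p) ν ∧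
      ∫ p, (f p * pderiv e i g p + pderiv e i f p * g p) ∂ν = 0 := by
  have hfi : Continuous (pderiv e i f) := (contDiff_pderiv (m := 0) hf (zero_add 1).le i).continuous
  have hgi : Continuous (pderiv e i g) := (contDiff_pderiv (m := 0) hg (zero_add 1).le i).continuous
  have hfgi : Integrable (fun p => f p * pderiv e i g p) ν :=
    (hf.continuous.mul hgi).integrable_of_hasCompactSupport hfc.mul_right
  have hfig : Integrable (fun p => pderiv e i f p * g p) ν :=
    (hfi.mul hg.continuous).integrable_of_hasCompactSupport
      (hasCompactSupport_pderiv hfc i).mul_right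
  have hfg : Integrable (fun p => f p * g p) ν :=
    (hf.continuous.mul hg.continuous).integrable_of_hasCompactSupport hfc.mul_right
  refine ⟨hfgi.add hfig, ?_⟩
  have hparts : ∫ p, f p * pderiv e i g p ∂ν = -∫ p, pderiv e i f p * g p ∂ν :=
    integral_mul_fderiv_eq_neg_fderiv_mul_of_integrable hfig hfgi hfg
      (fun p _ => hf.differentiable one_ne_zero p) fun p _ => hg.differentiable one_ne_zero p
  rw [integral_add hfgi hfig, hparts, neg_add_cancel]

variable [Fintype ι]

/-- The constant-coefficient operator `□ = ∑ᵢ εᵢ ∂ᵢ²`; signs `ε` give the wave operator. -/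
noncomputable def box (ε : ι → ℝ) (e : ι → E) (f : E → ℝ) (p : E) : ℝ :=
  ∑ i, ε i * pderiv e i (pderiv e i f) p

/-- The carré du champ `Γ(f, g) = ∑ᵢ εᵢ ∂ᵢf ∂ᵢg` of `box ε e`. -/
noncomputable def gradForm (ε : ι → ℝ) (e : ι → E) (f g : E → ℝ) (p : E) : ℝ :=
  ∑ i, ε i * pderiv e i f p * pderiv e i g p

/-- The squared length `∑ᵢ (∂ᵢf)²` of the gradient, which does not involve the signs `ε`. -/
noncomputable def gradSq (e : ι → E) (f : E → ℝ) (p : E) : ℝ :=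
  ∑ i, pderiv e i f p ^ 2

/-- The Hessian of `ψ` at `p`, as a quadratic form on covectors `ξ` raised to vectors by `ε`. -/
noncomputable def hessForm (ε : ι → ℝ) (e : ι → E) (ψ : E → ℝ) (p : E) (ξ : ι → ℝ) : ℝ :=
  ∑ i, ∑ j, ε i * ε j * pderiv e i (pderiv e j ψ) p * ξ i * ξ j

/-- The divergence of the vector field `f ∇g`, where `∇g` is raised by `ε`. -/
noncomputable def divGrad (ε : ι → ℝ) (e : ι → E) (f g : E → ℝ) (p : E) : ℝ :=
  f p * box ε e g p + gradForm ε e f g p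

local notation "Γ" => gradForm ε e
local notation "□" => box ε e

lemma gradForm_comm (f g : E → ℝ) (p : E) : Γ f g p = Γ g f p :=
  Finset.sum_congr rfl fun _ _ => by ring

lemma gradForm_mul_left (hf : DifferentiableAt ℝ f p) (hg : DifferentiableAt ℝ g p) :
    Γ (fun q => f q * g q) h p = f p * Γ g h p + g p * Γ f h p := by
  simp only [gradForm, pderiv_mul hf hg, Finset.mul_sum, ← Finset.sum_add_distrib]
  exact Finset.sum_congr rfl fun _ _ => by ring

lemma gradForm_const_mul_add_left (hf : DifferentiableAt ℝ f p) (hg : DifferentiableAt ℝ g p)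
    (c : ℝ) : Γ (fun q => c * f q + g q) h p = c * Γ f h p + Γ g h p := by
  simp only [gradForm, pderiv_add (hf.const_mul c) hg, pderiv_const_mul hf, Finset.mul_sum,
    ← Finset.sum_add_distrib]
  exact Finset.sum_congr rfl fun _ _ => by ring

lemma gradForm_comp_left {χ : ℝ → ℝ} {c : ℝ} (hχ : HasDerivAt χ c (f p))
    (hf : DifferentiableAt ℝ f p) : Γ (fun q => χ (f q)) g p = c * Γ f g p := by
  simp only [gradForm, pderiv_comp hχ hf, Finset.mul_sum]
  exact Finset.sum_congr rfl fun _ _ => by ring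

lemma box_const_mul_add (hf : ContDiff ℝ 2 f) (hg : ContDiff ℝ 2 g) (c : ℝ) (p : E) :
    □ (fun q => c * f q + g q) p = c * □ f p + □ g p := by
  have hfd := hf.differentiable two_ne_zero
  have hgd := hg.differentiable two_ne_zero
  have hfirst (i : ι) : pderiv e i (fun q => c * f q + g q)
      = fun q => c * pderiv e i f q + pderiv e i g q := by
    funext q
    rw [pderiv_add ((hfd q).const_mul c) (hgd q), pderiv_const_mul (hfd q)]
  simp only [box, hfirst, Finset.mul_sum, ← Finset.sum_add_distrib]
  refine Finset.sum_congr rfl fun i _ => ?_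
  rw [pderiv_add ((differentiable_pderiv hf i p).const_mul c) (differentiable_pderiv hg i p),
    pderiv_const_mul (differentiable_pderiv hf i p)]
  ring

lemma box_mul (hf : ContDiff ℝ 2 f) (hg : ContDiff ℝ 2 g) (p : E) :
    □ (fun q => f q * g q) p = f p * □ g p + g p * □ f p + 2 * Γ f g p := by
  have hfd := hf.differentiable two_ne_zero
  have hgd := hg.differentiable two_ne_zero
  have hfirst (i : ι) : pderiv e i (fun q => f q * g q)
      = fun q => f q * pderiv e i g q + g q * pderiv e i f q :=
    funext fun q => pderiv_mul (hfd q) (hgd q) i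
  simp only [box, gradForm, hfirst, Finset.mul_sum, ← Finset.sum_add_distrib]
  refine Finset.sum_congr rfl fun i _ => ?_
  have hfi := differentiable_pderiv (e := e) hf i p
  have hgi := differentiable_pderiv (e := e) hg i p
  rw [pderiv_add ((hfd p).fun_mul hgi) ((hgd p).fun_mul hfi), pderiv_mul (hfd p) hgi,
    pderiv_mul (hgd p) hfi]
  ring

lemma box_comp {χ χ' χ'' : ℝ → ℝ} (hχ : ∀ x, HasDerivAt χ (χ' x) x)
    (hχ' : ∀ x, HasDerivAt χ' (χ'' x) x) (hf : ContDiff ℝ 2 f) (p : E) :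
    □ (fun q => χ (f q)) p = χ' (f p) * □ f p + χ'' (f p) * Γ f f p := by
  have hfd := hf.differentiable two_ne_zero
  have hfirst (i : ι) : pderiv e i (fun q => χ (f q)) = fun q => χ' (f q) * pderiv e i f q :=
    funext fun q => pderiv_comp (hχ (f q)) (hfd q) i
  simp only [box, gradForm, hfirst, ← Finset.sum_add_distrib, Finset.mul_sum]
  refine Finset.sum_congr rfl fun i _ => ?_
  rw [pderiv_mul ((hχ' (f p)).differentiableAt.fun_comp' p (hfd p)) (differentiable_pderiv hf i p),
    pderiv_comp (hχ' (f p)) (hfd p)]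
  ring

lemma pderiv_gradForm (hf : ContDiff ℝ 2 f) (hg : ContDiff ℝ 2 g) (i : ι) (p : E) :
    pderiv e i (Γ f g) p = ∑ j, ε j * (pderiv e j f p * pderiv e i (pderiv e j g) p
      + pderiv e j g p * pderiv e i (pderiv e j f) p) := by
  have hfd (j : ι) := differentiable_pderiv (e := e) hf j p
  have hgd (j : ι) := differentiable_pderiv (e := e) hg j p
  change pderiv e i (fun q => ∑ j, ε j * pderiv e j f q * pderiv e j g q) p = _
  rw [pderiv_sum fun j => ((hfd j).const_mul (ε j)).fun_mul (hgd j)]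
  refine Finset.sum_congr rfl fun j _ => ?_
  rw [pderiv_mul ((hfd j).const_mul (ε j)) (hgd j), pderiv_const_mul (hfd j)]
  ring

/-- The second derivatives of `f` enter the left-hand side only through `∇(Γ(f, f))`. -/
lemma gradForm_gradForm_self (hg : ContDiff ℝ 2 g) (hf : ContDiff ℝ 2 f) (p : E) :
    Γ (Γ g f) f p
      = hessForm ε e g p (fun i => pderiv e i f p) + 1 / 2 * Γ (Γ f f) g p := by
  have hsymm : ∑ i, ∑ j, ε i * ε j * pderiv e j g p * pderiv e i (pderiv e j f) p * pderiv e i f p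
      = ∑ i, ∑ j, ε i * ε j * pderiv e i g p * pderiv e i (pderiv e j f) p * pderiv e j f p := by
    rw [Finset.sum_comm]
    refine Finset.sum_congr rfl fun i _ => Finset.sum_congr rfl fun j _ => ?_
    rw [pderiv_comm hf j i]
    ring
  have hleft : Γ (Γ g f) f p = hessForm ε e g p (fun i => pderiv e i f p)
      + ∑ i, ∑ j, ε i * ε j * pderiv e j g p * pderiv e i (pderiv e j f) p * pderiv e i f p := by
    rw [gradForm, hessForm]
    simp only [pderiv_gradForm hg hf, Finset.mul_sum, Finset.sum_mul, ← Finset.sum_add_distrib]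
    exact Finset.sum_congr rfl fun _ _ => Finset.sum_congr rfl fun _ _ => by ring
  rw [hleft, hsymm, gradForm]
  simp only [pderiv_gradForm hf hf, Finset.mul_sum, Finset.sum_mul]
  congr 1
  exact Finset.sum_congr rfl fun _ _ => Finset.sum_congr rfl fun _ _ => by ring

lemma contDiff_gradForm (hf : ContDiff ℝ k f) (hg : ContDiff ℝ k g) (hmk : m + 1 ≤ k) :
    ContDiff ℝ m (Γ f g) :=
  ContDiff.sum fun i _ =>
    (contDiff_const.mul (contDiff_pderiv hf hmk i)).mul (contDiff_pderiv hg hmk i)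

lemma contDiff_box (hf : ContDiff ℝ k f) (hmk : m + 2 ≤ k) : ContDiff ℝ m (□ f) :=
  ContDiff.sum fun i _ => contDiff_const.mul <|
    contDiff_pderiv (contDiff_pderiv hf (by rwa [add_assoc, one_add_one_eq_two]) i) le_rfl i

lemma continuous_gradSq (hf : ContDiff ℝ 1 f) : Continuous (gradSq e f) :=
  continuous_finsetSum _ fun i _ =>
    (contDiff_pderiv (m := 0) hf (zero_add 1).le i).continuous.pow 2

lemma gradForm_of_notMem_tsupport (hp : p ∉ tsupport f) (g : E → ℝ) : Γ f g p = 0 := by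
  simp only [gradForm, pderiv_of_notMem_tsupport hp, mul_zero, zero_mul, Finset.sum_const_zero]

lemma box_of_notMem_tsupport (hp : p ∉ tsupport f) : □ f p = 0 := by
  have hpi (i : ι) : p ∉ tsupport (pderiv e i f) := fun h =>
    hp (tsupport_fderiv_apply_subset ℝ (e i) h)
  simp only [box, pderiv_of_notMem_tsupport (hpi _), mul_zero, Finset.sum_const_zero]

lemma gradSq_of_notMem_tsupport (hp : p ∉ tsupport f) : gradSq e f p = 0 := by
  simp only [gradSq, pderiv_of_notMem_tsupport hp, ne_eq, OfNat.ofNat_ne_zero, not_false_eq_true,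
    zero_pow, Finset.sum_const_zero]

lemma integral_divGrad [FiniteDimensional ℝ E] [MeasurableSpace E] [BorelSpace E]
    {ν : Measure E} [ν.IsAddHaarMeasure] (hf : ContDiff ℝ 1 f) (hfc : HasCompactSupport f)
    (hg : ContDiff ℝ 2 g) :
    Integrable (divGrad ε e f g) ν ∧ ∫ p, divGrad ε e f g p ∂ν = 0 := by
  have hparts (i : ι) := integral_mul_pderiv_add (e := e) (ν := ν) hf hfc
    (contDiff_pderiv (e := e) hg one_add_one_eq_two.le i) i
  have hsum : divGrad ε e f g = fun p =>
      ∑ i, ε i * (f p * pderiv e i (pderiv e i g) p + pderiv e i f p * pderiv e i g p) := by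
    funext p
    simp only [divGrad, box, gradForm, Finset.mul_sum, ← Finset.sum_add_distrib]
    exact Finset.sum_congr rfl fun i _ => by ring
  rw [hsum]
  refine ⟨integrable_finsetSum _ fun i _ => (hparts i).1.const_mul _, ?_⟩
  rw [integral_finsetSum _ fun i _ => (hparts i).1.const_mul _]
  simp only [integral_const_mul, (hparts _).2, mul_zero, Finset.sum_const_zero]

variable {ψ v w : E → ℝ} {s l μ : ℝ}

lemma gradForm_expWeight_left (hψ : DifferentiableAt ℝ ψ p) (c : ℝ) (g : E → ℝ) :
    Γ (expWeight c ψ) g p = c * expWeight c ψ p * Γ ψ g p :=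
  gradForm_comp_left (hasDerivAt_exp_const_mul c (ψ p)) hψ

lemma box_expWeight (hψ : ContDiff ℝ 2 ψ) (c : ℝ) (p : E) :
    □ (expWeight c ψ) p = expWeight c ψ p * (c * □ ψ p + c ^ 2 * Γ ψ ψ p) := by
  have hchain := box_comp (ε := ε) (e := e) (hasDerivAt_exp_const_mul c)
    (fun x => (hasDerivAt_exp_const_mul c x).const_mul c) hψ p
  exact hchain.trans (by rw [expWeight]; ring)

/-- The operator `P w = □w + s²l²φ² Γ(ψ, ψ) w` with `φ = e^{lψ}`, the part of the conjugated
operator `e^{sφ} □ e^{-sφ}` that is symmetric to leading order in `s`. -/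
noncomputable def conjOp (ε : ι → ℝ) (e : ι → E) (s l : ℝ) (ψ w : E → ℝ) (p : E) : ℝ :=
  box ε e w p + s ^ 2 * l ^ 2 * expWeight l ψ p ^ 2 * gradForm ε e ψ ψ p * w p

/-- The zeroth-order coefficient `A = lΓ(ψ, ψ) + □ψ + 2μ` of the Carleman multiplier
`2Γ(ψ, w) + Aw`. The constant `μ` is the multiple of `Γ` that makes the Hessian of `ψ`
positive. -/
noncomputable def zerothCoeff (ε : ι → ℝ) (e : ι → E) (μ l : ℝ) (ψ : E → ℝ) (p : E) : ℝ :=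
  l * gradForm ε e ψ ψ p + (box ε e ψ p + 2 * μ)

/-- The Carleman multiplier `2Γ(ψ, w) + Aw`. -/
noncomputable def multiplier (ε : ι → ℝ) (e : ι → E) (μ l : ℝ) (ψ w : E → ℝ) (p : E) : ℝ :=
  2 * gradForm ε e ψ w p + zerothCoeff ε e μ l ψ p * w p

/-- The total divergence obtained when `P w` is multiplied by `φ (2Γ(ψ, w) + Aw)` and integrated
by parts. -/
noncomputable def carlemanFlux (ε : ι → ℝ) (e : ι → E) (μ s l : ℝ) (ψ w : E → ℝ) (p : E) : ℝ :=
  divGrad ε e (fun q => expWeight l ψ q * multiplier ε e μ l ψ w q) w p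
    + s ^ 2 * l ^ 2 *
      divGrad ε e (fun q => expWeight l ψ q ^ 3 * (gradForm ε e ψ ψ q * w q ^ 2)) ψ p
    - divGrad ε e (fun q => expWeight l ψ q * gradForm ε e w w q) ψ p
    - 1 / 2 * divGrad ε e (fun q => w q ^ 2)
        (fun q => expWeight l ψ q * zerothCoeff ε e μ l ψ q) p

local notation "φ" => expWeight l ψ
local notation "A" => zerothCoeff ε e μ l ψ
local notation "P" => conjOp ε e s l ψ

lemma conjOp_expWeight_mul (hψ : ContDiff ℝ 2 ψ) (hv : ContDiff ℝ 2 v) (p : E)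
    (hw : w = fun q => expWeight s φ q * v q) :
    expWeight s φ p * □ v p
      = P w p - s * l * φ p * multiplier ε e μ l ψ w p + 2 * μ * s * l * φ p * w p := by
  have hψd := hψ.differentiable two_ne_zero p
  have hvd := hv.differentiable two_ne_zero p
  have hφ : ContDiff ℝ 2 φ := contDiff_expWeight hψ l
  have hφd := hφ.differentiable two_ne_zero p
  have hE : ContDiff ℝ 2 (expWeight s φ) := contDiff_expWeight hφ s
  have hEd := hE.differentiable two_ne_zero p
  have hφφ : Γ φ φ p = l ^ 2 * φ p ^ 2 * Γ ψ ψ p := by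
    rw [gradForm_expWeight_left hψd, gradForm_comm, gradForm_expWeight_left hψd]
    ring
  have hbox : □ w p = expWeight s φ p * □ v p + v p * □ (expWeight s φ) p
      + 2 * (s * expWeight s φ p * (l * φ p * Γ ψ v p)) := by
    rw [hw, box_mul hE hv, gradForm_expWeight_left hφd, gradForm_expWeight_left hψd]
  have hgrad : Γ ψ w p = expWeight s φ p * Γ ψ v p
      + v p * (s * expWeight s φ p * (l * φ p * Γ ψ ψ p)) := by
    rw [gradForm_comm, hw, gradForm_mul_left hEd hvd, gradForm_expWeight_left hφd,
      gradForm_expWeight_left hψd, gradForm_comm v]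
  have hwp : w p = expWeight s φ p * v p := congrFun hw p
  rw [conjOp, multiplier, zerothCoeff, hbox, hgrad, hwp, box_expWeight hφ, hφφ, box_expWeight hψ]
  ring

lemma contDiff_zerothCoeff (hψ : ContDiff ℝ k ψ) (hmk : m + 2 ≤ k) : ContDiff ℝ m A := by
  have hmk' : m + 1 ≤ k := (by gcongr; exact one_le_two : m + 1 ≤ m + 2).trans hmk
  exact (contDiff_const.mul (contDiff_gradForm hψ hψ hmk')).add
    ((contDiff_box hψ hmk).add contDiff_const)

lemma gradForm_multiplier_left (hψ : ContDiff ℝ 3 ψ) (hw : ContDiff ℝ 2 w) (p : E) :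
    Γ (multiplier ε e μ l ψ w) w p
      = 2 * hessForm ε e ψ p (fun i => pderiv e i w p) + Γ (Γ w w) ψ p
        + A p * Γ w w p + w p * Γ A w p := by
  have hψ2 : ContDiff ℝ 2 ψ := hψ.of_le (by norm_num)
  have hGd : DifferentiableAt ℝ (Γ ψ w) p :=
    (contDiff_gradForm (m := 1) hψ2 hw one_add_one_eq_two.le).differentiable one_ne_zero p
  have hAd : DifferentiableAt ℝ A p :=
    (contDiff_zerothCoeff (m := 1) hψ (by norm_num)).differentiable one_ne_zero p
  have hwd := hw.differentiable two_ne_zero p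
  change Γ (fun q => 2 * Γ ψ w q + A q * w q) w p = _
  rw [gradForm_const_mul_add_left hGd (hAd.fun_mul hwd), gradForm_mul_left hAd hwd,
    gradForm_gradForm_self hψ2 hw]
  ring

lemma carlemanFlux_eq (hψ : ContDiff ℝ 4 ψ) (hw : ContDiff ℝ 2 w) (p : E) :
    carlemanFlux ε e μ s l ψ w p
      = P w p * φ p * multiplier ε e μ l ψ w p + 2 * l * φ p * Γ ψ w p ^ 2
        + 2 * φ p * (hessForm ε e ψ p (fun i => pderiv e i w p) + μ * Γ w w p)
        + s ^ 2 * l ^ 2 * φ p ^ 3 * w p ^ 2 * (2 * l * Γ ψ ψ p ^ 2 - 2 * μ * Γ ψ ψ p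
          + 2 * hessForm ε e ψ p fun i => pderiv e i ψ p)
        - 1 / 2 * w p ^ 2 * □ (fun q => φ q * A q) p := by
  have hψ2 : ContDiff ℝ 2 ψ := hψ.of_le (by norm_num)
  have hψd := hψ2.differentiable two_ne_zero p
  have hwd := hw.differentiable two_ne_zero p
  have hφd : DifferentiableAt ℝ φ p :=
    (contDiff_expWeight hψ2 l).differentiable two_ne_zero p
  have hΓd {f g : E → ℝ} (hf : ContDiff ℝ 2 f) (hg : ContDiff ℝ 2 g) :
      DifferentiableAt ℝ (Γ f g) p :=
    (contDiff_gradForm (m := 1) hf hg one_add_one_eq_two.le).differentiable one_ne_zero p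
  have hAd : DifferentiableAt ℝ A p :=
    (contDiff_zerothCoeff (m := 2) hψ (by norm_num)).differentiable two_ne_zero p
  have hmd : DifferentiableAt ℝ (multiplier ε e μ l ψ w) p :=
    ((hΓd hψ2 hw).const_mul 2).add (hAd.mul hwd)
  have hsq (g : E → ℝ) : Γ (fun q => w q ^ 2) g p = 2 * w p * Γ w g p := by
    simpa using gradForm_comp_left (hasDerivAt_pow 2 (w p)) hwd
  have hcube (g : E → ℝ) : Γ (fun q => φ q ^ 3) g p = 3 * φ p ^ 2 * (l * φ p * Γ ψ g p) := by
    rw [← gradForm_expWeight_left hψd]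
    simpa using gradForm_comp_left (hasDerivAt_pow 3 (φ p)) hφd
  have hψψψ := gradForm_gradForm_self (ε := ε) (e := e) hψ2 hψ2 p
  simp only [carlemanFlux, divGrad]
  rw [gradForm_mul_left hφd hmd, gradForm_multiplier_left (hψ.of_le (by norm_num)) hw,
    gradForm_mul_left (hφd.fun_pow 3) ((hΓd hψ2 hψ2).fun_mul (hwd.fun_pow 2)),
    gradForm_mul_left (hΓd hψ2 hψ2) (hwd.fun_pow 2), hcube, hsq, hsq,
    gradForm_comm w (fun q => φ q * A q), gradForm_mul_left hφd hAd,
    gradForm_mul_left hφd (hΓd hw hw), gradForm_expWeight_left hψd, gradForm_expWeight_left hψd,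
    gradForm_comm w ψ]
  simp only [conjOp, multiplier, zerothCoeff]
  linear_combination 2 * (s ^ 2 * l ^ 2 * φ p ^ 3 * w p ^ 2) * hψψψ

lemma integral_carlemanFlux [FiniteDimensional ℝ E] [MeasurableSpace E] [BorelSpace E]
    {ν : Measure E} [ν.IsAddHaarMeasure] (hψ : ContDiff ℝ 4 ψ) (hw : ContDiff ℝ 2 w)
    (hwc : HasCompactSupport w) :
    Integrable (carlemanFlux ε e μ s l ψ w) ν ∧ ∫ p, carlemanFlux ε e μ s l ψ w p ∂ν = 0 := by
  have hψ2 : ContDiff ℝ 2 ψ := hψ.of_le (by norm_num)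
  have hw1 : ContDiff ℝ 1 w := hw.of_le one_le_two
  have hφ2 : ContDiff ℝ 2 φ := contDiff_expWeight hψ2 l
  have hφ1 : ContDiff ℝ 1 φ := hφ2.of_le one_le_two
  have hA : ContDiff ℝ 2 A := contDiff_zerothCoeff hψ (by norm_num)
  have hΓ {f g : E → ℝ} (hf : ContDiff ℝ 2 f) (hg : ContDiff ℝ 2 g) : ContDiff ℝ 1 (Γ f g) :=
    contDiff_gradForm hf hg one_add_one_eq_two.le
  have hm : ContDiff ℝ 1 (multiplier ε e μ l ψ w) :=
    (contDiff_const.mul (hΓ hψ2 hw)).add ((hA.of_le one_le_two).mul hw1)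
  have hΓwc (g : E → ℝ) : HasCompactSupport (Γ w g) :=
    HasCompactSupport.intro hwc fun p hp => gradForm_of_notMem_tsupport hp g
  have hmc : HasCompactSupport (multiplier ε e μ l ψ w) := by
    refine HasCompactSupport.add ?_ hwc.mul_left
    rw [funext (gradForm_comm ψ w)]
    exact (hΓwc ψ).mul_left
  have hwsq : HasCompactSupport fun p => w p ^ 2 := hwc.comp_left (zero_pow two_ne_zero)
  obtain ⟨i₁, z₁⟩ := integral_divGrad (ε := ε) (e := e) (ν := ν) (hφ1.mul hm) hmc.mul_left hw
  obtain ⟨i₂, z₂⟩ := integral_divGrad (ε := ε) (e := e) (ν := ν)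
    ((hφ1.pow 3).mul ((hΓ hψ2 hψ2).mul (hw1.pow 2))) hwsq.mul_left.mul_left hψ2
  obtain ⟨i₃, z₃⟩ := integral_divGrad (ε := ε) (e := e) (ν := ν) (hφ1.mul (hΓ hw hw))
    (hΓwc w).mul_left hψ2
  obtain ⟨i₄, z₄⟩ := integral_divGrad (ε := ε) (e := e) (ν := ν) (hw1.pow 2) hwsq (hφ2.mul hA)
  have i₁₂ := i₁.add (i₂.const_mul (s ^ 2 * l ^ 2))
  refine ⟨(i₁₂.sub i₃).sub (i₄.const_mul (1 / 2)), ?_⟩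
  have hsum := integral_sub (i₁₂.sub i₃) (i₄.const_mul (1 / 2))
  rw [integral_sub' i₁₂ i₃, integral_add' i₁ (i₂.const_mul (s ^ 2 * l ^ 2)), integral_const_mul,
    integral_const_mul, z₁, z₂, z₃, z₄] at hsum
  exact hsum.trans (by ring)

lemma box_expWeight_mul_zerothCoeff (hψ : ContDiff ℝ 4 ψ) (p : E) :
    □ (fun q => φ q * A q) p = φ p * (l ^ 3 * Γ ψ ψ p ^ 2
      + l ^ 2 * (2 * Γ ψ ψ p * (□ ψ p + μ) + 2 * Γ (Γ ψ ψ) ψ p)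
      + l * ((□ ψ p + 2 * μ) * □ ψ p + □ (Γ ψ ψ) p + 2 * Γ (fun q => □ ψ q + 2 * μ) ψ p)
      + □ (fun q => □ ψ q + 2 * μ) p) := by
  have hψ2 : ContDiff ℝ 2 ψ := hψ.of_le (by norm_num)
  have hψd := hψ2.differentiable two_ne_zero p
  have hq : ContDiff ℝ 2 (Γ ψ ψ) := contDiff_gradForm hψ hψ (by norm_num)
  have hb : ContDiff ℝ 2 (fun q => □ ψ q + 2 * μ) :=
    (contDiff_box hψ (by norm_num)).add contDiff_const
  have hA : ContDiff ℝ 2 A := contDiff_zerothCoeff hψ (by norm_num)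
  have hboxA : □ A p = l * □ (Γ ψ ψ) p + □ (fun q => □ ψ q + 2 * μ) p :=
    box_const_mul_add hq hb l p
  have hgradA : Γ A ψ p = l * Γ (Γ ψ ψ) ψ p + Γ (fun q => □ ψ q + 2 * μ) ψ p :=
    gradForm_const_mul_add_left (hq.differentiable two_ne_zero p)
      (hb.differentiable two_ne_zero p) l
  rw [box_mul (contDiff_expWeight hψ2 l) hA, box_expWeight hψ2, gradForm_expWeight_left hψd,
    gradForm_comm ψ A, hboxA, hgradA, zerothCoeff]
  ring

lemma exists_box_expWeight_mul_zerothCoeff_le [ProperSpace E] {U : Set E}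
    (hU : Bornology.IsBounded U) (hψ : ContDiff ℝ 4 ψ) (μ : ℝ) :
    ∃ C, ∀ l ≥ 1, ∀ p ∈ U,
      □ (fun q => expWeight l ψ q * zerothCoeff ε e μ l ψ q) p ≤ C * l ^ 3 * expWeight l ψ p := by
  have hq : ContDiff ℝ 2 (Γ ψ ψ) := contDiff_gradForm hψ hψ (by norm_num)
  have hb : ContDiff ℝ 2 (□ ψ) := contDiff_box hψ (by norm_num)
  have hΓ {f : E → ℝ} (hf : ContDiff ℝ 2 f) : Continuous (Γ f ψ) :=
    (contDiff_gradForm (m := 1) hf (hψ.of_le (by norm_num)) one_add_one_eq_two.le).continuous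
  have hbox {f : E → ℝ} (hf : ContDiff ℝ 2 f) : Continuous (□ f) :=
    (contDiff_box (m := 0) hf (zero_add 2).le).continuous
  have hcont : Continuous fun p => Γ ψ ψ p ^ 2
      + |2 * Γ ψ ψ p * (□ ψ p + μ) + 2 * Γ (Γ ψ ψ) ψ p|
      + |(□ ψ p + 2 * μ) * □ ψ p + □ (Γ ψ ψ) p + 2 * Γ (fun q => □ ψ q + 2 * μ) ψ p|
      + |□ (fun q => □ ψ q + 2 * μ) p| := by
    have hbμ : ContDiff ℝ 2 fun q => □ ψ q + 2 * μ := hb.add contDiff_const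
    have := hq.continuous
    have := hb.continuous
    have := hΓ hq
    have := hΓ hbμ
    have := hbox hq
    have := hbox hbμ
    fun_prop
  obtain ⟨C, hC⟩ := hU.isCompact_closure.exists_bound_of_continuousOn hcont.continuousOn
  refine ⟨C, fun l hl p hp => ?_⟩
  have hpow {r : ℕ} (hr : r ≤ 3) (x : ℝ) : l ^ r * x ≤ l ^ 3 * |x| :=
    (mul_le_mul_of_nonneg_left (le_abs_self x) (by positivity)).trans (by gcongr)
  have hCp := mul_le_mul_of_nonneg_left ((le_abs_self _).trans (hC p (subset_closure hp)))
    (by positivity : 0 ≤ l ^ 3)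
  rw [box_expWeight_mul_zerothCoeff hψ, mul_comm (C * l ^ 3)]
  refine mul_le_mul_of_nonneg_left ?_ (expWeight_pos l ψ p).le
  linarith [hpow (r := 2) (by norm_num) (2 * Γ ψ ψ p * (□ ψ p + μ) + 2 * Γ (Γ ψ ψ) ψ p),
    hpow (r := 1) (by norm_num)
      ((□ ψ p + 2 * μ) * □ ψ p + □ (Γ ψ ψ) p + 2 * Γ (fun q => □ ψ q + 2 * μ) ψ p),
    hpow (Nat.zero_le 3) (□ (fun q => □ ψ q + 2 * μ) p)]

lemma le_two_mul_quadratic_add {c q h : ℝ} (hl : 0 < l) (hh : c ≤ h + μ * q)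
    (hμ : 2 * μ ^ 2 ≤ c * l) : c ≤ 2 * l * q ^ 2 - 2 * μ * q + 2 * h := by
  have hsq : 0 ≤ (l * q - μ) ^ 2 := sq_nonneg _
  have hlh : l * c ≤ l * (h + μ * q) := mul_le_mul_of_nonneg_left hh hl.le
  refine le_of_mul_le_mul_left ?_ hl
  linarith

lemma lower_order_le {c C x : ℝ} (hc : 0 ≤ c) (hs : 1 ≤ s) (hl : 1 ≤ l) (hlx : l ≤ x)
    (hC : 2 * C ≤ c * s) (hμ : 16 * μ ^ 2 ≤ c * s) :
    C * s * l ^ 4 * x + 8 * μ ^ 2 * s ^ 2 * l ^ 2 * x ^ 2 ≤ c * s ^ 3 * l ^ 3 * x ^ 3 := by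
  have hx : 1 ≤ x := hl.trans hlx
  have hfirst : 2 * C * (s * l ^ 4 * x) ≤ c * s ^ 3 * l ^ 3 * x ^ 3 := by
    calc 2 * C * (s * l ^ 4 * x) ≤ c * s * (s * l ^ 4 * x) := by gcongr
      _ = c * s ^ 2 * l ^ 3 * (l * x) := by ring
      _ ≤ c * s ^ 3 * l ^ 3 * (x * x ^ 2) := by
        gcongr
        · norm_num
        · exact le_self_pow₀ hx two_ne_zero
      _ = c * s ^ 3 * l ^ 3 * x ^ 3 := by ring
  have hsecond : 16 * μ ^ 2 * (s ^ 2 * l ^ 2 * x ^ 2) ≤ c * s ^ 3 * l ^ 3 * x ^ 3 := by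
    calc 16 * μ ^ 2 * (s ^ 2 * l ^ 2 * x ^ 2) ≤ c * s * (s ^ 2 * l ^ 2 * x ^ 2) := by gcongr
      _ = c * s ^ 3 * l ^ 2 * x ^ 2 := by ring
      _ ≤ c * s ^ 3 * l ^ 3 * x ^ 3 := by gcongr <;> norm_num
  linarith

lemma gradForm_self (f : E → ℝ) (p : E) : Γ f f p = ∑ i, ε i * pderiv e i f p ^ 2 :=
  Finset.sum_congr rfl fun _ _ => by ring

/-- Strong pseudoconvexity of `ψ` on `U`: modulo `μ` times the form `∑ᵢ εᵢ ξᵢ²`, which vanishes on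
null covectors, the Hessian of `ψ` is bounded below by `κ`. -/
def IsPseudoconvexOn (ε : ι → ℝ) (e : ι → E) (ψ : E → ℝ) (U : Set E) (μ κ : ℝ) : Prop :=
  ∀ p ∈ U, ∀ ξ : ι → ℝ, κ * ∑ i, ξ i ^ 2 ≤ hessForm ε e ψ p ξ + μ * ∑ i, ε i * ξ i ^ 2

variable {U : Set E} {κ δ : ℝ}

lemma IsPseudoconvexOn.mul_gradSq_le (h : IsPseudoconvexOn ε e ψ U μ κ) (hp : p ∈ U) (f : E → ℝ) :
    κ * gradSq e f p ≤ hessForm ε e ψ p (fun i => pderiv e i f p) + μ * Γ f f p := by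
  rw [gradForm_self]
  exact h p hp _

lemma gradSq_nonneg (f : E → ℝ) (p : E) : 0 ≤ gradSq e f p :=
  Finset.sum_nonneg fun _ _ => sq_nonneg _

lemma sq_conjOp_add_le (hψ : ContDiff ℝ 4 ψ) (hv : ContDiff ℝ 2 v)
    (hw : w = fun q => expWeight s φ q * v q) (hpc : IsPseudoconvexOn ε e ψ U μ κ) (hp : p ∈ U)
    (hκ : 0 ≤ κ) (hδ : 0 ≤ δ) (hδψ : δ ≤ gradSq e ψ p) {C : ℝ}
    (hC : □ (fun q => φ q * A q) p ≤ C * l ^ 3 * φ p) (hs : 1 ≤ s) (hl : 1 ≤ l) (hlφ : l ≤ φ p)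
    (hCs : 2 * C ≤ κ * δ * s) (hμs : 16 * μ ^ 2 ≤ κ * δ * s) (hμl : 2 * μ ^ 2 ≤ κ * δ * l) :
    P w p ^ 2 + 4 * κ * (s * l * φ p * gradSq e w p)
        + κ * δ * (s ^ 3 * l ^ 3 * φ p ^ 3 * w p ^ 2)
      ≤ 2 * (expWeight s φ p * □ v p) ^ 2 + 2 * s * l * carlemanFlux ε e μ s l ψ w p := by
  have hφ : 0 < φ p := expWeight_pos l ψ p
  have hw2 : ContDiff ℝ 2 w := hw ▸
    (contDiff_expWeight (contDiff_expWeight (hψ.of_le (by norm_num)) l) s).mul hv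
  have hprincipal : κ * δ ≤ 2 * l * Γ ψ ψ p ^ 2 - 2 * μ * Γ ψ ψ p
      + 2 * hessForm ε e ψ p fun i => pderiv e i ψ p := by
    refine le_two_mul_quadratic_add (by linarith) ?_ hμl
    exact (mul_le_mul_of_nonneg_left hδψ hκ).trans (hpc.mul_gradSq_le hp ψ)
  have hgrad := mul_le_mul_of_nonneg_left (hpc.mul_gradSq_le hp w)
    (by positivity : 0 ≤ 4 * (s * l * φ p))
  have hzeroth := mul_le_mul_of_nonneg_left hprincipal
    (by positivity : 0 ≤ 2 * (s ^ 3 * l ^ 3 * φ p ^ 3 * w p ^ 2))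
  have hbox := mul_le_mul_of_nonneg_left hC (by positivity : 0 ≤ s * l * w p ^ 2)
  have hlower := mul_le_mul_of_nonneg_left
    (lower_order_le (by positivity) hs hl hlφ hCs hμs) (sq_nonneg (w p))
  have hG : 0 ≤ s * l ^ 2 * φ p * Γ ψ w p ^ 2 := by positivity
  -- The cross term of `(P - slφ(2Γ(ψ, w) + Aw))²` is what the flux identity evaluates.
  have hcross : P w p ^ 2 ≤ 2 * (expWeight s φ p * □ v p) ^ 2
      + 2 * (2 * μ * s * l * φ p * w p) ^ 2
      + 2 * s * l * (P w p * φ p * multiplier ε e μ l ψ w p) := by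
    rw [conjOp_expWeight_mul (μ := μ) (hψ.of_le (by norm_num)) hv p hw]
    linarith [sq_nonneg (P w p - s * l * φ p * multiplier ε e μ l ψ w p
      + 2 * (2 * μ * s * l * φ p * w p)), sq_nonneg (s * l * φ p * multiplier ε e μ l ψ w p)]
  rw [carlemanFlux_eq hψ hw2]
  linarith

lemma mul_gradSq_le (hψ : ContDiff ℝ 1 ψ) (hv : ContDiff ℝ 1 v)
    (hw : w = fun q => expWeight s φ q * v q) (p : E) :
    expWeight s φ p ^ 2 * gradSq e v p
      ≤ 2 * gradSq e w p + 2 * s ^ 2 * l ^ 2 * φ p ^ 2 * gradSq e ψ p * w p ^ 2 := by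
  have hφ : ContDiff ℝ 1 φ := contDiff_expWeight hψ l
  have hpderiv (i : ι) : expWeight s φ p * pderiv e i v p
      = pderiv e i w p - s * l * φ p * pderiv e i ψ p * w p := by
    rw [hw, pderiv_mul ((contDiff_expWeight hφ s).differentiable one_ne_zero p)
        (hv.differentiable one_ne_zero p),
      pderiv_expWeight (hφ.differentiable one_ne_zero p),
      pderiv_expWeight (hψ.differentiable one_ne_zero p)]
    ring
  simp only [gradSq, Finset.mul_sum, Finset.sum_mul, ← Finset.sum_add_distrib]
  refine Finset.sum_le_sum fun i _ => ?_
  rw [← mul_pow, hpderiv]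
  linarith [sq_nonneg (pderiv e i w p + s * l * φ p * pderiv e i ψ p * w p)]

lemma carlemanFlux_of_notMem_tsupport (hψ : ContDiff ℝ 4 ψ) (hw : ContDiff ℝ 2 w)
    (hp : p ∉ tsupport w) : carlemanFlux ε e μ s l ψ w p = 0 := by
  rw [carlemanFlux_eq hψ hw, gradForm_comm ψ w]
  simp only [gradForm_of_notMem_tsupport hp, pderiv_of_notMem_tsupport hp,
    image_eq_zero_of_notMem_tsupport hp, conjOp, box_of_notMem_tsupport hp, hessForm]
  simp

lemma conjOp_of_notMem_tsupport (hp : p ∉ tsupport w) : P w p = 0 := by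
  rw [conjOp, box_of_notMem_tsupport hp, image_eq_zero_of_notMem_tsupport hp, mul_zero, add_zero]

lemma weighted_energy_le (hψ : ContDiff ℝ 1 ψ) (hv : ContDiff ℝ 1 v)
    (hw : w = fun q => expWeight s φ q * v q) (hs : 0 ≤ s) (hl : 0 ≤ l) {Q : ℝ}
    (hQ : gradSq e ψ p ≤ Q) :
    s * l * (φ p * expWeight (2 * s) φ p * gradSq e v p)
        + s ^ 3 * l ^ 3 * (φ p ^ 3 * expWeight (2 * s) φ p * v p ^ 2)
      ≤ 2 * (s * l * φ p * gradSq e w p) + (2 * Q + 1) * (s ^ 3 * l ^ 3 * φ p ^ 3 * w p ^ 2) := by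
  have hφ : 0 < φ p := expWeight_pos l ψ p
  have hgrad := mul_le_mul_of_nonneg_left (mul_gradSq_le (e := e) hψ hv hw p)
    (by positivity : 0 ≤ s * l * φ p)
  have hψQ := mul_le_mul_of_nonneg_left hQ
    (by positivity : 0 ≤ 2 * (s ^ 3 * l ^ 3 * φ p ^ 3 * w p ^ 2))
  have hwp : w p ^ 2 = expWeight (2 * s) φ p * v p ^ 2 := by
    rw [hw, expWeight_two_mul, mul_pow]
  rw [← expWeight_two_mul] at hgrad
  linear_combination hgrad + hψQ - (s ^ 3 * l ^ 3 * φ p ^ 3) * hwp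

lemma exists_forall_ge_le_mul {c : ℝ} (hc : 0 < c) (B : ℝ) : ∃ r ≥ 1, ∀ x ≥ r, B ≤ c * x := by
  refine ⟨max 1 (B / c), le_max_left _ _, fun x hx => ?_⟩
  rw [← div_le_iff₀' hc]
  exact (le_max_right _ _).trans hx

/-- The integrand of the left-hand side of the Carleman estimate, with `φ = e^{lψ}` and
`w = e^{sφ} v`. -/
noncomputable def carlemanDensity (ε : ι → ℝ) (e : ι → E) (s l : ℝ) (ψ v : E → ℝ) (p : E) : ℝ :=
  s * l * (expWeight l ψ p * expWeight (2 * s) (expWeight l ψ) p * gradSq e v p)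
    + s ^ 3 * l ^ 3 * (expWeight l ψ p ^ 3 * expWeight (2 * s) (expWeight l ψ) p * v p ^ 2)
    + conjOp ε e s l ψ (fun q => expWeight s (expWeight l ψ) q * v q) p ^ 2

lemma exists_carlemanDensity_le_on [ProperSpace E] (hU : Bornology.IsBounded U)
    (hψ : ContDiff ℝ 4 ψ) (hψU : ∀ p ∈ U, 1 ≤ ψ p) (hδ : 0 < δ)
    (hδψ : ∀ p ∈ U, δ ≤ gradSq e ψ p) (hκ : 0 < κ) (hpc : IsPseudoconvexOn ε e ψ U μ κ) :
    ∃ l₀ > 0, ∃ s₀ > 0, ∃ M > 0, ∀ s ≥ s₀, ∀ l ≥ l₀, ∀ v w : E → ℝ, ContDiff ℝ 2 v →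
      (w = fun q => expWeight s (expWeight l ψ) q * v q) → ∀ p ∈ U,
      carlemanDensity ε e s l ψ v p
        ≤ M * (expWeight (2 * s) (expWeight l ψ) p * □ v p ^ 2
          + s * l * carlemanFlux ε e μ s l ψ w p) := by
  have hψ1 : ContDiff ℝ 1 ψ := hψ.of_le (by norm_num)
  have hκδ : 0 < κ * δ := mul_pos hκ hδ
  obtain ⟨C, hC⟩ := exists_box_expWeight_mul_zerothCoeff_le (ε := ε) (e := e) hU hψ μ
  obtain ⟨Q, hQ⟩ := hU.isCompact_closure.exists_bound_of_continuousOn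
    (continuous_gradSq (e := e) hψ1).continuousOn
  obtain ⟨l₀, hl₀, hμl⟩ := exists_forall_ge_le_mul hκδ (2 * μ ^ 2)
  obtain ⟨s₁, hs₁, hCs⟩ := exists_forall_ge_le_mul hκδ (2 * C)
  obtain ⟨s₂, -, hμs⟩ := exists_forall_ge_le_mul hκδ (16 * μ ^ 2)
  obtain ⟨M₁, hM₁, hκM⟩ := exists_forall_ge_le_mul (mul_pos four_pos hκ) 2
  obtain ⟨M₂, -, hQM⟩ := exists_forall_ge_le_mul hκδ (2 * Q + 1)
  have hM : 1 ≤ max M₁ M₂ := hM₁.trans (le_max_left _ _)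
  specialize hκM (max M₁ M₂) (le_max_left _ _)
  specialize hQM (max M₁ M₂) (le_max_right _ _)
  generalize max M₁ M₂ = M at hM hκM hQM
  refine ⟨l₀, by linarith, max s₁ s₂, lt_max_of_lt_left (by linarith), 2 * M, by linarith,
    fun s hs l hl v w hv hw p hp => ?_⟩
  have hs1 : 1 ≤ s := hs₁.trans ((le_max_left _ _).trans hs)
  have hl1 : 1 ≤ l := hl₀.trans hl
  have hφ : 0 < expWeight l ψ p := expWeight_pos l ψ p
  have henergy := weighted_energy_le hψ1 (hv.of_le one_le_two) hw (zero_le_one.trans hs1)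
    (zero_le_one.trans hl1) ((le_abs_self _).trans (hQ p (subset_closure hp)))
  have hflux := mul_le_mul_of_nonneg_left (sq_conjOp_add_le hψ hv hw hpc hp hκ.le hδ.le
    (hδψ p hp) (hC l hl1 p hp) hs1 hl1 (le_expWeight (zero_le_one.trans hl1) (hψU p hp))
    (hCs s ((le_max_left _ _).trans hs)) (hμs s ((le_max_right _ _).trans hs)) (hμl l hl))
    (zero_le_one.trans hM)
  have hgrad := mul_le_mul_of_nonneg_right hκM (mul_nonneg
    (by positivity : 0 ≤ s * l * expWeight l ψ p) (gradSq_nonneg (e := e) w p))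
  have hmass := mul_le_mul_of_nonneg_right hQM
    (by positivity : 0 ≤ s ^ 3 * l ^ 3 * expWeight l ψ p ^ 3 * w p ^ 2)
  have hP := mul_le_mul_of_nonneg_right hM (sq_nonneg (conjOp ε e s l ψ w p))
  rw [mul_pow (expWeight s _ p) (□ v p), ← expWeight_two_mul] at hflux
  rw [carlemanDensity, ← hw]
  linarith

lemma carlemanDensity_of_notMem_tsupport (hp : p ∉ tsupport v) :
    carlemanDensity ε e s l ψ v p = 0 := by
  have hpw : p ∉ tsupport fun q => expWeight s φ q * v q :=
    fun h => hp (tsupport_mul_subset_right h)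
  rw [carlemanDensity, gradSq_of_notMem_tsupport hp, image_eq_zero_of_notMem_tsupport hp,
    conjOp_of_notMem_tsupport hpw]
  ring

section Integral

variable [MeasurableSpace E] [OpensMeasurableSpace E] {ν : Measure E}
  [IsFiniteMeasureOnCompacts ν]

lemma integrable_expWeight_mul_gradSq (hψ : ContDiff ℝ 1 ψ) (hv : ContDiff ℝ 1 v)
    (hvc : HasCompactSupport v) :
    Integrable (fun p => φ p * expWeight (2 * s) φ p * gradSq e v p) ν := by
  have hφ : Continuous φ := (contDiff_expWeight hψ l).continuous
  refine Continuous.integrable_of_hasCompactSupport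
    ((hφ.mul (hφ.const_mul (2 * s)).rexp).mul (continuous_gradSq hv)) ?_
  exact HasCompactSupport.mul_left (.intro hvc fun p => gradSq_of_notMem_tsupport)

lemma integrable_conjOp_sq (hψ : ContDiff ℝ 1 ψ) (hw : ContDiff ℝ 2 w)
    (hwc : HasCompactSupport w) : Integrable (fun p => P w p ^ 2) ν := by
  have hφ : Continuous φ := (contDiff_expWeight hψ l).continuous
  have hbox : Continuous (□ w) := (contDiff_box (m := 0) hw (zero_add 2).le).continuous
  have hΓ : Continuous (Γ ψ ψ) := (contDiff_gradForm (m := 0) hψ hψ (zero_add 1).le).continuous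
  have hP : Continuous (P w) :=
    hbox.add (((continuous_const.mul (hφ.pow 2)).mul hΓ).mul hw.continuous)
  have hPc : HasCompactSupport (P w) := .intro hwc fun p => conjOp_of_notMem_tsupport
  exact (hP.pow 2).integrable_of_hasCompactSupport (hPc.comp_left (zero_pow two_ne_zero))

lemma integrable_expWeight_mul_box_sq (hψ : Continuous ψ) (hv : ContDiff ℝ 2 v)
    (hvc : HasCompactSupport v) :
    Integrable (fun p => expWeight (2 * s) φ p * □ v p ^ 2) ν := by
  have hbox : Continuous (□ v) := (contDiff_box (m := 0) hv (zero_add 2).le).continuous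
  refine Continuous.integrable_of_hasCompactSupport
    ((((hψ.const_mul l).rexp.const_mul (2 * s)).rexp).mul (hbox.pow 2)) ?_
  refine HasCompactSupport.mul_left (.intro hvc fun p hp => ?_)
  rw [box_of_notMem_tsupport hp, zero_pow two_ne_zero]

lemma integral_carlemanDensity (hψ : ContDiff ℝ 2 ψ) (hv : ContDiff ℝ 2 v)
    (hvc : HasCompactSupport v) :
    Integrable (carlemanDensity ε e s l ψ v) ν ∧
    ∫ p, carlemanDensity ε e s l ψ v p ∂ν
      = s * l * ∫ p, φ p * expWeight (2 * s) φ p * gradSq e v p ∂ν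
        + s ^ 3 * l ^ 3 * ∫ p, φ p ^ 3 * expWeight (2 * s) φ p * v p ^ 2 ∂ν
        + ∫ p, P (fun q => expWeight s φ q * v q) p ^ 2 ∂ν := by
  have hψ1 : ContDiff ℝ 1 ψ := hψ.of_le one_le_two
  have hgrad := (integrable_expWeight_mul_gradSq (s := s) (l := l) (e := e) (ν := ν) hψ1
    (hv.of_le one_le_two) hvc).const_mul (s * l)
  have hmass := (integrable_expWeight_mul_sq (s := s) (l := l) (ν := ν) hψ.continuous
    hv.continuous hvc).const_mul (s ^ 3 * l ^ 3)
  have hP : Integrable (fun p => P (fun q => expWeight s φ q * v q) p ^ 2) ν :=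
    integrable_conjOp_sq hψ1 ((contDiff_expWeight (contDiff_expWeight hψ l) s).mul hv) hvc.mul_left
  refine ⟨(hgrad.add hmass).add hP, ?_⟩
  have hsum := integral_add (hgrad.add hmass) hP
  rw [integral_add' hgrad hmass, integral_const_mul, integral_const_mul] at hsum
  exact hsum

end Integral

theorem exists_integral_carlemanDensity_le [FiniteDimensional ℝ E] [MeasurableSpace E]
    [BorelSpace E] (ν : Measure E) [ν.IsAddHaarMeasure] (hU : Bornology.IsBounded U)
    (hψ : ContDiff ℝ 4 ψ) (hψU : ∀ p ∈ U, 1 ≤ ψ p) (hδ : 0 < δ)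
    (hδψ : ∀ p ∈ U, δ ≤ gradSq e ψ p) (hκ : 0 < κ) (hpc : IsPseudoconvexOn ε e ψ U μ κ) :
    ∃ l₀ > 0, ∃ s₀ > 0, ∃ M > 0, ∀ s ≥ s₀, ∀ l ≥ l₀, ∀ v : E → ℝ, ContDiff ℝ 2 v →
      HasCompactSupport v → tsupport v ⊆ U →
      ∫ p, carlemanDensity ε e s l ψ v p ∂ν
        ≤ M * ∫ p, expWeight (2 * s) (expWeight l ψ) p * □ v p ^ 2 ∂ν := by
  have : ProperSpace E := FiniteDimensional.proper ℝ E
  have hψ2 : ContDiff ℝ 2 ψ := hψ.of_le (by norm_num)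
  obtain ⟨l₀, hl₀, s₀, hs₀, M, hM, hpointwise⟩ :=
    exists_carlemanDensity_le_on hU hψ hψU hδ hδψ hκ hpc
  refine ⟨l₀, hl₀, s₀, hs₀, M, hM, fun s hs l hl v hv hvc hvU => ?_⟩
  let w : E → ℝ := fun q => expWeight s (expWeight l ψ) q * v q
  have hw : ContDiff ℝ 2 w := (contDiff_expWeight (contDiff_expWeight hψ2 l) s).mul hv
  obtain ⟨hflux, hflux0⟩ := integral_carlemanFlux (ε := ε) (e := e) (s := s) (l := l) (μ := μ)
    (ν := ν) hψ hw hvc.mul_left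
  have hsource := integrable_expWeight_mul_box_sq (ε := ε) (e := e) (s := s) (l := l) (ν := ν)
    hψ.continuous hv hvc
  have hle (p : E) : carlemanDensity ε e s l ψ v p
      ≤ M * (expWeight (2 * s) (expWeight l ψ) p * □ v p ^ 2
        + s * l * carlemanFlux ε e μ s l ψ w p) := by
    by_cases hp : p ∈ tsupport v
    · exact hpointwise s hs l hl v w hv rfl p (hvU hp)
    · have hpw : p ∉ tsupport w := fun h => hp (tsupport_mul_subset_right h)
      rw [carlemanDensity_of_notMem_tsupport hp, box_of_notMem_tsupport hp,
        carlemanFlux_of_notMem_tsupport hψ hw hpw]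
      exact le_of_eq (by ring)
  calc ∫ p, carlemanDensity ε e s l ψ v p ∂ν
    _ ≤ ∫ p, M * (expWeight (2 * s) (expWeight l ψ) p * □ v p ^ 2
        + s * l * carlemanFlux ε e μ s l ψ w p) ∂ν :=
      integral_mono (integral_carlemanDensity hψ2 hv hvc).1
        ((hsource.add (hflux.const_mul (s * l))).const_mul M) hle
    _ = M * ∫ p, expWeight (2 * s) (expWeight l ψ) p * □ v p ^ 2 ∂ν := by
      rw [integral_const_mul, integral_add hsource (hflux.const_mul (s * l)), integral_const_mul,
        hflux0, mul_zero, add_zero]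

section Wave

variable {n : ℕ} {u : EuclideanSpace ℝ (Fin n) → ℝ → ℝ} {x : EuclideanSpace ℝ (Fin n)} {t : ℝ}

/-- The coordinate frame of `ℝⁿ × ℝ`; the index `none` is the time direction. -/
noncomputable def waveFrame (n : ℕ) : Option (Fin n) → EuclideanSpace ℝ (Fin n) × ℝ
  | none => (0, 1)
  | some i => (EuclideanSpace.single i 1, 0)

/-- The signs for which `box waveSign (waveFrame n)` is the d'Alembert operator `∂ₜ² - Δ`. -/
def waveSign {n : ℕ} : Option (Fin n) → ℝ
  | none => 1
  | some _ => -1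

local notation "∂ₜ" => pderiv (waveFrame _) none
local notation "∂[" i "]" => pderiv (waveFrame _) (some i)

lemma deriv_eq_pderiv (hu : DifferentiableAt ℝ (Function.uncurry u) (x, t)) :
    deriv (u x) t = ∂ₜ (Function.uncurry u) (x, t) :=
  (hu.hasFDerivAt.comp_hasDerivAt t ((hasDerivAt_const t x).prodMk (hasDerivAt_id t))).deriv

lemma fderiv_single_eq_pderiv (hu : DifferentiableAt ℝ (Function.uncurry u) (x, t)) (i : Fin n) :
    fderiv ℝ (fun y => u y t) x (EuclideanSpace.single i 1) = ∂[i] (Function.uncurry u) (x, t) := by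
  have hslice : HasFDerivAt (fun y => u y t) _ x :=
    HasFDerivAt.comp (g := Function.uncurry u) x hu.hasFDerivAt
      ((hasFDerivAt_id (𝕜 := ℝ) x).prodMk (hasFDerivAt_const t x))
  rw [hslice.fderiv]
  simp [pderiv, waveFrame]

lemma norm_gradient_sq_eq_sum_pderiv (hu : DifferentiableAt ℝ (Function.uncurry u) (x, t)) :
    ‖gradient (fun y => u y t) x‖ ^ 2 = ∑ i, ∂[i] (Function.uncurry u) (x, t) ^ 2 := by
  rw [EuclideanSpace.norm_sq_eq]
  refine Finset.sum_congr rfl fun i _ => ?_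
  have hcoord : gradient (fun y => u y t) x i
      = fderiv ℝ (fun y => u y t) x (EuclideanSpace.single i 1) := by
    rw [gradient, ← InnerProductSpace.toDual_symm_apply, EuclideanSpace.inner_single_right]
    simp
  rw [hcoord, Real.norm_eq_abs, sq_abs, fderiv_single_eq_pderiv hu]

lemma deriv_sq_add_norm_gradient_sq (hu : DifferentiableAt ℝ (Function.uncurry u) (x, t)) :
    deriv (u x) t ^ 2 + ‖gradient (fun y => u y t) x‖ ^ 2
      = gradSq (waveFrame n) (Function.uncurry u) (x, t) := by
  rw [deriv_eq_pderiv hu, norm_gradient_sq_eq_sum_pderiv hu, gradSq, Fintype.sum_option]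

lemma deriv_sq_sub_norm_gradient_sq (hu : DifferentiableAt ℝ (Function.uncurry u) (x, t)) :
    deriv (u x) t ^ 2 - ‖gradient (fun y => u y t) x‖ ^ 2
      = gradForm waveSign (waveFrame n) (Function.uncurry u) (Function.uncurry u) (x, t) := by
  rw [deriv_eq_pderiv hu, norm_gradient_sq_eq_sum_pderiv hu, gradForm_self, Fintype.sum_option]
  simp only [waveSign, one_mul, neg_one_mul, Finset.sum_neg_distrib, sub_eq_add_neg]

lemma deriv_deriv_sub_lap (hu : ContDiff ℝ 2 (Function.uncurry u))
    (x : EuclideanSpace ℝ (Fin n)) (t : ℝ) :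
    deriv (deriv (u x)) t - lap (fun y => u y t) x
      = box waveSign (waveFrame n) (Function.uncurry u) (x, t) := by
  have hud := hu.differentiable two_ne_zero
  have htime : deriv (u x) = fun τ => ∂ₜ (Function.uncurry u) (x, τ) :=
    funext fun τ => deriv_eq_pderiv (hud (x, τ))
  have hspace (i : Fin n) : (fun y => fderiv ℝ (fun z => u z t) y (EuclideanSpace.single i 1))
      = fun y => ∂[i] (Function.uncurry u) (y, t) :=
    funext fun y => fderiv_single_eq_pderiv (hud (y, t)) i
  rw [htime, deriv_eq_pderiv (u := fun x τ => ∂ₜ (Function.uncurry u) (x, τ))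
    (differentiable_pderiv hu none (x, t)), lap, box, Fintype.sum_option]
  simp only [hspace, waveSign, one_mul, neg_one_mul, Finset.sum_neg_distrib, sub_eq_add_neg]
  congr 2
  exact Finset.sum_congr rfl fun i _ => fderiv_single_eq_pderiv
    (u := fun y τ => ∂[i] (Function.uncurry u) (y, τ)) (differentiable_pderiv hu (some i) (x, t)) i

variable {x₀ : EuclideanSpace ℝ (Fin n)} {β C₀ : ℝ}

lemma contDiff_psi (k : WithTop ℕ∞) : ContDiff ℝ k (Function.uncurry (psi x₀ β C₀)) :=
  (((contDiff_fst.sub contDiff_const).norm_sq ℝ).sub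
    (contDiff_const.mul (contDiff_snd.pow 2))).add contDiff_const

lemma hasFDerivAt_psi (p : EuclideanSpace ℝ (Fin n) × ℝ) :
    HasFDerivAt (Function.uncurry (psi x₀ β C₀))
      ((2 : ℝ) • (innerSL ℝ (p.1 - x₀)).comp (.fst ℝ _ ℝ) - (2 * β * p.2) • .snd ℝ _ ℝ) p := by
  have hspace := (hasFDerivAt_fst (𝕜 := ℝ) (p := p)).sub_const x₀ |>.norm_sq
  have htime := ((hasFDerivAt_snd (𝕜 := ℝ) (p := p)).pow 2).const_mul β
  refine ((hspace.sub htime).add_const C₀).congr_fderiv ?_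
  ext y <;> simp
  ring

lemma pderiv_psi_none :
    ∂ₜ (Function.uncurry (psi x₀ β C₀)) = fun p => -(2 * β) * p.2 := by
  funext p
  rw [pderiv, (hasFDerivAt_psi p).fderiv]
  simp [waveFrame]

lemma pderiv_psi_some (i : Fin n) :
    ∂[i] (Function.uncurry (psi x₀ β C₀)) = fun p => 2 * (p.1 i - x₀ i) := by
  funext p
  rw [pderiv, (hasFDerivAt_psi p).fderiv]
  simp [waveFrame, EuclideanSpace.inner_single_right]

lemma hessForm_psi (p : EuclideanSpace ℝ (Fin n) × ℝ) (ξ : Option (Fin n) → ℝ) :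
    hessForm waveSign (waveFrame n) (Function.uncurry (psi x₀ β C₀)) p ξ
      = -2 * β * ξ none ^ 2 + 2 * ∑ i, ξ (some i) ^ 2 := by
  have htime (a : Option (Fin n)) :
      pderiv (waveFrame n) a (fun q => -(2 * β) * q.2) p = -(2 * β) * (waveFrame n a).2 := by
    rw [pderiv_const_mul differentiableAt_snd, pderiv, fderiv_snd, ContinuousLinearMap.coe_snd']
  have hspace (a : Option (Fin n)) (i : Fin n) :
      pderiv (waveFrame n) a (fun q => 2 * (q.1 i - x₀ i)) p = 2 * (waveFrame n a).1 i := by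
    have hcoord : HasFDerivAt (fun q : EuclideanSpace ℝ (Fin n) × ℝ => q.1 i - x₀ i)
        ((EuclideanSpace.proj i).comp (.fst ℝ _ ℝ)) p :=
      ((EuclideanSpace.proj (𝕜 := ℝ) i).comp (.fst ℝ _ ℝ)).hasFDerivAt.sub_const (x₀ i)
    rw [pderiv_const_mul hcoord.differentiableAt, pderiv, hcoord.fderiv]
    rfl
  simp only [hessForm, Fintype.sum_option, pderiv_psi_none, pderiv_psi_some, htime, hspace]
  simp [waveFrame, waveSign, Finset.mul_sum, sq, mul_assoc]

lemma isPseudoconvexOn_psi (U : Set (EuclideanSpace ℝ (Fin n) × ℝ)) :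
    IsPseudoconvexOn waveSign (waveFrame n) (Function.uncurry (psi x₀ β C₀)) U (1 + β) (1 - β) := by
  intro p _ ξ
  rw [hessForm_psi, Fintype.sum_option, Fintype.sum_option]
  simp only [waveSign, one_mul, neg_one_mul, Finset.sum_neg_distrib]
  exact le_of_eq (by ring)

lemma four_mul_norm_sq_le_gradSq_psi (p : EuclideanSpace ℝ (Fin n) × ℝ) :
    4 * ‖p.1 - x₀‖ ^ 2 ≤ gradSq (waveFrame n) (Function.uncurry (psi x₀ β C₀)) p := by
  rw [gradSq, Fintype.sum_option, pderiv_psi_none, EuclideanSpace.norm_sq_eq, Finset.mul_sum]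
  simp only [pderiv_psi_some, PiLp.sub_apply, Real.norm_eq_abs, sq_abs, mul_pow]
  norm_num
  positivity

lemma P1_eq_conjOp {s l : ℝ} (hu : ContDiff ℝ 2 (Function.uncurry u))
    (x : EuclideanSpace ℝ (Fin n)) (t : ℝ) :
    P1 x₀ β C₀ s l u x t = conjOp waveSign (waveFrame n) s l (Function.uncurry (psi x₀ β C₀))
      (Function.uncurry u) (x, t) := by
  rw [P1, deriv_deriv_sub_lap hu, deriv_sq_sub_norm_gradient_sq
    ((contDiff_psi (k := 2)).differentiable two_ne_zero _)]
  rfl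

lemma setIntegral_setIntegral_eq_integral {X Y : Type*} [MeasurableSpace X] [MeasurableSpace Y]
    {ν : Measure X} {ρ : Measure Y} [SFinite ν] [SFinite ρ] {S : Set X} {I : Set Y}
    {f : X × Y → ℝ} (hf : Integrable f (ν.prod ρ)) (hfS : ∀ p ∉ S ×ˢ I, f p = 0) :
    ∫ t in I, ∫ x in S, f (x, t) ∂ν ∂ρ = ∫ p, f p ∂ν.prod ρ := by
  have hinner (t : Y) : ∫ x in S, f (x, t) ∂ν = ∫ x, f (x, t) ∂ν :=
    setIntegral_eq_integral_of_forall_compl_eq_zero fun x hx => hfS _ fun h => hx h.1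
  rw [integral_prod_symm f hf]
  simp only [hinner]
  refine setIntegral_eq_integral_of_forall_compl_eq_zero fun t ht => ?_
  simp only [fun x => hfS (x, t) fun h => ht h.2, integral_zero]

lemma exists_pos_le_gradSq_psi {Ω : Set (EuclideanSpace ℝ (Fin n))} (hx₀ : x₀ ∉ closure Ω) :
    ∃ δ > 0, ∀ p : EuclideanSpace ℝ (Fin n) × ℝ, p.1 ∈ Ω →
      δ ≤ gradSq (waveFrame n) (Function.uncurry (psi x₀ β C₀)) p := by
  obtain ⟨d, hd, hΩd⟩ : ∃ d > 0, ∀ y ∈ Ω, d ≤ dist x₀ y := by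
    simpa [Metric.mem_closure_iff] using hx₀
  refine ⟨4 * d ^ 2, by positivity, fun p hp => ?_⟩
  refine le_trans ?_ (four_mul_norm_sq_le_gradSq_psi p)
  rw [← dist_eq_norm, dist_comm]
  gcongr
  exact hΩd _ hp

lemma hasCompactSupport_and_tsupport_subset {X : Type*} [TopologicalSpace X] [T2Space X]
    {f : X → ℝ} {K : Set X} (hK : IsCompact K) (hfK : ∀ p ∉ K, f p = 0) :
    HasCompactSupport f ∧ tsupport f ⊆ K := by
  refine ⟨.intro hK hfK, closure_minimal (fun p hp => ?_) hK.isClosed⟩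
  exact not_imp_comm.1 (hfK p) hp

variable {s l : ℝ} {Ω : Set (EuclideanSpace ℝ (Fin n))} {I : Set ℝ}

lemma carleman_lhs_eq (hu : ContDiff ℝ 2 (Function.uncurry u))
    (huc : HasCompactSupport (Function.uncurry u)) (huΩ : tsupport (Function.uncurry u) ⊆ Ω ×ˢ I) :
    s * l * (∫ t in I, ∫ x in Ω, phi x₀ β C₀ l x t * Real.exp (2 * s * phi x₀ β C₀ l x t) *
          (deriv (u x) t ^ 2 + ‖gradient (fun y => u y t) x‖ ^ 2))
        + s ^ 3 * l ^ 3 * (∫ t in I, ∫ x in Ω,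
          phi x₀ β C₀ l x t ^ 3 * Real.exp (2 * s * phi x₀ β C₀ l x t) * u x t ^ 2)
        + (∫ t in I, ∫ x in Ω,
          P1 x₀ β C₀ s l (fun x' t' => Real.exp (s * phi x₀ β C₀ l x' t') * u x' t') x t ^ 2)
      = ∫ p, carlemanDensity waveSign (waveFrame n) s l (Function.uncurry (psi x₀ β C₀))
          (Function.uncurry u) p ∂volume.prod volume := by
  have hψ : ContDiff ℝ 2 (Function.uncurry (psi x₀ β C₀)) := contDiff_psi 2
  have hφ := contDiff_expWeight hψ l
  have hψ1 := hψ.of_le one_le_two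
  have hw := (contDiff_expWeight hφ s).mul hu
  have hnotMem {p : EuclideanSpace ℝ (Fin n) × ℝ} (hp : p ∉ Ω ×ˢ I) :
    p ∉ tsupport (Function.uncurry u) := fun h => hp (huΩ h)
  rw [(integral_carlemanDensity hψ hu huc).2]
  refine congrArg₂ (· + ·) (congrArg₂ (· + ·) (congrArg (s * l * ·) ?_)
    (congrArg (s ^ 3 * l ^ 3 * ·) ?_)) ?_
  · rw [← setIntegral_setIntegral_eq_integral
      (integrable_expWeight_mul_gradSq hψ1 (hu.of_le one_le_two) huc) fun p hp => by
        rw [gradSq_of_notMem_tsupport (hnotMem hp), mul_zero]]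
    simp only [deriv_sq_add_norm_gradient_sq (hu.differentiable two_ne_zero _)]
    rfl
  · rw [← setIntegral_setIntegral_eq_integral
      (integrable_expWeight_mul_sq hψ.continuous hu.continuous huc) fun p hp => by
        rw [image_eq_zero_of_notMem_tsupport (hnotMem hp), zero_pow two_ne_zero, mul_zero]]
    rfl
  · rw [← setIntegral_setIntegral_eq_integral
      (integrable_conjOp_sq hψ1 hw huc.mul_left) fun p hp => by
        rw [conjOp_of_notMem_tsupport fun h => hnotMem hp (tsupport_mul_subset_right h),
          zero_pow two_ne_zero]]
    exact integral_congr_ae (.of_forall fun t => integral_congr_ae (.of_forall fun x =>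
      congrArg (· ^ 2) (P1_eq_conjOp hw x t)))

lemma carleman_rhs_eq (hu : ContDiff ℝ 2 (Function.uncurry u))
    (huc : HasCompactSupport (Function.uncurry u)) (huΩ : tsupport (Function.uncurry u) ⊆ Ω ×ˢ I) :
    ∫ t in I, ∫ x in Ω, Real.exp (2 * s * phi x₀ β C₀ l x t) *
        (deriv (deriv (u x)) t - lap (fun y => u y t) x) ^ 2
      = ∫ p, expWeight (2 * s) (expWeight l (Function.uncurry (psi x₀ β C₀))) p
          * box waveSign (waveFrame n) (Function.uncurry u) p ^ 2 ∂volume.prod volume := by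
  rw [← setIntegral_setIntegral_eq_integral
    (integrable_expWeight_mul_box_sq (contDiff_psi 0).continuous hu huc) fun p hp => by
      rw [box_of_notMem_tsupport fun h => hp (huΩ h), zero_pow two_ne_zero, mul_zero]]
  simp only [deriv_deriv_sub_lap hu]
  rfl

end Wave

end Carleman

open Carleman in
theorem carleman_compactly_supported_general (n : ℕ)
    (Ω : Set (EuclideanSpace ℝ (Fin n))) (hΩb : Bornology.IsBounded Ω) (T : ℝ)
    (x₀ : EuclideanSpace ℝ (Fin n)) (hx₀ : x₀ ∉ closure Ω) (β : ℝ) (hβ : β < 1) (C₀ : ℝ)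
    (hψ : ∀ x ∈ Ω, ∀ t ∈ Set.Ioo (-T) T, 1 ≤ psi x₀ β C₀ x t) :
    ∃ l₀ > (0 : ℝ), ∃ s₀ > (0 : ℝ), ∃ M > (0 : ℝ), ∀ s ≥ s₀, ∀ l ≥ l₀,
      ∀ v : EuclideanSpace ℝ (Fin n) → ℝ → ℝ,
        ContDiff ℝ 2 (fun q : EuclideanSpace ℝ (Fin n) × ℝ => v q.1 q.2) →
        (∃ K : Set (EuclideanSpace ℝ (Fin n) × ℝ), IsCompact K ∧ K ⊆ Ω ×ˢ Set.Ioo (-T) T ∧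
          ∀ x t, (x, t) ∉ K → v x t = 0) →
        s * l * (∫ t in Set.Ioo (-T) T, ∫ x in Ω,
              phi x₀ β C₀ l x t * Real.exp (2 * s * phi x₀ β C₀ l x t) *
                ((deriv (v x) t) ^ 2 + ‖gradient (fun y => v y t) x‖ ^ 2))
          + s ^ 3 * l ^ 3 * (∫ t in Set.Ioo (-T) T, ∫ x in Ω,
              (phi x₀ β C₀ l x t) ^ 3 * Real.exp (2 * s * phi x₀ β C₀ l x t) * (v x t) ^ 2)
          + (∫ t in Set.Ioo (-T) T, ∫ x in Ω,
              (P1 x₀ β C₀ s l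
                (fun x' t' => Real.exp (s * phi x₀ β C₀ l x' t') * v x' t') x t) ^ 2)
        ≤ M * ∫ t in Set.Ioo (-T) T, ∫ x in Ω,
            Real.exp (2 * s * phi x₀ β C₀ l x t) *
              (deriv (deriv (v x)) t - lap (fun y => v y t) x) ^ 2 := by
  obtain ⟨δ, hδ, hδψ⟩ := exists_pos_le_gradSq_psi (β := β) (C₀ := C₀) hx₀
  obtain ⟨l₀, hl₀, s₀, hs₀, M, hM, hcarleman⟩ := exists_integral_carlemanDensity_le
    (volume.prod volume) (hΩb.prod (Metric.isBounded_Ioo (-T) T)) (contDiff_psi 4)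
    (fun p hp => hψ p.1 hp.1 p.2 hp.2) hδ (fun p hp => hδψ p hp.1) (sub_pos.2 hβ)
    (isPseudoconvexOn_psi _)
  refine ⟨l₀, hl₀, s₀, hs₀, M, hM, fun s hs l hl v hv ⟨K, hK, hKΩ, hvK⟩ => ?_⟩
  obtain ⟨hvc, hvsupp⟩ := hasCompactSupport_and_tsupport_subset hK fun p => hvK p.1 p.2
  rw [carleman_lhs_eq hv hvc (hvsupp.trans hKΩ), carleman_rhs_eq hv hvc (hvsupp.trans hKΩ)]
  exact hcarleman s hs l hl _ hv hvc (hvsupp.trans hKΩ)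

/-- **Carleman estimate of Theorem 2.1** specialized to smooth functions compactly supported in
`Ω × (-T,T)`: there exist `λ₀, s₀, M > 0` such that for all `s ≥ s₀`, `λ ≥ λ₀`,
`sλ∫∫ φe^{2sφ}(|∂ₜv|² + |∇v|²) + s³λ³∫∫ φ³e^{2sφ}v² + ∫∫ |P₁(e^{sφ}v)|² ≤ M∫∫ e^{2sφ}|□v|²`. -/
theorem carleman_compactly_supported
    (n : ℕ) (hn : 1 ≤ n)
    (Ω : Set (EuclideanSpace ℝ (Fin n))) (hΩo : IsOpen Ω) (hΩb : Bornology.IsBounded Ω)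
    (T : ℝ) (hT : 0 < T)
    (x₀ : EuclideanSpace ℝ (Fin n)) (hx₀ : x₀ ∉ closure Ω)
    (β : ℝ) (hβ : β ∈ Set.Ioo (0:ℝ) 1) (C₀ : ℝ) (hC₀ : 0 < C₀)
    (hψ : ∀ x ∈ Ω, ∀ t ∈ Set.Ioo (-T) T, 1 ≤ psi x₀ β C₀ x t) :
    ∃ l₀ > (0:ℝ), ∃ s₀ > (0:ℝ), ∃ M > (0:ℝ), ∀ s ≥ s₀, ∀ l ≥ l₀,
      ∀ v : EuclideanSpace ℝ (Fin n) → ℝ → ℝ,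
        ContDiff ℝ (⊤ : ℕ∞) (fun q : EuclideanSpace ℝ (Fin n) × ℝ => v q.1 q.2) →
        (∃ K : Set (EuclideanSpace ℝ (Fin n) × ℝ), IsCompact K ∧ K ⊆ Ω ×ˢ Set.Ioo (-T) T ∧
          ∀ x t, (x, t) ∉ K → v x t = 0) →
        s * l * (∫ t in Set.Ioo (-T) T, ∫ x in Ω,
              phi x₀ β C₀ l x t * Real.exp (2 * s * phi x₀ β C₀ l x t) *
                ((deriv (v x) t) ^ 2 + ‖gradient (fun y => v y t) x‖ ^ 2))
          + s ^ 3 * l ^ 3 * (∫ t in Set.Ioo (-T) T, ∫ x in Ω,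
              (phi x₀ β C₀ l x t) ^ 3 * Real.exp (2 * s * phi x₀ β C₀ l x t) * (v x t) ^ 2)
          + (∫ t in Set.Ioo (-T) T, ∫ x in Ω,
              (P1 x₀ β C₀ s l
                (fun x' t' => Real.exp (s * phi x₀ β C₀ l x' t') * v x' t') x t) ^ 2)
        ≤ M * ∫ t in Set.Ioo (-T) T, ∫ x in Ω,
            Real.exp (2 * s * phi x₀ β C₀ l x t) *
              (deriv (deriv (v x)) t - lap (fun y => v y t) x) ^ 2 := by
  obtain ⟨l₀, hl₀, s₀, hs₀, M, hM, hcarleman⟩ :=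
    carleman_compactly_supported_general n Ω hΩb T x₀ hx₀ β hβ.2 C₀ hψ
  exact ⟨l₀, hl₀, s₀, hs₀, M, hM, fun s hs l hl v hv =>
    hcarleman s hs l hl v (contDiff_infty.1 hv 2)⟩
end
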